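/- Let f be an irreducible homogeneous polynomial of degree d ≥ 1 in the variables x_1,…,x_m (m ≥ 3) with rational coefficients, defining the hypersurface C. Then there exists a finite set E of positive integers such that for every positive integer n, one has n ∈ D(C)^inf if and only if G(C) divides n and n ∉ E; in other words D(C)^inf = G(C)·ℤ_{≥1} \ E. -/

import Mathlib

/-!
Call `n` a degree if it belongs to `DSet f`. The core of the proof is `sub_sum_mem_DinfSet`: if
`n₁, …, nₖ` are distinct degrees with sum `μ`, then `d e - μ` lies in `DinfSet f` for all large `e`.
Granting this, the integers `z` whose residue class modulo `d` lies in `DinfSet f` up to finitely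
many exceptions form a subgroup of `ℤ` (`residueGroup`): `k = 0` gives zero, `k = 1` gives negatives,
and `k = 2` with two distinct degrees gives sums. The subgroup contains all degrees, hence all
multiples of `G`, and as there are only finitely many classes modulo `d`, only finitely many
multiples of `G` are missing from `DinfSet f`.

To obtain the degrees `d e - μ`, choose new points of degrees `n₁, …, nₖ` and a rational projection
to the line in general position (`exists_projection`), so that the `i`-th point has as image an
algebraic number of degree `nᵢ` and the fibres are transversal to the hypersurface at the points.
As the `nᵢ` are distinct, the minimal polynomials of the images are coprime; let `M` be their
product. By the Chinese remainder theorem some polynomial section `ψ` of the projection passes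
through all the points and their conjugates, and the curves `ψ(x) + M(x) (x ^ a v + s)`, with `v` and
`s` in the fibre direction, do so as well (`Datum`). On such a curve `f` restricts to a polynomial
of degree `d (a + μ)` divisible by `M`, whose quotient (`Datum.quo`) describes
`d (a + μ) - μ` moving points. For generic `s` the quotient is irreducible
(`Datum.irreducible_quo_gen`), because `f` is prime and the curves fill the whole space. Hilbert
irreducibility provides a rational `s` for which it stays irreducible, and a root of it generates a
field of degree `d (a + μ) - μ` with a new non-singular point. Moreover, on the pencil `s + t v` the
moving points are not polynomial functions of `t`, so a given number field contains roots of few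
members of the pencil, and infinitely many fields arise (`Datum.deg_mem_DinfSet`).

Both arithmetic inputs, `hilbert_irreducibility` and `sparse_root`, rest on one argument. If
`H(0, x)` is separable, the roots of `H(1 / k, x)` are approximated by polynomials in `1 / k`
(`exists_root_approx`), and so are the coefficients of its factors. Such quantities, when they lie in
a fixed number field, have denominators dividing `D k ^ c`. A combination of the values on a short
window with small conjugates then has to vanish, so that the values are exactly interpolated by a
polynomial in `1 / k` of bounded degree (`interpolation`). Hence too many roots or factors on a
window would force a root or a factor of `H(t, x)` itself. The case of several parameters follows by
induction, recovering polynomial coefficients of bounded degree from finitely many rational values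
(`exists_recovery`).
-/

open MvPolynomial

noncomputable section

/-- A fixed algebraic closure of `ℚ`. -/
abbrev Qbar : Type := AlgebraicClosure ℚ

/-- `K` admits a new non-singular point of the hypersurface `f = 0`:
a tuple of `K`-rational values, not all zero, on which `f` vanishes, some partial derivative
of `f` does not vanish, and such that after rescaling some nonzero coordinate to `1`,
the coordinates generate `K` over `ℚ`. -/
def IsNewPoint {m : ℕ} (f : MvPolynomial (Fin m) ℚ) (K : IntermediateField ℚ Qbar) : Prop :=
  ∃ a : Fin m → Qbar, (∀ j, a j ∈ K) ∧ a ≠ 0 ∧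
    MvPolynomial.aeval a f = 0 ∧
    (∃ j, MvPolynomial.aeval a (MvPolynomial.pderiv j f) ≠ 0) ∧
    (∃ i, a i ≠ 0 ∧ IntermediateField.adjoin ℚ (Set.range fun j => a j / a i) = K)

/-- `D(C)`: degrees of number fields admitting a new non-singular point of `C : f = 0`. -/
def DSet {m : ℕ} (f : MvPolynomial (Fin m) ℚ) : Set ℕ :=
  {n | 0 < n ∧ ∃ K : IntermediateField ℚ Qbar,
    FiniteDimensional ℚ ↥K ∧ Module.finrank ℚ ↥K = n ∧ IsNewPoint f K}

/-- `D(C)^inf`: degrees `n` such that infinitely many number fields of degree `n`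
admit a new non-singular point of `C : f = 0`. -/
def DinfSet {m : ℕ} (f : MvPolynomial (Fin m) ℚ) : Set ℕ :=
  {n | 0 < n ∧ {K : IntermediateField ℚ Qbar |
    FiniteDimensional ℚ ↥K ∧ Module.finrank ℚ ↥K = n ∧ IsNewPoint f K}.Infinite}

/-- `g` is the greatest common divisor of the set `S` of naturals. -/
def IsGcdOf (g : ℕ) (S : Set ℕ) : Prop :=
  (∀ n ∈ S, g ∣ n) ∧ ∀ k : ℕ, (∀ n ∈ S, k ∣ n) → k ∣ g

/-! ### Sparse sets and interpolation on windows -/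

/-- There is a bound `B` such that, for every length `W`, each window `[k, k + W]` with `k` large
in terms of `W` contains at most `B` elements of `S`. -/
def Sparse (S : Set ℕ) : Prop :=
  ∃ B : ℕ, ∀ W : ℕ, ∃ k0 : ℕ, ∀ J : Finset ℕ, (∀ j ∈ J, j ∈ S) →
    ∀ k ≥ k0, (∀ j ∈ J, k ≤ j ∧ j ≤ k + W) → J.card ≤ B

lemma Sparse.mono {S T : Set ℕ} (hT : Sparse T) (h : S ⊆ T) : Sparse S := by
  obtain ⟨B, hB⟩ := hT
  refine ⟨B, fun W => ?_⟩
  obtain ⟨k0, hk⟩ := hB W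
  exact ⟨k0, fun J hJ k hk0 hw => hk J (fun j hj => h (hJ j hj)) k hk0 hw⟩

lemma Sparse.union {S T : Set ℕ} (hS : Sparse S) (hT : Sparse T) : Sparse (S ∪ T) := by
  classical
  obtain ⟨B, hB⟩ := hS
  obtain ⟨B', hB'⟩ := hT
  refine ⟨B + B', fun W => ?_⟩
  obtain ⟨k0, hk⟩ := hB W
  obtain ⟨k0', hk'⟩ := hB' W
  refine ⟨max k0 k0', fun J hJ k hk0 hw => ?_⟩
  have h1 := hk (J.filter (· ∈ S)) (by simp) k (le_trans (le_max_left _ _) hk0)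
    (fun j hj => hw j (Finset.mem_filter.1 hj).1)
  have h2 := hk' (J.filter (· ∉ S)) (by
      intro j hj
      rw [Finset.mem_filter] at hj
      exact (hJ j hj.1).resolve_left hj.2) k (le_trans (le_max_right _ _) hk0)
    (fun j hj => hw j (Finset.mem_filter.1 hj).1)
  have := Finset.card_filter_add_card_filter_not (s := J) (· ∈ S)
  omega

lemma sparse_lt (k1 : ℕ) : Sparse {k | k < k1} := by
  refine ⟨0, fun W => ⟨k1, fun J hJ k hk0 hw => ?_⟩⟩
  rw [Nat.le_zero, Finset.card_eq_zero, Finset.eq_empty_iff_forall_notMem]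
  intro j hj
  have := hJ j hj
  have := hw j hj
  simp only [Set.mem_ofPred_eq] at *
  omega

lemma sparse_empty : Sparse ∅ := (sparse_lt 0).mono (by simp)

lemma Sparse.iUnion {ι : Type*} [Finite ι] {S : ι → Set ℕ} (h : ∀ i, Sparse (S i)) :
    Sparse (⋃ i, S i) := by
  classical
  have := Fintype.ofFinite ι
  have key : ∀ s : Finset ι, Sparse (⋃ i ∈ s, S i) := by
    intro s
    induction s using Finset.induction_on with
    | empty => simpa using sparse_empty
    | insert a s ha ih =>
      rw [Finset.set_biUnion_insert]
      exact (h a).union ih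
  simpa using key Finset.univ

lemma Sparse.exists_notMem {S : Set ℕ} (h : Sparse S) (k1 : ℕ) : ∃ k ≥ k1, k ∉ S := by
  obtain ⟨B, hB⟩ := h
  obtain ⟨k0, hk⟩ := hB B
  by_contra! hc
  have := hk (Finset.Icc (max k0 k1) (max k0 k1 + B))
    (fun j hj => hc j (le_trans (le_max_right _ _) (Finset.mem_Icc.1 hj).1))
    (max k0 k1) (le_max_left _ _) (fun j hj => Finset.mem_Icc.1 hj)
  simp at this
  omega

/-- Lagrange interpolation: the value at a point of a window of a polynomial of degree at most `c` is
determined by its values at `c + 1` points of the same window, through a relation whose integer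
coefficients are bounded in terms of `c` and the window length only. -/
lemma exists_interp_relation (c W k : ℕ) (J0 : Finset ℕ) (hc : J0.card = c + 1)
    (hJ : ∀ j ∈ J0, k ≤ j ∧ j ≤ k + W) (k' : ℕ) (hk' : k ≤ k' ∧ k' ≤ k + W) :
    ∃ (q : ℤ) (a : ℕ → ℤ), q ≠ 0 ∧ |q| ≤ (W + 1 : ℤ) ^ ((c + 1) * (c + 1)) ∧
      (∀ i ∈ J0, |a i| ≤ (W + 1 : ℤ) ^ ((c + 1) * (c + 1))) ∧
      ∀ (F : Type) [Field F] [CharZero F] (R : Polynomial F), R.natDegree ≤ c →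
        (q : F) * R.eval (k' : F) = ∑ i ∈ J0, (a i : F) * R.eval (i : F) := by
  classical
  set w : ℕ → ℤ := fun i => ∏ j ∈ J0.erase i, ((i : ℤ) - j) with hw
  have hw0 : ∀ i, w i ≠ 0 := fun i => by
    rw [hw, Finset.prod_ne_zero_iff]
    intro j hj h
    have := Finset.ne_of_mem_erase hj
    omega
  have hbd : ∀ i : ℕ, k ≤ i ∧ i ≤ k + W → ∀ i' ∈ J0,
      |∏ j ∈ J0.erase i', ((i : ℤ) - j)| ≤ (W + 1 : ℤ) ^ c := by
    intro i hi i' hi'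
    rw [Finset.abs_prod]
    have : (J0.erase i').card = c := by rw [Finset.card_erase_of_mem hi', hc]; rfl
    rw [← this, ← Finset.prod_const]
    refine Finset.prod_le_prod (fun _ _ => abs_nonneg _) fun j hj => ?_
    · have := hJ j (Finset.mem_of_mem_erase hj)
      rw [abs_le]; constructor <;> omega
  refine ⟨∏ i ∈ J0, w i, fun i => (∏ i' ∈ J0.erase i, w i') * ∏ j ∈ J0.erase i, ((k' : ℤ) - j),
    ?_, ?_, ?_, ?_⟩
  · rw [Finset.prod_ne_zero_iff]; exact fun i _ => hw0 i
  · rw [Finset.abs_prod]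
    calc ∏ i ∈ J0, |w i| ≤ ∏ i ∈ J0, (W + 1 : ℤ) ^ c :=
          Finset.prod_le_prod (fun _ _ => abs_nonneg _) (fun i hi => hbd i (hJ i hi) i hi)
      _ = (W + 1 : ℤ) ^ (c * (c + 1)) := by rw [Finset.prod_const, hc, pow_mul]
      _ ≤ _ := pow_le_pow_right₀ (by omega) (by nlinarith)
  · intro i hi
    rw [abs_mul, Finset.abs_prod]
    have hce : (J0.erase i).card = c := by rw [Finset.card_erase_of_mem hi, hc]; rfl
    calc (∏ i' ∈ J0.erase i, |w i'|) * |∏ j ∈ J0.erase i, ((k' : ℤ) - j)|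
        ≤ (∏ i' ∈ J0.erase i, (W + 1 : ℤ) ^ c) * (W + 1 : ℤ) ^ c := by
          refine mul_le_mul ?_ (hbd k' hk' i hi) (abs_nonneg _) (by positivity)
          exact Finset.prod_le_prod (fun _ _ => abs_nonneg _) (fun i' hi' =>
            hbd i' (hJ i' (Finset.mem_of_mem_erase hi')) i' (Finset.mem_of_mem_erase hi'))
      _ = (W + 1 : ℤ) ^ (c * c + c) := by rw [Finset.prod_const, hce, ← pow_mul, ← pow_add]
      _ ≤ _ := pow_le_pow_right₀ (by omega) (by nlinarith)
  · intro F _ _ R hR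
    have hinj : Set.InjOn (fun i : ℕ => (i : F)) J0 := fun x _ y _ h => by simpa using h
    have hlt : R.degree < J0.card := by
      rw [hc]
      exact lt_of_le_of_lt Polynomial.degree_le_natDegree (by exact_mod_cast Nat.lt_succ_of_le hR)
    have h1 := Lagrange.eq_interpolate hinj hlt
    have h2 := congrArg (Polynomial.eval (k' : F)) h1
    rw [Lagrange.interpolate_apply, Polynomial.eval_finsetSum] at h2
    rw [h2, Finset.mul_sum]
    refine Finset.sum_congr rfl fun i hi => ?_
    rw [← Finset.mul_prod_erase J0 w hi, Lagrange.basis, Polynomial.eval_mul, Polynomial.eval_C,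
      Polynomial.eval_prod]
    have e1 : ∏ j ∈ J0.erase i, Polynomial.eval (k' : F) (Lagrange.basisDivisor (i : F) (j : F))
        = (∏ j ∈ J0.erase i, ((k' : F) - j)) / (w i : F) := by
      rw [hw]
      push_cast
      rw [← Finset.prod_div_distrib]
      refine Finset.prod_congr rfl fun j hj => ?_
      simp only [Lagrange.basisDivisor, Polynomial.eval_mul, Polynomial.eval_C,
        Polynomial.eval_sub, Polynomial.eval_X]
      rw [div_eq_inv_mul]
    rw [e1]
    have : (w i : F) ≠ 0 := by exact_mod_cast hw0 i
    push_cast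
    field_simp

/-- Reversing the truncation of `T` approximates `k ^ c * T (1 / k)` up to `O(1 / k)`. -/
lemma exists_reverse_approx (c : ℕ) (T : Polynomial ℂ) :
    ∃ R : Polynomial ℂ, R.natDegree ≤ c ∧ ∃ A : ℝ, 0 ≤ A ∧ ∀ k : ℕ, 1 ≤ k →
      ‖(k : ℂ) ^ c * T.eval (1 / (k : ℂ)) - R.eval (k : ℂ)‖ ≤ A / k := by
  induction T using Polynomial.induction_on' with
  | add p q hp hq =>
    obtain ⟨R, hR, A, hA, h⟩ := hp
    obtain ⟨R', hR', A', hA', h'⟩ := hq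
    refine ⟨R + R', (Polynomial.natDegree_add_le _ _).trans (max_le hR hR'), A + A', by positivity,
      fun k hk => ?_⟩
    have e : (k : ℂ) ^ c * (p + q).eval (1 / (k : ℂ)) - (R + R').eval (k : ℂ) =
        ((k : ℂ) ^ c * p.eval (1 / (k : ℂ)) - R.eval (k : ℂ)) +
        ((k : ℂ) ^ c * q.eval (1 / (k : ℂ)) - R'.eval (k : ℂ)) := by
      simp only [Polynomial.eval_add]; ring
    rw [e, add_div]
    exact (norm_add_le _ _).trans (add_le_add (h k hk) (h' k hk))
  | monomial i a =>
    by_cases hi : i ≤ c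
    · refine ⟨Polynomial.monomial (c - i) a, (Polynomial.natDegree_monomial_le _).trans (by omega),
        0, le_rfl, fun k hk => ?_⟩
      have hk0 : (k : ℂ) ≠ 0 := by exact_mod_cast (by omega : k ≠ 0)
      have : (k : ℂ) ^ c = (k : ℂ) ^ (c - i) * (k : ℂ) ^ i := by rw [← pow_add]; congr 1; omega
      rw [Polynomial.eval_monomial, Polynomial.eval_monomial, this]
      have : (k : ℂ) ^ (c - i) * (k : ℂ) ^ i * (a * (1 / (k : ℂ)) ^ i) - a * (k : ℂ) ^ (c - i)
          = 0 := by
        rw [one_div, inv_pow]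
        have := pow_ne_zero i hk0
        field_simp
        ring
      rw [this]; simp
    · refine ⟨0, by simp, ‖a‖, norm_nonneg _, fun k hk => ?_⟩
      have hk0 : (k : ℂ) ≠ 0 := by exact_mod_cast (by omega : k ≠ 0)
      have hk1 : (1 : ℝ) ≤ k := by exact_mod_cast hk
      obtain ⟨s, rfl⟩ : ∃ s, i = c + 1 + s := ⟨i - (c + 1), by omega⟩
      have : (k : ℂ) ^ c * (Polynomial.monomial (c + 1 + s) a).eval (1 / (k : ℂ)) -
          (0 : Polynomial ℂ).eval (k : ℂ) = a / (k * (k : ℂ) ^ s) := by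
        rw [Polynomial.eval_monomial]; simp; field_simp; ring
      rw [this, norm_div, norm_mul, norm_pow]
      simp only [Complex.norm_natCast]
      gcongr
      have : (1 : ℝ) ≤ (k : ℝ) ^ s := one_le_pow₀ hk1
      nlinarith

/-- Otherwise the norm of `x` would be a nonzero integer of absolute value less than one. -/
lemma eq_zero_of_isIntegral_of_small {K : Type} [Field K] [NumberField K] (x : K)
    (hx : IsIntegral ℤ x) (h : ∀ σ : K →+* ℂ, ‖σ x‖ < 1) : x = 0 := by
  by_contra hne
  have hn : IsIntegral ℤ (Algebra.norm ℚ x) := Algebra.isIntegral_norm ℚ hx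
  obtain ⟨z, hz⟩ := IsIntegrallyClosed.isIntegral_iff.1 hn
  have h0 : Algebra.norm ℚ x ≠ 0 := Algebra.norm_ne_zero_iff.2 hne
  have hz0 : z ≠ 0 := by rintro rfl; simp at hz; exact h0 hz.symm
  have h1 := Algebra.norm_eq_prod_embeddings ℚ ℂ x
  have h2 : ‖(algebraMap ℚ ℂ) (Algebra.norm ℚ x)‖ < 1 := by
    rw [h1, norm_prod]
    have : (Finset.univ : Finset (K →ₐ[ℚ] ℂ)).Nonempty :=
      Finset.univ_nonempty_iff.2 ⟨IsAlgClosed.lift⟩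
    calc ∏ σ : K →ₐ[ℚ] ℂ, ‖σ x‖ < ∏ σ : K →ₐ[ℚ] ℂ, 1 :=
          Finset.prod_lt_prod_of_nonempty
            (fun σ _ => norm_pos_iff.2 (by simpa using hne)) (fun σ _ => h σ.toRingHom) this
      _ = 1 := by simp
  rw [← hz] at h2
  simp at h2
  have : |z| < 1 := by exact_mod_cast h2
  exact hz0 (Int.abs_lt_one_iff.1 this)

lemma natDegree_le_of_degree_lt {F : Type*} [Semiring F] {p : Polynomial F} {c : ℕ}
    (h : p.degree < ((c + 1 : ℕ) : WithBot ℕ)) : p.natDegree ≤ c := by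
  rw [Polynomial.natDegree_le_iff_coeff_eq_zero]
  intro i hi
  exact Polynomial.coeff_eq_zero_of_degree_lt (h.trans_le (by exact_mod_cast hi))

/-- Let `y k ∈ K` have denominator dividing `D k ^ c`, and let each conjugate of `y k` agree with a
polynomial in `1 / k` up to `O(1 / k ^ (c + 1))`. Then on every far-away window `y k` is the value at
`1 / k` of one polynomial of degree at most `c`. Indeed the Lagrange relations between the values
`D k ^ c y k` at points of a window hold up to an algebraic integer with small conjugates, which has
to vanish. -/
lemma interpolation {K : Type} [Field K] [NumberField K] (D c : ℕ) (hD : 0 < D)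
    (T : (K →+* ℂ) → Polynomial ℂ) (y : ℕ → K) (S : Set ℕ) (hS : ∀ k ∈ S, 1 ≤ k)
    (hinteg : ∀ k ∈ S, IsIntegral ℤ ((D : K) * (k : K) ^ c * y k))
    (happ : ∀ σ : K →+* ℂ, ∃ A : ℝ, ∀ k ∈ S,
      ‖σ (y k) - (T σ).eval (1 / (k : ℂ))‖ ≤ A / (k : ℝ) ^ (c + 1)) (W : ℕ) :
    ∃ k0 : ℕ, ∀ J : Finset ℕ, (∀ j ∈ J, j ∈ S) → ∀ k ≥ k0, (∀ j ∈ J, k ≤ j ∧ j ≤ k + W) →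
      ∃ p : Polynomial K, p.natDegree ≤ c ∧ ∀ j ∈ J, p.eval (1 / (j : K)) = y j := by
  classical
  -- `z k = k ^ c * y k` is, at each place, a polynomial in `k` up to `O(1 / k)`
  set z : ℕ → K := fun k => (k : K) ^ c * y k with hz
  have hz1 : ∀ σ : K →+* ℂ, ∃ R : Polynomial ℂ, R.natDegree ≤ c ∧ ∃ A : ℝ, 0 ≤ A ∧ ∀ k ∈ S,
      ‖σ (z k) - R.eval (k : ℂ)‖ ≤ A / k := by
    intro σ
    obtain ⟨A, hA⟩ := happ σ
    obtain ⟨R, hR, A', hA', h'⟩ := exists_reverse_approx c (T σ)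
    refine ⟨R, hR, |A| + A', by positivity, fun k hk => ?_⟩
    have hk1 := hS k hk
    have hk0 : (0 : ℝ) < k := by exact_mod_cast hk1
    have e : σ (z k) - R.eval (k : ℂ) = (k : ℂ) ^ c * (σ (y k) - (T σ).eval (1 / (k : ℂ))) +
        ((k : ℂ) ^ c * (T σ).eval (1 / (k : ℂ)) - R.eval (k : ℂ)) := by
      simp only [hz, map_mul, map_pow, map_natCast]; ring
    rw [e, add_div]
    refine (norm_add_le _ _).trans (add_le_add ?_ (h' k hk1))
    rw [norm_mul, norm_pow, Complex.norm_natCast]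
    calc (k : ℝ) ^ c * _ ≤ (k : ℝ) ^ c * (A / (k : ℝ) ^ (c + 1)) := by
          gcongr; exact hA k hk
      _ = A / k := by field_simp; ring
      _ ≤ |A| / k := by gcongr; exact le_abs_self A
  choose R hR A hA hRA using hz1
  set M : ℝ := ((W : ℝ) + 1) ^ ((c + 1) * (c + 1)) with hM
  have hM0 : 0 ≤ M := by positivity
  obtain ⟨k0, hk0⟩ := exists_nat_gt (∑ σ : K →+* ℂ, D * (M * A σ + (c + 1) * (M * A σ)) + 1)
  refine ⟨k0, fun J hJ k hk hw => ?_⟩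
  have hsum0 : 0 ≤ ∑ σ : K →+* ℂ, D * (M * A σ + (c + 1) * (M * A σ)) :=
    Finset.sum_nonneg fun σ _ => by have := hA σ; positivity
  have hkR : ∑ σ : K →+* ℂ, D * (M * A σ + (c + 1) * (M * A σ)) + 1 < k :=
    hk0.trans_le (by exact_mod_cast hk)
  have hkpos : (0 : ℝ) < k := by linarith
  -- a polynomial in `k` can be reversed into one in `1 / k`
  suffices h : ∃ p : Polynomial K, p.natDegree ≤ c ∧ ∀ j ∈ J, p.eval (j : K) = z j by
    obtain ⟨p, hp, hpj⟩ := h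
    refine ⟨Polynomial.reflect c p, (Polynomial.natDegree_reflect_le).trans (by simp [hp]),
      fun j hj => ?_⟩
    have hj0 : (j : K) ≠ 0 := by
      have := hS j (hJ j hj)
      exact_mod_cast (by omega : j ≠ 0)
    have := invertibleOfNonzero hj0
    have h1 := Polynomial.eval₂_reflect_mul_pow (RingHom.id K) (j : K) c p hp
    rw [invOf_eq_inv, ← one_div] at h1
    have h2 : Polynomial.eval (1 / (j : K)) (Polynomial.reflect c p) * (j : K) ^ c =
      Polynomial.eval (j : K) p := h1
    rw [hpj j hj] at h2
    have : (j : K) ^ c ≠ 0 := pow_ne_zero _ hj0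
    apply mul_right_cancel₀ this
    rw [h2, hz, mul_comm]
  have hinj : ∀ J0 : Finset ℕ, Set.InjOn (fun i : ℕ => (i : K)) J0 :=
    fun J0 x _ y _ h => by simpa using h
  rcases le_or_gt J.card (c + 1) with hle | hgt
  · refine ⟨Lagrange.interpolate J (fun i : ℕ => (i : K)) z, ?_, fun j hj =>
      Lagrange.eval_interpolate_at_node z (hinj J) hj⟩
    have := Lagrange.degree_interpolate_lt z (hinj J)
    exact natDegree_le_of_degree_lt (this.trans_le (by exact_mod_cast hle))
  obtain ⟨J0, hJ0, hJ0c⟩ := Finset.exists_subset_card_eq hgt.le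
  set p := Lagrange.interpolate J0 (fun i : ℕ => (i : K)) z with hp
  have hpd : p.natDegree ≤ c := by
    have := Lagrange.degree_interpolate_lt z (hinj J0)
    exact natDegree_le_of_degree_lt (this.trans_le (by rw [hJ0c]))
  refine ⟨p, hpd, fun k' hk' => ?_⟩
  obtain ⟨q, a, hq0, hq, ha, hrel⟩ := exists_interp_relation c W k J0 hJ0c
    (fun j hj => hw j (hJ0 hj)) k' (hw k' hk')
  have hrp := hrel K p hpd
  have hpi : ∀ i ∈ J0, p.eval (i : K) = z i := fun i hi =>
    Lagrange.eval_interpolate_at_node z (hinj J0) hi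
  rw [Finset.sum_congr rfl (fun i hi => by rw [hpi i hi])] at hrp
  have hθ : (D : K) * ((q : K) * z k' - ∑ i ∈ J0, (a i : K) * z i) = 0 := by
    apply eq_zero_of_isIntegral_of_small
    · have hzi : ∀ j ∈ J, IsIntegral ℤ ((D : K) * z j) := fun j hj => by
        have := hinteg j (hJ j hj)
        rwa [mul_assoc] at this
      have e : (D : K) * ((q : K) * z k' - ∑ i ∈ J0, (a i : K) * z i) =
          (q : K) * (D * z k') - ∑ i ∈ J0, (a i : K) * (D * z i) := by
        rw [mul_sub, Finset.mul_sum]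
        congr 1
        · ring
        · exact Finset.sum_congr rfl fun i _ => by ring
      rw [e]
      have hin : ∀ n : ℤ, IsIntegral ℤ (n : K) := fun n => by
        simpa using (isIntegral_algebraMap (R := ℤ) (A := K) (x := n))
      refine IsIntegral.sub ((hin q).mul (hzi k' hk')) (IsIntegral.sum _ fun i hi =>
        (hin _).mul (hzi i (hJ0 hi)))
    · intro σ
      have e : σ ((D : K) * ((q : K) * z k' - ∑ i ∈ J0, (a i : K) * z i)) =
          (D : ℂ) * ((q : ℂ) * (σ (z k') - (R σ).eval (k' : ℂ)) -
            ∑ i ∈ J0, (a i : ℂ) * (σ (z i) - (R σ).eval (i : ℂ))) := by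
        have h1 := hrel ℂ (R σ) (hR σ)
        simp only [mul_sub, Finset.sum_sub_distrib, map_mul, map_sub, map_sum, map_natCast,
          map_intCast]
        rw [h1]; ring
      have hb : ∀ j ∈ J, ‖σ (z j) - (R σ).eval (j : ℂ)‖ ≤ A σ / k := fun j hj => by
        refine (hRA σ j (hJ j hj)).trans ?_
        have := hA σ
        have : (k : ℝ) ≤ j := by exact_mod_cast (hw j hj).1
        gcongr
      have hqM : ‖(q : ℂ)‖ ≤ M := by
        rw [Complex.norm_intCast, hM]; exact_mod_cast hq
      have haM : ∀ i ∈ J0, ‖(a i : ℂ)‖ ≤ M := fun i hi => by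
        rw [Complex.norm_intCast, hM]; exact_mod_cast ha i hi
      have hA0 := hA σ
      have hs : ‖∑ i ∈ J0, (a i : ℂ) * (σ (z i) - (R σ).eval (i : ℂ))‖ ≤
          (c + 1) * (M * (A σ / k)) := by
        refine (norm_sum_le _ _).trans ?_
        calc _ ≤ ∑ i ∈ J0, M * (A σ / k) := Finset.sum_le_sum fun i hi => by
              rw [norm_mul]
              exact mul_le_mul (haM i hi) (hb i (hJ0 hi)) (norm_nonneg _) hM0
          _ = _ := by rw [Finset.sum_const, hJ0c, nsmul_eq_mul]; push_cast; ring
      rw [e, norm_mul, Complex.norm_natCast]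
      calc (D : ℝ) * _ ≤ D * (M * (A σ / k) + (c + 1) * (M * (A σ / k))) := by
            gcongr
            refine (norm_sub_le _ _).trans (add_le_add ?_ hs)
            rw [norm_mul]
            exact mul_le_mul hqM (hb k' hk') (norm_nonneg _) hM0
        _ = (D * (M * A σ + (c + 1) * (M * A σ))) / k := by field_simp
        _ < 1 := by
            rw [div_lt_one hkpos]
            have := Finset.single_le_sum (f := fun σ : K →+* ℂ =>
              D * (M * A σ + (c + 1) * (M * A σ)))
              (fun σ _ => by have := hA σ; positivity) (Finset.mem_univ σ)
            linarith
  have hD0 : (D : K) ≠ 0 := by exact_mod_cast hD.ne'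
  have h3 := (mul_eq_zero.1 hθ).resolve_left hD0
  rw [sub_eq_zero, ← hrp] at h3
  exact (mul_left_cancel₀ (by exact_mod_cast hq0) h3).symm

/-! ### Expansions of the roots of `H(t, x)` near `t = 0` -/

lemma eval_eval_eq {R : Type*} [CommRing R] (H : Polynomial (Polynomial R)) (T : Polynomial R)
    (t : R) :
    (H.eval T).eval t = (H.map (Polynomial.evalRingHom t)).eval (T.eval t) := by
  rw [Polynomial.eval_map, ← Polynomial.coe_evalRingHom, Polynomial.eval, Polynomial.hom_eval₂]
  simp

/-- Newton iteration: a simple root of `H(0, x)` lifts to a root of `H` modulo `t ^ (c + 1)`. -/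
lemma exists_newton (H : Polynomial (Polynomial ℂ)) (a : ℂ)
    (h0 : (H.map (Polynomial.evalRingHom 0)).eval a = 0)
    (h1 : (H.map (Polynomial.evalRingHom 0)).derivative.eval a ≠ 0) (c : ℕ) :
    ∃ T : Polynomial ℂ, T.eval 0 = a ∧ Polynomial.X ^ (c + 1) ∣ H.eval T := by
  induction c with
  | zero =>
    refine ⟨Polynomial.C a, by simp, ?_⟩
    rw [zero_add, pow_one, Polynomial.X_dvd_iff, Polynomial.coeff_zero_eq_eval_zero,
      eval_eval_eq]
    simpa using h0
  | succ c ih =>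
    obtain ⟨T, hT, Q, hQ⟩ := ih
    have hd : (H.derivative.eval T).eval 0 ≠ 0 := by
      rw [eval_eval_eq, hT, ← Polynomial.derivative_map]; exact h1
    set β := -(Q.eval 0) / (H.derivative.eval T).eval 0 with hβ
    refine ⟨T + Polynomial.C β * Polynomial.X ^ (c + 1), by simp [hT], ?_⟩
    obtain ⟨k, hk⟩ := Polynomial.binomExpansion H T (Polynomial.C β * Polynomial.X ^ (c + 1))
    have h2 : Polynomial.X ∣ Q + H.derivative.eval T * Polynomial.C β := by
      rw [Polynomial.X_dvd_iff, Polynomial.coeff_zero_eq_eval_zero]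
      simp only [Polynomial.eval_add, Polynomial.eval_mul, Polynomial.eval_C, hβ]
      field_simp
      ring
    obtain ⟨Q', hQ'⟩ := h2
    refine ⟨Q' + k * Polynomial.C β ^ 2 * Polynomial.X ^ c, ?_⟩
    rw [hk, hQ]
    calc _ = Polynomial.X ^ (c + 1) * (Q + H.derivative.eval T * Polynomial.C β) +
          k * Polynomial.C β ^ 2 * Polynomial.X ^ (2 * c + 2) := by ring
      _ = _ := by rw [hQ']; ring

lemma exists_root_near (p : Polynomial ℂ) (hp : p.Monic) (x : ℂ) (δ : ℝ) (hδ : 0 < δ)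
    (h : ‖p.eval x‖ < δ ^ p.natDegree) : ∃ r, p.eval r = 0 ∧ ‖x - r‖ < δ := by
  by_contra! hc
  have hs := IsAlgClosed.splits p
  have key : ∀ s : Multiset ℂ, (∀ r ∈ s, δ ≤ ‖x - r‖) →
      δ ^ s.card ≤ ‖(s.map (fun r => x - r)).prod‖ := by
    intro s
    induction s using Multiset.induction_on with
    | empty => simp
    | cons a s ih =>
      intro hs
      rw [Multiset.map_cons, Multiset.prod_cons, norm_mul, Multiset.card_cons, pow_succ']
      exact mul_le_mul (hs a (by simp)) (ih fun r hr => hs r (by simp [hr])) (by positivity)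
        (norm_nonneg _)
  have h1 := key p.roots (fun r hr => hc r (Polynomial.isRoot_of_mem_roots hr))
  have h2 : p.eval x = (p.roots.map (fun r => x - r)).prod := by
    rw [hs.eval_eq_prod_roots_of_monic hp]
  rw [← hs.natDegree_eq_card_roots, ← h2] at h1
  linarith

lemma eq_prod_of_injective_roots {F : Type*} [Field F] {ι : Type*} [Fintype ι] (p : Polynomial F)
    (hp : p.Monic)
    (hn : p.natDegree = Fintype.card ι) (ξ : ι → F) (hinj : Function.Injective ξ)
    (hr : ∀ i, p.eval (ξ i) = 0) : p = ∏ i, (Polynomial.X - Polynomial.C (ξ i)) := by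
  classical
  refine Polynomial.eq_of_monic_of_dvd_of_natDegree_le ?_ hp ?_ ?_
  · exact Polynomial.monic_prod_of_monic _ _ fun i _ => Polynomial.monic_X_sub_C _
  · refine Finset.prod_dvd_of_coprime ?_ fun i _ => Polynomial.dvd_iff_isRoot.2 (hr i)
    intro i _ j _ hij
    exact Polynomial.isCoprime_X_sub_C_of_isUnit_sub (sub_ne_zero.2 (hinj.ne hij)).isUnit
  · rw [Polynomial.natDegree_prod_of_monic _ _ fun i _ => Polynomial.monic_X_sub_C _]
    simp [hn]

open Filter Topology in
/-- The roots of `H(t, x)` near `t = 0` are approximated to any order by polynomials in `t`. -/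
lemma exists_root_approx (H : Polynomial (Polynomial ℂ)) (hH : H.Monic)
    (hsep : (H.map (Polynomial.evalRingHom 0)).Separable) (c : ℕ) :
    ∃ (T : Fin H.natDegree → Polynomial ℂ) (A : ℝ), ∀ᶠ t in 𝓝 (0 : ℂ),
      ∃ ξ : Fin H.natDegree → ℂ,
        H.map (Polynomial.evalRingHom t) = ∏ i, (Polynomial.X - Polynomial.C (ξ i)) ∧
        ∀ i, ‖ξ i - (T i).eval t‖ ≤ A * ‖t‖ ^ (c + 1) := by
  classical
  set n := H.natDegree with hn
  set H0 := H.map (Polynomial.evalRingHom 0) with hH0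
  have hdeg : ∀ t, (H.map (Polynomial.evalRingHom t)).natDegree = n := fun t =>
    hH.natDegree_map _
  have hmon : ∀ t, (H.map (Polynomial.evalRingHom t)).Monic := fun t => hH.map _
  have hcard : H0.roots.toFinset.card = n := by
    rw [Multiset.toFinset_card_of_nodup (Polynomial.nodup_roots hsep),
      ← (IsAlgClosed.splits H0).natDegree_eq_card_roots]
    exact hdeg 0
  let e := (H0.roots.toFinset.equivFinOfCardEq hcard).symm
  let a : Fin n → ℂ := fun i => (e i : ℂ)
  have ha : Function.Injective a := Subtype.val_injective.comp e.injective
  have ha0 : ∀ i, H0.eval (a i) = 0 := fun i =>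
    Polynomial.isRoot_of_mem_roots (Multiset.mem_toFinset.1 (e i).2)
  have ha1 : ∀ i, H0.derivative.eval (a i) ≠ 0 := fun i =>
    hsep.eval₂_derivative_ne_zero (RingHom.id ℂ) (ha0 i)
  choose T hT0 Q hQ using fun i => exists_newton H (a i) (ha0 i) (ha1 i) c
  obtain ⟨Δ, hΔ, hsepa⟩ : ∃ Δ : ℝ, 0 < Δ ∧ ∀ i j, i ≠ j → Δ ≤ ‖a i - a j‖ := by
    have : ∀ i j : Fin n, ∃ Δ : ℝ, 0 < Δ ∧ (i ≠ j → Δ ≤ ‖a i - a j‖) := fun i j => by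
      by_cases h : i = j
      · exact ⟨1, one_pos, fun h' => absurd h h'⟩
      · exact ⟨‖a i - a j‖, norm_pos_iff.2 (sub_ne_zero.2 (ha.ne h)), fun _ => le_rfl⟩
    choose Δ h1 h2 using this
    have hne : (insert 1 (Finset.univ.image fun ij : Fin n × Fin n => Δ ij.1 ij.2)).Nonempty :=
      ⟨1, by simp⟩
    refine ⟨Finset.min' _ hne, ?_, fun i j hij => (Finset.min'_le _ _ ?_).trans (h2 i j hij)⟩
    · rw [Finset.lt_min'_iff]
      intro y hy
      rw [Finset.mem_insert, Finset.mem_image] at hy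
      rcases hy with rfl | ⟨ij, -, rfl⟩
      · exact one_pos
      · exact h1 _ _
    · rw [Finset.mem_insert, Finset.mem_image]
      exact Or.inr ⟨(i, j), Finset.mem_univ _, rfl⟩
  obtain ⟨A0, hA0, hQb⟩ : ∃ A0 : ℝ, 0 ≤ A0 ∧ ∀ᶠ t in 𝓝 (0 : ℂ), ∀ i, ‖(Q i).eval t‖ ≤ A0 := by
    refine ⟨∑ i, (‖(Q i).eval 0‖ + 1), Finset.sum_nonneg fun i _ => by positivity, ?_⟩
    rw [eventually_all]
    intro i
    have hc : Tendsto (fun t => ‖(Q i).eval t‖) (𝓝 0) (𝓝 ‖(Q i).eval 0‖) :=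
      ((Q i).continuous.norm.tendsto 0)
    filter_upwards [hc.eventually (gt_mem_nhds (lt_add_one _))] with t ht
    exact ht.le.trans (Finset.single_le_sum (f := fun i => ‖(Q i).eval 0‖ + 1)
      (fun i _ => by positivity) (Finset.mem_univ i))
  have hTc : ∀ᶠ t in 𝓝 (0 : ℂ), ∀ i, ‖(T i).eval t - a i‖ < Δ / 8 := by
    rw [eventually_all]
    intro i
    have hc : Tendsto (fun t => ‖(T i).eval t - a i‖) (𝓝 0) (𝓝 ‖(T i).eval 0 - a i‖) :=
      (((T i).continuous.sub continuous_const).norm.tendsto 0)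
    rw [hT0, sub_self, norm_zero] at hc
    exact hc.eventually (gt_mem_nhds (by positivity))
  have hsmall : ∀ᶠ t in 𝓝 (0 : ℂ), A0 * ‖t‖ ^ (c + 1) < (Δ / 8) ^ n := by
    have hc : Tendsto (fun t : ℂ => A0 * ‖t‖ ^ (c + 1)) (𝓝 0) (𝓝 (A0 * ‖(0 : ℂ)‖ ^ (c + 1))) :=
      ((continuous_const.mul (continuous_norm.pow _)).tendsto 0)
    rw [norm_zero, zero_pow (by omega), mul_zero] at hc
    exact hc.eventually (gt_mem_nhds (by positivity))
  refine ⟨T, A0 / (Δ / 2) ^ (n - 1), ?_⟩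
  filter_upwards [hQb, hTc, hsmall] with t h1 h2 h3
  have hval : ∀ i, ‖(H.map (Polynomial.evalRingHom t)).eval ((T i).eval t)‖ ≤
      A0 * ‖t‖ ^ (c + 1) := fun i => by
    rw [← eval_eval_eq, hQ, Polynomial.eval_mul, Polynomial.eval_pow, Polynomial.eval_X, norm_mul,
      norm_pow, mul_comm]
    gcongr
    exact h1 i
  choose ξ hξ0 hξ using fun i => exists_root_near _ (hmon t) ((T i).eval t) (Δ / 8)
    (by positivity) (by rw [hdeg]; exact (hval i).trans_lt h3)
  have hTT : ∀ i j, i ≠ j → Δ / 2 ≤ ‖(T i).eval t - ξ j‖ := fun i j hij => by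
    have e1 : a i - a j = -((T i).eval t - a i) + ((T i).eval t - ξ j) +
      -((T j).eval t - ξ j) + ((T j).eval t - a j) := by ring
    have := hsepa i j hij
    rw [e1] at this
    have := norm_add₄_le (a := -((T i).eval t - a i)) (b := (T i).eval t - ξ j)
      (c := -((T j).eval t - ξ j)) (d := (T j).eval t - a j)
    rw [norm_neg, norm_neg] at this
    have := h2 i
    have := h2 j
    have := hξ j
    linarith
  have hξi : Function.Injective ξ := by
    intro i j hij
    by_contra hne
    have := hTT i j hne
    rw [← hij] at this
    have := hξ i
    linarith
  have hprod := eq_prod_of_injective_roots _ (hmon t) (by rw [hdeg]; simp) ξ hξi hξ0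
  refine ⟨ξ, hprod, fun i => ?_⟩
  have h5 := hval i
  rw [hprod, Polynomial.eval_prod, norm_prod, ← Finset.mul_prod_erase _ _ (Finset.mem_univ i)] at h5
  simp only [Polynomial.eval_sub, Polynomial.eval_X, Polynomial.eval_C] at h5
  have h6 : (Δ / 2) ^ (n - 1) ≤ ∏ j ∈ Finset.univ.erase i, ‖(T i).eval t - ξ j‖ := by
    have hce : (Finset.univ.erase i).card = n - 1 := by simp
    rw [← hce, ← Finset.prod_const]
    exact Finset.prod_le_prod (fun _ _ => by positivity) fun j hj =>
      hTT i j (Finset.ne_of_mem_erase hj).symm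
  rw [div_mul_eq_mul_div, le_div_iff₀ (by positivity), norm_sub_rev]
  exact (mul_le_mul_of_nonneg_left h6 (norm_nonneg _)).trans h5

/-- `u k = T (1 / k) + O(1 / k ^ (c + 1))` for `k ∈ S`. -/
def Approx (c : ℕ) (S : Set ℕ) (u : ℕ → ℂ) (T : Polynomial ℂ) : Prop :=
  ∃ A : ℝ, ∀ k ∈ S, ‖u k - T.eval (1 / (k : ℂ))‖ ≤ A / (k : ℝ) ^ (c + 1)

section
variable {c : ℕ} {S : Set ℕ}

lemma Approx.const (a : ℂ) : Approx c S (fun _ => a) (Polynomial.C a) :=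
  ⟨0, fun k _ => by simp⟩

lemma Approx.add {u v : ℕ → ℂ} {T R : Polynomial ℂ} (hu : Approx c S u T) (hv : Approx c S v R) :
    Approx c S (fun k => u k + v k) (T + R) := by
  obtain ⟨A, hA⟩ := hu
  obtain ⟨B, hB⟩ := hv
  refine ⟨A + B, fun k hk => ?_⟩
  rw [Polynomial.eval_add, add_sub_add_comm, add_div]
  exact (norm_add_le _ _).trans (add_le_add (hA k hk) (hB k hk))

lemma exists_eval_bound (T : Polynomial ℂ) : ∃ M : ℝ, ∀ k : ℕ, ‖T.eval (1 / (k : ℂ))‖ ≤ M := by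
  obtain ⟨M, hM⟩ := (isCompact_closedBall (0 : ℂ) 1).exists_bound_of_continuousOn
    (f := fun t => T.eval t) T.continuous.continuousOn
  refine ⟨M, fun k => hM _ ?_⟩
  rw [mem_closedBall_zero_iff, norm_div, norm_one, Complex.norm_natCast]
  rcases Nat.eq_zero_or_pos k with rfl | hk
  · simp
  · rw [div_le_one (by exact_mod_cast hk)]
    exact_mod_cast hk

lemma Approx.mul {u v : ℕ → ℂ} {T R : Polynomial ℂ} (hu : Approx c S u T) (hv : Approx c S v R) :
    Approx c S (fun k => u k * v k) (T * R) := by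
  obtain ⟨A, hA⟩ := hu
  obtain ⟨B, hB⟩ := hv
  obtain ⟨M, hM⟩ := exists_eval_bound T
  obtain ⟨N, hN⟩ := exists_eval_bound R
  refine ⟨|A| * (|N| + |B|) + |M| * |B|, fun k hk => ?_⟩
  have hAk : ‖u k - T.eval (1 / (k : ℂ))‖ ≤ |A| / (k : ℝ) ^ (c + 1) :=
    (hA k hk).trans (by gcongr; exact le_abs_self A)
  have hBk : ‖v k - R.eval (1 / (k : ℂ))‖ ≤ |B| / (k : ℝ) ^ (c + 1) :=
    (hB k hk).trans (by gcongr; exact le_abs_self B)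
  have hv : ‖v k‖ ≤ |N| + |B| := by
    have e : v k = R.eval (1 / (k : ℂ)) + (v k - R.eval (1 / (k : ℂ))) := by ring
    rw [e]
    refine (norm_add_le _ _).trans (add_le_add ((hN k).trans (le_abs_self N)) (hBk.trans ?_))
    rcases Nat.eq_zero_or_pos k with rfl | hk
    · simp
    · exact div_le_self (abs_nonneg _) (one_le_pow₀ (by exact_mod_cast hk))
  have hT : ‖T.eval (1 / (k : ℂ))‖ ≤ |M| := (hM k).trans (le_abs_self M)
  have e : u k * v k - (T * R).eval (1 / (k : ℂ)) =
      (u k - T.eval (1 / (k : ℂ))) * v k +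
      T.eval (1 / (k : ℂ)) * (v k - R.eval (1 / (k : ℂ))) := by
    rw [Polynomial.eval_mul]; ring
  rw [e]
  refine (norm_add_le _ _).trans ?_
  rw [norm_mul, norm_mul, add_div, mul_div_right_comm, mul_div_assoc]
  gcongr

lemma Approx.sum {ι : Type*} (s : Finset ι) {u : ι → ℕ → ℂ} {T : ι → Polynomial ℂ}
    (h : ∀ i ∈ s, Approx c S (u i) (T i)) :
    Approx c S (fun k => ∑ i ∈ s, u i k) (∑ i ∈ s, T i) := by
  classical
  induction s using Finset.induction_on with
  | empty => simpa using Approx.const (c := c) (S := S) 0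
  | insert a s ha ih =>
    simp only [Finset.sum_insert ha]
    exact (h a (by simp)).add (ih fun i hi => h i (by simp [hi]))

lemma Approx.prod_coeff {ι : Type*} (s : Finset ι) {ξ : ι → ℕ → ℂ} {T : ι → Polynomial ℂ}
    (h : ∀ i ∈ s, Approx c S (ξ i) (T i)) (j : ℕ) :
    Approx c S (fun k => (∏ i ∈ s, (Polynomial.X - Polynomial.C (ξ i k))).coeff j)
      ((∏ i ∈ s, (Polynomial.X - Polynomial.C (T i))).coeff j) := by
  classical
  induction s using Finset.induction_on generalizing j with
  | empty =>
    simp only [Finset.prod_empty, Polynomial.coeff_one]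
    split_ifs
    · simpa using Approx.const (c := c) (S := S) 1
    · simpa using Approx.const (c := c) (S := S) 0
  | insert a s ha ih =>
    simp only [Finset.prod_insert ha, Polynomial.coeff_mul]
    refine Approx.sum _ fun x _ => Approx.mul ?_ (ih (fun i hi => h i (by simp [hi])) _)
    simp only [Polynomial.coeff_sub, Polynomial.coeff_X, Polynomial.coeff_C]
    have h1 : Approx c S (fun _ => (if 1 = x.1 then 1 else 0 : ℂ))
        (if 1 = x.1 then 1 else 0 : Polynomial ℂ) := by
      split_ifs
      · simpa using Approx.const (c := c) (S := S) 1
      · simpa using Approx.const (c := c) (S := S) 0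
    have h2 : Approx c S (fun k => -(if x.1 = 0 then ξ a k else 0 : ℂ))
        (-(if x.1 = 0 then T a else 0 : Polynomial ℂ)) := by
      split_ifs
      · simpa using (Approx.const (c := c) (S := S) (-1)).mul (h a (by simp))
      · simpa using Approx.const (c := c) (S := S) 0
    simpa only [sub_eq_add_neg] using h1.add h2

end

/-- The specialisation `t = 1 / k`. -/
abbrev spec (H : Polynomial (Polynomial ℚ)) (k : ℕ) : Polynomial ℚ :=
  H.map (Polynomial.evalRingHom (1 / (k : ℚ)))

open Filter Topology in
lemma exists_root_approx_nat (H : Polynomial (Polynomial ℚ)) (hH : H.Monic)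
    (hsep : (H.map (Polynomial.evalRingHom 0)).Separable) (c : ℕ) :
    ∃ (T : Fin H.natDegree → Polynomial ℂ) (A : ℝ) (k1 : ℕ), 1 ≤ k1 ∧ ∀ k ≥ k1,
      ∃ ξ : Fin H.natDegree → ℂ,
        (spec H k).map (algebraMap ℚ ℂ) = ∏ i, (Polynomial.X - Polynomial.C (ξ i)) ∧
        ∀ i, ‖ξ i - (T i).eval (1 / (k : ℂ))‖ ≤ A / (k : ℝ) ^ (c + 1) := by
  set HC := H.map (Polynomial.mapRingHom (algebraMap ℚ ℂ)) with hHC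
  have hm : HC.Monic := hH.map _
  have hcomm : ∀ t : ℚ, HC.map (Polynomial.evalRingHom (t : ℂ)) =
      (H.map (Polynomial.evalRingHom t)).map (algebraMap ℚ ℂ) := by
    intro t
    rw [hHC, Polynomial.map_map, Polynomial.map_map]
    congr 1
    apply Polynomial.ringHom_ext <;> simp
  have hdeg : HC.natDegree = H.natDegree := hH.natDegree_map _
  have h0 : (HC.map (Polynomial.evalRingHom 0)).Separable := by
    have := hcomm 0
    rw [Rat.cast_zero] at this
    rw [this]
    exact hsep.map
  have hex := exists_root_approx HC hm h0 c
  rw [hdeg] at hex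
  obtain ⟨T, A, hT⟩ := hex
  have hlim : Tendsto (fun k : ℕ => (1 / (k : ℂ))) atTop (𝓝 0) :=
    tendsto_one_div_atTop_nhds_zero_nat
  obtain ⟨k1, hk1⟩ := eventually_atTop.1 (hlim.eventually hT)
  refine ⟨T, A, max k1 1, le_max_right _ _, fun k hk => ?_⟩
  obtain ⟨ξ, h1, h2⟩ := hk1 k ((le_max_left _ _).trans hk)
  refine ⟨ξ, ?_, fun i => ?_⟩
  · rw [← h1, spec, ← hcomm]
    simp
  · have := h2 i
    rwa [norm_div, norm_one, Complex.norm_natCast, div_pow, one_pow, mul_one_div] at this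

lemma exists_denom_poly (p : Polynomial ℚ) : ∃ D c : ℕ, 0 < D ∧ ∀ k : ℕ, 1 ≤ k →
    ∃ z : ℤ, (D * (k : ℚ) ^ c) * p.eval (1 / (k : ℚ)) = z := by
  induction p using Polynomial.induction_on' with
  | add p q hp hq =>
    obtain ⟨D, c, hD, h⟩ := hp
    obtain ⟨D', c', hD', h'⟩ := hq
    refine ⟨D * D', c + c', by positivity, fun k hk => ?_⟩
    obtain ⟨z, hz⟩ := h k hk
    obtain ⟨z', hz'⟩ := h' k hk
    refine ⟨D' * k ^ c' * z + D * k ^ c * z', ?_⟩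
    push_cast
    rw [← hz, ← hz', Polynomial.eval_add]
    ring
  | monomial i a =>
    refine ⟨a.den, i, a.den_pos, fun k hk => ⟨a.num, ?_⟩⟩
    have hk0 : (k : ℚ) ≠ 0 := by exact_mod_cast (by omega : k ≠ 0)
    rw [Polynomial.eval_monomial, one_div, inv_pow]
    have := pow_ne_zero i hk0
    field_simp
    rw [mul_comm]
    exact Rat.mul_den_eq_num a

lemma exists_denom (H : Polynomial (Polynomial ℚ)) : ∃ D c : ℕ, 0 < D ∧ ∀ k : ℕ, 1 ≤ k → ∀ j,
    ∃ z : ℤ, (D * (k : ℚ) ^ c) * (spec H k).coeff j = z := by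
  classical
  suffices h : ∀ s : Finset ℕ, ∃ D c : ℕ, 0 < D ∧ ∀ k : ℕ, 1 ≤ k → ∀ j ∈ s,
      ∃ z : ℤ, (D * (k : ℚ) ^ c) * (spec H k).coeff j = z by
    obtain ⟨D, c, hD, h⟩ := h H.support
    refine ⟨D, c, hD, fun k hk j => ?_⟩
    by_cases hj : j ∈ H.support
    · exact h k hk j hj
    · exact ⟨0, by simp [spec, Polynomial.coeff_map, Polynomial.notMem_support_iff.1 hj]⟩
  intro s
  induction s using Finset.induction_on with
  | empty => exact ⟨1, 0, one_pos, by simp⟩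
  | insert a s ha ih =>
    obtain ⟨D, c, hD, h⟩ := ih
    obtain ⟨D', c', hD', h'⟩ := exists_denom_poly (H.coeff a)
    refine ⟨D * D', c + c', by positivity, fun k hk j hj => ?_⟩
    rcases Finset.mem_insert.1 hj with rfl | hj
    · obtain ⟨z, hz⟩ := h' k hk
      refine ⟨D * k ^ c * z, ?_⟩
      rw [spec, Polynomial.coeff_map, Polynomial.coe_evalRingHom]
      push_cast
      rw [← hz]; ring
    · obtain ⟨z, hz⟩ := h k hk j hj
      refine ⟨D' * k ^ c' * z, ?_⟩
      push_cast
      rw [← hz]; ring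

/-- Scaling the roots by a common denominator of the coefficients makes a monic polynomial
integral. -/
lemma exists_int_scaleRoots (p : Polynomial ℚ) (hp : p.Monic) (N : ℕ)
    (h : ∀ j, ∃ z : ℤ, (N : ℚ) * p.coeff j = z) :
    ∃ Q : Polynomial ℤ, Q.Monic ∧ Q.map (algebraMap ℤ ℚ) = p.scaleRoots N := by
  have hmem : p.scaleRoots (N : ℚ) ∈ Polynomial.lifts (algebraMap ℤ ℚ) := by
    rw [Polynomial.lifts_iff_coeff_lifts]
    intro j
    rw [Polynomial.coeff_scaleRoots]
    rcases lt_trichotomy j p.natDegree with hj | hj | hj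
    · obtain ⟨z, hz⟩ := h j
      refine ⟨z * N ^ (p.natDegree - j - 1), ?_⟩
      obtain ⟨s, hs⟩ : ∃ s, p.natDegree - j = s + 1 := ⟨p.natDegree - j - 1, by omega⟩
      simp only [hs, Nat.add_sub_cancel, eq_intCast, Int.cast_mul, Int.cast_pow, Int.cast_natCast]
      rw [← hz]; ring
    · subst hj
      refine ⟨1, ?_⟩
      rw [hp.coeff_natDegree]; simp
    · refine ⟨0, ?_⟩
      rw [Polynomial.coeff_eq_zero_of_natDegree_lt hj]; simp
  obtain ⟨Q, hQ, -, hQm⟩ := Polynomial.lifts_and_degree_eq_and_monic hmem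
    ((Polynomial.monic_scaleRoots_iff _).2 hp)
  exact ⟨Q, hQm, hQ⟩

/-! ### Roots and factors of the specialisations `H(1 / k, x)` -/

lemma isIntegral_coeff_factor (p g : Polynomial ℚ) (hp : p.Monic) (hg : g.Monic) (hdvd : g ∣ p)
    (N : ℕ) (h : ∀ j, ∃ z : ℤ, (N : ℚ) * p.coeff j = z) (j : ℕ) :
    IsIntegral ℤ ((N : ℚ) ^ p.natDegree * g.coeff j) := by
  obtain ⟨Q, hQ, hQp⟩ := exists_int_scaleRoots p hp N h
  have h1 : g.scaleRoots (N : ℚ) ∣ Q.map (algebraMap ℤ ℚ) := by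
    rw [hQp]; exact Polynomial.scaleRoots_dvd _ _ hdvd
  have h2 := Polynomial.isIntegral_coeff_of_dvd Q _ hQ ((Polynomial.monic_scaleRoots_iff _).2 hg)
    h1 j
  rw [Polynomial.coeff_scaleRoots] at h2
  have hin : ∀ n : ℕ, IsIntegral ℤ (n : ℚ) := fun n => by
    simpa using (isIntegral_algebraMap (R := ℤ) (A := ℚ) (x := (n : ℤ)))
  have hle := Polynomial.natDegree_le_of_dvd hdvd hp.ne_zero
  have e : (N : ℚ) ^ p.natDegree * g.coeff j =
      (N : ℚ) ^ (p.natDegree - (g.natDegree - j)) * (g.coeff j * (N : ℚ) ^ (g.natDegree - j)) := by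
    have : p.natDegree = (p.natDegree - (g.natDegree - j)) + (g.natDegree - j) := by omega
    conv_lhs => rw [this, pow_add]
    ring
  rw [e]
  exact ((hin N).pow _).mul h2

lemma isIntegral_root {K : Type} [Field K] [CharZero K] (p : Polynomial ℚ) (hp : p.Monic)
    (N : ℕ) (h : ∀ j, ∃ z : ℤ, (N : ℚ) * p.coeff j = z) (x : K) (hx : Polynomial.aeval x p = 0) :
    IsIntegral ℤ ((N : K) * x) := by
  obtain ⟨Q, hQ, hQp⟩ := exists_int_scaleRoots p hp N h
  have h1 := Polynomial.scaleRoots_aeval_eq_zero (r := (N : ℚ)) hx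
  rw [← hQp, map_natCast] at h1
  refine ⟨Q, hQ, ?_⟩
  rw [Polynomial.aeval_map_algebraMap] at h1
  exact h1

/-- Monic factors of `H(1/k, x)` fall into finitely many types, and factors of the same type at
the points of a far-away window have coefficients interpolated by polynomials in `1 / k` of
bounded degree. -/
lemma factor_interpolation (H : Polynomial (Polynomial ℚ)) (hH : H.Monic)
    (hsep : (H.map (Polynomial.evalRingHom 0)).Separable) :
    ∃ (c k1 : ℕ) (τ : ℕ → Polynomial ℚ → Finset (Fin H.natDegree)), 1 ≤ k1 ∧
      ∀ (S : Set ℕ) (g : ℕ → Polynomial ℚ) (s : Finset (Fin H.natDegree)), (∀ k ∈ S, k1 ≤ k) →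
        (∀ k ∈ S, (g k).Monic) → (∀ k ∈ S, g k ∣ spec H k) → (∀ k ∈ S, τ k (g k) = s) →
        ∀ W, ∃ k0 : ℕ, ∀ J : Finset ℕ, (∀ j ∈ J, j ∈ S) → ∀ k ≥ k0,
          (∀ j ∈ J, k ≤ j ∧ j ≤ k + W) →
          ∃ p : ℕ → Polynomial ℚ, ∀ i, (p i).natDegree ≤ c ∧
            ∀ j ∈ J, (p i).eval (1 / (j : ℚ)) = (g j).coeff i := by
  classical
  obtain ⟨D, c, hD, hden⟩ := exists_denom H
  set n := H.natDegree with hn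
  obtain ⟨T, A, k1, hk1, hT⟩ := exists_root_approx_nat H hH hsep (c * n)
  have hmon : ∀ k, (spec H k).Monic := fun k => hH.map _
  have hdeg : ∀ k, (spec H k).natDegree = n := fun k => hH.natDegree_map _
  choose! ξ hξ hξT using hT
  have hfac : ∀ k ≥ k1, ∀ g : Polynomial ℚ, g.Monic → g ∣ spec H k → ∃ s : Finset (Fin n),
      g.map (algebraMap ℚ ℂ) = ∏ i ∈ s, (Polynomial.X - Polynomial.C (ξ k i)) := by
    rintro k hk g hg ⟨q, hq⟩
    have h1 := hξ k hk
    rw [hq, Polynomial.map_mul] at h1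
    obtain ⟨t, u, b, b', -, -, hbb, hgt, -⟩ := mul_eq_mul_prime_prod
      (x := g.map (algebraMap ℚ ℂ)) (y := q.map (algebraMap ℚ ℂ))
      (a := (1 : Polynomial ℂ)) (s := Finset.univ)
      (fun i _ => Polynomial.prime_X_sub_C (ξ k i)) (by rw [one_mul]; exact h1)
    refine ⟨t, ?_⟩
    have hb : IsUnit b := IsUnit.of_mul_eq_one b' hbb.symm
    have hgm : (g.map (algebraMap ℚ ℂ)).Monic := hg.map _
    have hpm : (∏ i ∈ t, (Polynomial.X - Polynomial.C (ξ k i))).Monic :=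
      Polynomial.monic_prod_of_monic _ _ fun i _ => Polynomial.monic_X_sub_C _
    have hb1 : b.Monic := by
      rw [hgt] at hgm
      exact hpm.of_mul_monic_right hgm
    rw [hgt, hb1.eq_one_of_isUnit hb, one_mul]
  choose! τ hτ using hfac
  refine ⟨c * n, k1, τ, hk1, fun S g s hS hg hdvd hs W => ?_⟩
  have key : ∀ i : ℕ, ∃ k0 : ℕ, ∀ J : Finset ℕ, (∀ j ∈ J, j ∈ S) → ∀ k ≥ k0,
      (∀ j ∈ J, k ≤ j ∧ j ≤ k + W) → ∃ p : Polynomial ℚ, p.natDegree ≤ c * n ∧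
        ∀ j ∈ J, p.eval (1 / (j : ℚ)) = (g j).coeff i := by
    intro i
    refine interpolation (K := ℚ) (D ^ n) (c * n) (by positivity)
      (fun _ => (∏ i ∈ s, (Polynomial.X - Polynomial.C (T i))).coeff i) (fun k => (g k).coeff i) S
      (fun k hk => hk1.trans (hS k hk)) ?_ ?_ W
    · intro k hk
      have := isIntegral_coeff_factor (spec H k) (g k) (hmon k) (hg k hk) (hdvd k hk) (D * k ^ c)
        (fun j => by
          obtain ⟨z, hz⟩ := hden k (hk1.trans (hS k hk)) j
          exact ⟨z, by push_cast; exact hz⟩) i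
      rw [hdeg] at this
      push_cast at this ⊢
      rw [mul_pow, ← pow_mul] at this
      exact this
    · intro σ
      have hap : ∀ i, Approx (c * n) S (fun k => ξ k i) (T i) := fun i =>
        ⟨A, fun k hk => hξT k (hS k hk) i⟩
      obtain ⟨B, hB⟩ := Approx.prod_coeff s (ξ := fun i k => ξ k i) (fun i _ => hap i) i
      refine ⟨B, fun k hk => ?_⟩
      have h1 := hB k hk
      beta_reduce at h1
      have h2 := hτ k (hS k hk) (g k) (hg k hk) (hdvd k hk)
      rw [hs k hk] at h2
      rw [← h2, Polynomial.coeff_map] at h1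
      have : σ = algebraMap ℚ ℂ := Subsingleton.elim _ _
      rw [this]
      exact h1
  choose k0 hk0 using key
  refine ⟨∑ i ∈ Finset.range (n + 1), k0 i, fun J hJ k hk hw => ?_⟩
  have : ∀ i, ∃ p : Polynomial ℚ, p.natDegree ≤ c * n ∧
        ∀ j ∈ J, p.eval (1 / (j : ℚ)) = (g j).coeff i := by
    intro i
    by_cases hi : i ≤ n
    · exact hk0 i J hJ k ((Finset.single_le_sum (f := k0) (fun _ _ => Nat.zero_le _)
        (Finset.mem_range.2 (by omega))).trans hk) hw
    · refine ⟨0, by simp, fun j hj => ?_⟩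
      rw [Polynomial.eval_zero, Polynomial.coeff_eq_zero_of_natDegree_lt]
      have := Polynomial.natDegree_le_of_dvd (hdvd j (hJ j hj)) (hmon j).ne_zero
      rw [hdeg] at this
      omega
  choose p hp using this
  exact ⟨p, hp⟩

lemma natDegree_eval_le {R : Type*} [CommRing R] (H : Polynomial (Polynomial R)) (c : ℕ) :
    ∃ B : ℕ, ∀ p : Polynomial R, p.natDegree ≤ c → (H.eval p).natDegree ≤ B := by
  refine ⟨∑ i ∈ Finset.range (H.natDegree + 1), ((H.coeff i).natDegree + i * c), fun p hp => ?_⟩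
  rw [Polynomial.eval_eq_sum_range]
  refine Polynomial.natDegree_sum_le_of_forall_le _ _ fun i hi => ?_
  refine Polynomial.natDegree_mul_le.trans (le_trans ?_ (Finset.single_le_sum
    (f := fun i => (H.coeff i).natDegree + i * c) (fun _ _ => Nat.zero_le _) hi))
  exact add_le_add le_rfl (Polynomial.natDegree_pow_le.trans (Nat.mul_le_mul_left _ hp))

lemma eq_zero_of_eval_inv {A : Type*} [CommRing A] [IsDomain A] [Algebra ℚ A]
    (p : Polynomial A) (J : Finset ℕ) (hJ : p.natDegree < J.card)
    (h : ∀ k ∈ J, p.eval (algebraMap ℚ A (1 / (k : ℚ))) = 0) : p = 0 := by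
  have hinj : Function.Injective (fun k : J => algebraMap ℚ A (1 / ((k : ℕ) : ℚ))) := by
    intro x y hxy
    have := (algebraMap ℚ A).injective hxy
    rw [one_div, one_div, inv_inj] at this
    exact Subtype.ext (by exact_mod_cast this)
  exact Polynomial.eq_zero_of_natDegree_lt_card_of_eval_eq_zero p hinj (fun k => h k k.2)
    (by simpa using hJ)

/-- If `H(t, x)` has no root in `K[t]`, then `H(1/k, x)` rarely has a root in `K`. -/
lemma sparse_root {K : Type} [Field K] [NumberField K] (H : Polynomial (Polynomial ℚ))
    (hH : H.Monic) (hsep : (H.map (Polynomial.evalRingHom 0)).Separable)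
    (hno : ∀ p : Polynomial K,
      (H.map (Polynomial.mapRingHom (algebraMap ℚ K))).eval p ≠ 0) :
    Sparse {k | ∃ x : K, Polynomial.aeval x (spec H k) = 0} := by
  classical
  obtain ⟨D, c, hD, hden⟩ := exists_denom H
  obtain ⟨T, A, k1, hk1, hT⟩ := exists_root_approx_nat H hH hsep c
  have hmon : ∀ k, (spec H k).Monic := fun k => hH.map _
  choose! ξ hξ hξT using hT
  set S0 : Set ℕ := {k | ∃ x : K, Polynomial.aeval x (spec H k) = 0} with hS0
  choose! x hx using (fun k (hk : k ∈ S0) => hk)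
  have htype : ∀ k ∈ S0, k1 ≤ k → ∃ π : (K →+* ℂ) → Fin H.natDegree, ∀ σ, σ (x k) = ξ k (π σ) := by
    intro k hk hkk
    have : ∀ σ : K →+* ℂ, ∃ i, σ (x k) = ξ k i := by
      intro σ
      have h1 : ((spec H k).map (algebraMap ℚ ℂ)).eval (σ (x k)) = 0 := by
        have h2 := congrArg σ (hx k hk)
        rw [Polynomial.aeval_def, Polynomial.hom_eval₂, map_zero] at h2
        rw [Polynomial.eval_map, ← h2]
        congr 1
        exact Subsingleton.elim _ _
      rw [hξ k hkk, Polynomial.eval_prod, Finset.prod_eq_zero_iff] at h1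
      obtain ⟨i, -, hi⟩ := h1
      refine ⟨i, ?_⟩
      simpa [sub_eq_zero] using hi
    choose π hπ using this
    exact ⟨π, hπ⟩
  obtain ⟨B, hB⟩ := natDegree_eval_le (H.map (Polynomial.mapRingHom (algebraMap ℚ K))) c
  have key : ∀ π : (K →+* ℂ) → Fin H.natDegree,
      Sparse {k | k ∈ S0 ∧ k1 ≤ k ∧ ∀ σ, σ (x k) = ξ k (π σ)} := by
    intro π
    refine ⟨B, fun W => ?_⟩
    obtain ⟨k0, hk0⟩ := interpolation (K := K) D c hD (fun σ => T (π σ)) x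
      {k | k ∈ S0 ∧ k1 ≤ k ∧ ∀ σ, σ (x k) = ξ k (π σ)} (fun k hk => hk1.trans hk.2.1)
      (fun k hk => by
        have := isIntegral_root (spec H k) (hmon k) (D * k ^ c) (fun j => by
          obtain ⟨z, hz⟩ := hden k (hk1.trans hk.2.1) j
          exact ⟨z, by push_cast; exact hz⟩) (x k) (hx k hk.1)
        push_cast at this
        exact this)
      (fun σ => ⟨A, fun k hk => by
        rw [hk.2.2 σ]; exact hξT k hk.2.1 _⟩) W
    refine ⟨k0, fun J hJ k hk hw => ?_⟩
    obtain ⟨p, hp, hpx⟩ := hk0 J hJ k hk hw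
    by_contra! hcard
    refine hno p (eq_zero_of_eval_inv _ J ((hB p hp).trans_lt hcard) fun j hj => ?_)
    have hj' : algebraMap ℚ K (1 / (j : ℚ)) = 1 / (j : K) := by simp
    rw [eval_eval_eq, hj', hpx j hj, Polynomial.map_map, Polynomial.eval_map]
    have := hx j (hJ j hj).1
    rw [spec, Polynomial.aeval_def, Polynomial.eval₂_map] at this
    rw [← this]
    congr 1
    apply Polynomial.ringHom_ext <;> simp
  refine ((sparse_lt k1).union (Sparse.iUnion key)).mono fun k hk => ?_
  by_cases hkk : k < k1
  · exact Or.inl hkk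
  · obtain ⟨π, hπ⟩ := htype k hk (not_lt.1 hkk)
    exact Or.inr (Set.mem_iUnion.2 ⟨π, hk, not_lt.1 hkk, hπ⟩)

/-- Reassembles a polynomial in `A[t][x]` from polynomials interpolating the coordinates `y l k i`
of the coefficients of `g k` with respect to the family `lam`. -/
lemma exists_assemble {A : Type} [CommRing A] [Algebra ℚ A] {Λ : Type} [Fintype Λ]
    (lam : Λ → A) (n c : ℕ) (J : Finset ℕ) (g : ℕ → Polynomial A) (y : Λ → ℕ → ℕ → ℚ)
    (hdeg : ∀ k ∈ J, (g k).natDegree ≤ n)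
    (hrec : ∀ k ∈ J, ∀ i, (g k).coeff i = ∑ l, y l k i • lam l)
    (hp : ∀ l, ∃ p : ℕ → Polynomial ℚ, ∀ i, (p i).natDegree ≤ c ∧
            ∀ j ∈ J, (p i).eval (1 / (j : ℚ)) = y l j i) :
    ∃ G : Polynomial (Polynomial A), (∀ i, (G.coeff i).natDegree ≤ c) ∧
      ∀ k ∈ J, G.map (Polynomial.evalRingHom (algebraMap ℚ A (1 / (k : ℚ)))) = g k := by
  classical
  choose p hpc hpe using hp
  set q : ℕ → Polynomial A := fun i =>
    ∑ l, (p l i).map (algebraMap ℚ A) * Polynomial.C (lam l) with hq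
  have hqc : ∀ i, (q i).natDegree ≤ c := fun i =>
    Polynomial.natDegree_sum_le_of_forall_le _ _ fun l _ =>
      (Polynomial.natDegree_mul_C_le _ _).trans (Polynomial.natDegree_map_le.trans (hpc l i))
  set G : Polynomial (Polynomial A) := ∑ i ∈ Finset.range (n + 1), Polynomial.monomial i (q i)
    with hG
  have hGc : ∀ i, G.coeff i = if i ≤ n then q i else 0 := fun i => by
    rw [hG, Polynomial.finsetSum_coeff]
    simp only [Polynomial.coeff_monomial, Finset.sum_ite_eq', Finset.mem_range, Nat.lt_succ_iff]
  refine ⟨G, fun i => ?_, fun k hk => ?_⟩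
  · rw [hGc]; split_ifs
    · exact hqc i
    · simp
  · ext i
    rw [Polynomial.coeff_map, hGc, Polynomial.coe_evalRingHom]
    split_ifs with hi
    · rw [hq, hrec k hk, Polynomial.eval_finsetSum]
      refine Finset.sum_congr rfl fun l _ => ?_
      rw [Polynomial.eval_mul, Polynomial.eval_C, Polynomial.eval_map_algebraMap,
        Polynomial.aeval_algebraMap_apply, Polynomial.coe_aeval_eq_eval, hpe l i k hk,
        Algebra.smul_def]
    · rw [Polynomial.eval_zero, Polynomial.coeff_eq_zero_of_natDegree_lt]
      exact (hdeg k hk).trans_lt (not_le.1 hi)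

/-- For an irreducible monic `P(t, x)` over `A`, the specialisations `P(1/k, x)` are rarely
reducible, as soon as the coefficients of their monic factors can be recovered from their values
at finitely many rational points of `A`. -/
lemma sparse_reducible {A : Type} [CommRing A] [IsDomain A] [Algebra ℚ A]
    (P : Polynomial (Polynomial A)) (hP : P.Monic) (hirr : Irreducible P)
    {Λ : Type} [Fintype Λ] (ρ : Λ → A →ₐ[ℚ] ℚ) (lam : Λ → A)
    (hsep : ∀ l, ((P.map (Polynomial.mapRingHom (ρ l : A →+* ℚ))).map
      (Polynomial.evalRingHom 0)).Separable)
    (hrec : ∀ (k : ℕ) (g : Polynomial A), g.Monic →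
      g ∣ P.map (Polynomial.evalRingHom (algebraMap ℚ A (1 / (k : ℚ)))) →
      ∀ j, g.coeff j = ∑ l, ρ l (g.coeff j) • lam l) :
    Sparse {k : ℕ | ¬ Irreducible
      (P.map (Polynomial.evalRingHom (algebraMap ℚ A (1 / (k : ℚ)))))} := by
  classical
  set Pk : ℕ → Polynomial A :=
    fun k => P.map (Polynomial.evalRingHom (algebraMap ℚ A (1 / (k : ℚ)))) with hPk
  set H : Λ → Polynomial (Polynomial ℚ) := fun l =>
    P.map (Polynomial.mapRingHom (ρ l : A →+* ℚ)) with hH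
  have hHm : ∀ l, (H l).Monic := fun l => hP.map _
  have hPm : ∀ k, (Pk k).Monic := fun k => hP.map _
  have hPd : ∀ k, (Pk k).natDegree = P.natDegree := fun k => hP.natDegree_map _
  have hspec : ∀ l k, spec (H l) k = (Pk k).map (ρ l : A →+* ℚ) := fun l k => by
    simp only [spec, hH, hPk, Polynomial.map_map]
    congr 1
    apply Polynomial.ringHom_ext <;> simp
  have hP0 : P.natDegree ≠ 0 := fun h => hirr.not_isUnit (by
    rw [hP.natDegree_eq_zero.1 h]; exact isUnit_one)
  set S0 : Set ℕ := {k : ℕ | ¬ Irreducible (Pk k)} with hS0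
  have hfac : ∀ k ∈ S0, ∃ g q : Polynomial A, g.Monic ∧ q.Monic ∧ g * q = Pk k ∧
      g.natDegree ≠ 0 ∧ q.natDegree ≠ 0 := by
    intro k hk
    simp only [hS0, Set.mem_ofPred_eq, (hPm k).irreducible_iff_natDegree] at hk
    push Not at hk
    have h1 : Pk k ≠ 1 := fun h => hP0 (by rw [← hPd k, h, Polynomial.natDegree_one])
    obtain ⟨g, q, hg, hq, hgq, h2⟩ := hk h1
    exact ⟨g, q, hg, hq, hgq, h2⟩
  choose! g q hg hq hgq hg0 hq0 using hfac
  choose c k1 τ hk1 hτ using fun l => factor_interpolation (H l) (hHm l) (hsep l)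
  set C := ∑ l, c l with hC
  set K1 := ∑ l, k1 l with hK1
  have hcC : ∀ l, c l ≤ C := fun l => Finset.single_le_sum (fun _ _ => Nat.zero_le _)
    (Finset.mem_univ l)
  have hkK : ∀ l, k1 l ≤ K1 := fun l => Finset.single_le_sum (fun _ _ => Nat.zero_le _)
    (Finset.mem_univ l)
  set B := ∑ i ∈ Finset.range (P.natDegree + 1), (P.coeff i).natDegree + (C + C) with hB
  have key : ∀ s : ∀ l, Finset (Fin (H l).natDegree) × Finset (Fin (H l).natDegree),
      Sparse {k | k ∈ S0 ∧ K1 ≤ k ∧ ∀ l, τ l k ((g k).map (ρ l : A →+* ℚ)) = (s l).1 ∧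
        τ l k ((q k).map (ρ l : A →+* ℚ)) = (s l).2} := by
    intro s
    refine ⟨B, fun W => ?_⟩
    set S := {k | k ∈ S0 ∧ K1 ≤ k ∧ ∀ l, τ l k ((g k).map (ρ l : A →+* ℚ)) = (s l).1 ∧
        τ l k ((q k).map (ρ l : A →+* ℚ)) = (s l).2} with hS
    choose k0 hk0 using fun l => hτ l S (fun k => (g k).map (ρ l : A →+* ℚ)) (s l).1
      (fun k hk => (hkK l).trans hk.2.1) (fun k hk => (hg k hk.1).map _)
      (fun k hk => by
        rw [hspec, ← hgq k hk.1, Polynomial.map_mul]; exact dvd_mul_right _ _)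
      (fun k hk => (hk.2.2 l).1) W
    choose k0' hk0' using fun l => hτ l S (fun k => (q k).map (ρ l : A →+* ℚ)) (s l).2
      (fun k hk => (hkK l).trans hk.2.1) (fun k hk => (hq k hk.1).map _)
      (fun k hk => by
        rw [hspec, ← hgq k hk.1, Polynomial.map_mul]; exact dvd_mul_left _ _)
      (fun k hk => (hk.2.2 l).2) W
    refine ⟨∑ l, (k0 l + k0' l), fun J hJ k hk hw => ?_⟩
    have hkl : ∀ l, k0 l + k0' l ≤ k := fun l =>
      (Finset.single_le_sum (f := fun l => k0 l + k0' l) (fun _ _ => Nat.zero_le _)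
        (Finset.mem_univ l)).trans hk
    by_contra! hcard
    have hgdvd : ∀ j ∈ J, g j ∣ Pk j := fun j hj => ⟨q j, (hgq j (hJ j hj).1).symm⟩
    have hqdvd : ∀ j ∈ J, q j ∣ Pk j := fun j hj =>
      ⟨g j, by rw [mul_comm]; exact (hgq j (hJ j hj).1).symm⟩
    obtain ⟨Gh, hGd, hGe⟩ := exists_assemble lam P.natDegree C J g
      (fun l k i => ρ l ((g k).coeff i))
      (fun j hj => (Polynomial.natDegree_le_of_dvd (hgdvd j hj) (hPm j).ne_zero).trans (hPd j).le)
      (fun j hj i => hrec j (g j) (hg j (hJ j hj).1) (hgdvd j hj) i)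
      (fun l => by
        obtain ⟨p, hp⟩ := hk0 l J hJ k (le_trans (by omega) (hkl l)) hw
        refine ⟨p, fun i => ⟨((hp i).1).trans (hcC l), fun j hj => ?_⟩⟩
        rw [(hp i).2 j hj, Polynomial.coeff_map]; rfl)
    obtain ⟨Qh, hQd, hQe⟩ := exists_assemble lam P.natDegree C J q
      (fun l k i => ρ l ((q k).coeff i))
      (fun j hj => (Polynomial.natDegree_le_of_dvd (hqdvd j hj) (hPm j).ne_zero).trans (hPd j).le)
      (fun j hj i => hrec j (q j) (hq j (hJ j hj).1) (hqdvd j hj) i)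
      (fun l => by
        obtain ⟨p, hp⟩ := hk0' l J hJ k (le_trans (by omega) (hkl l)) hw
        refine ⟨p, fun i => ⟨((hp i).1).trans (hcC l), fun j hj => ?_⟩⟩
        rw [(hp i).2 j hj, Polynomial.coeff_map]; rfl)
    have hPGQ : P = Gh * Qh := by
      rw [← sub_eq_zero]
      ext1 i
      rw [Polynomial.coeff_zero]
      refine eq_zero_of_eval_inv _ J (lt_of_le_of_lt ?_ hcard) fun j hj => ?_
      · rw [Polynomial.coeff_sub]
        refine (Polynomial.natDegree_sub_le _ _).trans (max_le ?_ ?_)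
        · by_cases hi : i ≤ P.natDegree
          · exact (Finset.single_le_sum (f := fun i => (P.coeff i).natDegree)
              (fun _ _ => Nat.zero_le _) (Finset.mem_range.2 (by omega))).trans
              (Nat.le_add_right _ _)
          · rw [Polynomial.coeff_eq_zero_of_natDegree_lt (not_le.1 hi)]; simp
        · rw [Polynomial.coeff_mul]
          refine (Polynomial.natDegree_sum_le_of_forall_le (n := C + C) _ _ fun x _ => ?_).trans
            (Nat.le_add_left _ _)
          exact Polynomial.natDegree_mul_le.trans (add_le_add (hGd _) (hQd _))
      · rw [← Polynomial.coe_evalRingHom, ← Polynomial.coeff_map, Polynomial.map_sub,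
          Polynomial.map_mul, hGe j hj, hQe j hj, hgq j (hJ j hj).1, hPk]
        simp
    obtain ⟨j, hj⟩ : J.Nonempty := Finset.card_pos.1 (by omega)
    rcases hirr.isUnit_or_isUnit hPGQ with hu | hu
    · apply hg0 j (hJ j hj).1
      rw [← hGe j hj]
      exact Nat.le_zero.1 (Polynomial.natDegree_map_le.trans
        (Polynomial.natDegree_eq_zero_of_isUnit hu).le)
    · apply hq0 j (hJ j hj).1
      rw [← hQe j hj]
      exact Nat.le_zero.1 (Polynomial.natDegree_map_le.trans
        (Polynomial.natDegree_eq_zero_of_isUnit hu).le)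
  refine ((sparse_lt K1).union (Sparse.iUnion key)).mono fun k hk => ?_
  by_cases hkk : k < K1
  · exact Or.inl hkk
  · exact Or.inr (Set.mem_iUnion.2 ⟨fun l => (_, _), hk, not_lt.1 hkk, fun l => ⟨rfl, rfl⟩⟩)

/-- Quantitative Hilbert irreducibility for one parameter over `ℚ`. -/
lemma sparse_reducible_rat (H : Polynomial (Polynomial ℚ)) (hH : H.Monic)
    (hsep : (H.map (Polynomial.evalRingHom 0)).Separable) (hirr : Irreducible H) :
    Sparse {k : ℕ | ¬ Irreducible (spec H k)} := by
  refine sparse_reducible H hH hirr (Λ := Unit) (fun _ => AlgHom.id ℚ ℚ) (fun _ => 1) ?_ ?_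
  · intro _
    have : Polynomial.mapRingHom ((AlgHom.id ℚ ℚ : ℚ →ₐ[ℚ] ℚ) : ℚ →+* ℚ) = RingHom.id _ := by
      apply Polynomial.ringHom_ext <;> simp
    rw [this, Polynomial.map_id]
    exact hsep
  · intro k g _ _ j
    simp

/-! ### Hilbert irreducibility -/

/-- A monic irreducible polynomial in characteristic zero satisfies a Bézout identity with its
derivative, with a nonzero constant on the right. -/
lemma exists_separability {R : Type} [CommRing R] [IsDomain R] [IsIntegrallyClosed R] [CharZero R]
    (P : Polynomial R) (hP : P.Monic) (hirr : Irreducible P) :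
    ∃ (δ : R) (U V : Polynomial R), δ ≠ 0 ∧ U * P + V * P.derivative = Polynomial.C δ := by
  let F := FractionRing R
  have : CharZero F := charZero_of_injective_algebraMap (IsFractionRing.injective R F)
  have hF : Irreducible (P.map (algebraMap R F)) :=
    (hP.irreducible_iff_irreducible_map_fraction_map).1 hirr
  obtain ⟨u, v, huv⟩ := hF.separable
  obtain ⟨b, hb, hb'⟩ := IsLocalization.integerNormalization_spec (nonZeroDivisors R) u
  obtain ⟨b2, hb2, hb2'⟩ := IsLocalization.integerNormalization_spec (nonZeroDivisors R) v
  set U := IsLocalization.integerNormalization (nonZeroDivisors R) u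
  set V := IsLocalization.integerNormalization (nonZeroDivisors R) v
  refine ⟨b * b2, Polynomial.C b2 * U, Polynomial.C b * V,
    mul_ne_zero (nonZeroDivisors.ne_zero hb) (nonZeroDivisors.ne_zero hb2), ?_⟩
  apply Polynomial.map_injective _ (IsFractionRing.injective R F)
  have h1 : U.map (algebraMap R F) = Polynomial.C (algebraMap R F b) * u := by
    rw [hb']; ext i; rw [Polynomial.coeff_smul, Polynomial.coeff_C_mul, Algebra.smul_def]
  have h2 : V.map (algebraMap R F) = Polynomial.C (algebraMap R F b2) * v := by
    rw [hb2']; ext i; rw [Polynomial.coeff_smul, Polynomial.coeff_C_mul, Algebra.smul_def]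
  simp only [Polynomial.map_add, Polynomial.map_mul, Polynomial.map_C, h1, h2,
    ← Polynomial.derivative_map, map_mul]
  linear_combination (Polynomial.C (algebraMap R F b) * Polynomial.C (algebraMap R F b2)) * huv

lemma separable_of_bezout {R F : Type} [CommRing R] [Field F] (φ : R →+* F) (P U V : Polynomial R)
    (δ : R) (h : U * P + V * P.derivative = Polynomial.C δ) (hδ : φ δ ≠ 0) :
    (P.map φ).Separable := by
  refine ⟨Polynomial.C (φ δ)⁻¹ * U.map φ, Polynomial.C (φ δ)⁻¹ * V.map φ, ?_⟩
  have h1 := congrArg (Polynomial.map φ) h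
  simp only [Polynomial.map_add, Polynomial.map_mul, Polynomial.map_C,
    ← Polynomial.derivative_map] at h1
  rw [mul_assoc, mul_assoc, ← mul_add, h1, ← Polynomial.C_mul, inv_mul_cancel₀ hδ,
    Polynomial.C_1]

lemma finSuccEquiv_symm_C {r : ℕ} (a : MvPolynomial (Fin r) ℚ) :
    (finSuccEquiv ℚ r).symm (Polynomial.C a) = rename Fin.succ a := by
  rw [AlgEquiv.symm_apply_eq]
  induction a using MvPolynomial.induction_on with
  | C a =>
    rw [rename_C]
    exact ((finSuccEquiv ℚ r).commutes a).symm
  | add p q hp hq => rw [map_add, map_add, map_add, hp, hq]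
  | mul_X p i hp => rw [map_mul, map_mul, map_mul, hp, rename_X, finSuccEquiv_X_succ]

/-- The coefficients of monic factors of the specialisations `P(s, x)` have bounded degree. -/
lemma exists_degree_bound {r : ℕ} (P : Polynomial (Polynomial (MvPolynomial (Fin r) ℚ)))
    (hP : P.Monic) :
    ∃ b : ℕ, ∀ (s : ℚ) (g : Polynomial (MvPolynomial (Fin r) ℚ)),
      g ∣ P.map (Polynomial.evalRingHom (algebraMap ℚ _ s)) →
      ∀ j, (g.coeff j).totalDegree ≤ b := by
  set e := finSuccEquiv ℚ r with he
  set b1 : ℕ → ℕ := fun i =>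
    ∑ j ∈ Finset.range ((P.coeff i).natDegree + 1), ((P.coeff i).coeff j).totalDegree with hb1
  have hb1' : ∀ (s : ℚ) i, ((P.coeff i).eval (algebraMap ℚ _ s)).totalDegree ≤ b1 i := by
    intro s i
    rw [Polynomial.eval_eq_sum_range]
    refine totalDegree_finsetSum_le fun j hj => ?_
    rw [← map_pow]
    refine (totalDegree_mul _ _).trans ?_
    rw [algebraMap_eq, totalDegree_C, add_zero]
    exact Finset.single_le_sum (f := fun j => ((P.coeff i).coeff j).totalDegree)
      (fun _ _ => Nat.zero_le _) hj
  refine ⟨∑ i ∈ Finset.range (P.natDegree + 1), (b1 i + i), fun s g hdvd j => ?_⟩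
  set Ps := P.map (Polynomial.evalRingHom (algebraMap ℚ (MvPolynomial (Fin r) ℚ) s)) with hPs
  have hPsm : Ps.Monic := hP.map _
  have h1 : (e.symm Ps).totalDegree ≤ ∑ i ∈ Finset.range (P.natDegree + 1), (b1 i + i) := by
    have h2 : Ps.natDegree = P.natDegree := hP.natDegree_map _
    rw [Ps.as_sum_range_C_mul_X_pow, map_sum, h2]
    refine totalDegree_finsetSum_le fun i hi => ?_
    rw [map_mul, map_pow, he, finSuccEquiv_symm_C]
    have hX : (finSuccEquiv ℚ r).symm Polynomial.X = X 0 := by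
      rw [AlgEquiv.symm_apply_eq, finSuccEquiv_X_zero]
    rw [hX]
    refine (totalDegree_mul _ _).trans (le_trans (add_le_add ?_ (totalDegree_X_pow _ _).le)
      (Finset.single_le_sum (f := fun i => b1 i + i) (fun _ _ => Nat.zero_le _) hi))
    refine (totalDegree_rename_le _ _).trans ?_
    rw [hPs, Polynomial.coeff_map, Polynomial.coe_evalRingHom]
    exact hb1' s i
  obtain ⟨q, hq⟩ := hdvd
  have hgq : g * q ≠ 0 := by rw [← hq]; exact hPsm.ne_zero
  have hg0 : e.symm g ≠ 0 := by simpa using left_ne_zero_of_mul hgq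
  have hq0 : e.symm q ≠ 0 := by simpa using right_ne_zero_of_mul hgq
  rw [hq, map_mul, totalDegree_mul_of_isDomain hg0 hq0] at h1
  by_cases hj : g.coeff j = 0
  · rw [hj, totalDegree_zero]; exact Nat.zero_le _
  · have h3 := totalDegree_coeff_finSuccEquiv_add_le (e.symm g) j (by simpa [he] using hj)
    rw [← he, AlgEquiv.apply_symm_apply] at h3
    omega

/-- Polynomials of bounded degree are recovered linearly from their values at finitely many
rational points off a given hypersurface. -/
lemma exists_recovery {r : ℕ} (b : ℕ) (δ : MvPolynomial (Fin r) ℚ) (hδ : δ ≠ 0) :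
    ∃ (Λ : Type) (_ : Fintype Λ) (z : Λ → Fin r → ℚ) (lam : Λ → MvPolynomial (Fin r) ℚ),
      (∀ l, eval (z l) δ ≠ 0) ∧
      ∀ p : MvPolynomial (Fin r) ℚ, p.totalDegree ≤ b → p = ∑ l, eval (z l) p • lam l := by
  classical
  set N := b + δ.totalDegree + 1 with hN
  set Λ := {z : Fin r → Fin N // eval (fun i => ((z i : ℕ) : ℚ)) δ ≠ 0} with hΛ
  set z : Λ → Fin r → ℚ := fun l i => ((l.1 i : ℕ) : ℚ) with hz
  let ev : restrictTotalDegree (Fin r) ℚ b →ₗ[ℚ] (Λ → ℚ) :=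
    LinearMap.pi fun l => (aeval (z l)).toLinearMap.comp (Submodule.subtype _)
  have hev : ∀ p l, ev p l = eval (z l) p.1 := fun p l => by
    simp [ev]
  have hker : LinearMap.ker ev = ⊥ := by
    rw [LinearMap.ker_eq_bot']
    rintro ⟨p, hp⟩ h0
    rw [mem_restrictTotalDegree] at hp
    have hprod : p * δ = 0 := by
      refine eq_zero_of_eval_zero_at_prod_finset (p * δ)
        (fun _ => (Finset.range N).image (fun n : ℕ => (n : ℚ))) (fun i => ?_) fun x hx => ?_
      · rw [Finset.card_image_of_injective _ Nat.cast_injective, Finset.card_range]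
        have := (degreeOf_le_totalDegree (p * δ) i).trans (totalDegree_mul p δ)
        omega
      · simp only [Finset.mem_image, Finset.mem_range] at hx
        choose y hy hyx using hx
        rw [map_mul]
        by_cases hd : eval x δ = 0
        · rw [hd, mul_zero]
        · have hxe : (fun i => (((⟨y i, hy i⟩ : Fin N) : ℕ) : ℚ)) = x := funext hyx
          let l : Λ := ⟨fun i => ⟨y i, hy i⟩, by rw [hxe]; exact hd⟩
          have h1 := congrFun h0 l
          rw [hev] at h1
          have h2 : z l = x := hxe
          rw [h2] at h1
          have h3 : eval x p = 0 := h1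
          rw [h3, zero_mul]
    have := (mul_eq_zero.1 hprod).resolve_right hδ
    exact Subtype.ext this
  obtain ⟨L, hL⟩ := LinearMap.exists_leftInverse_of_injective ev hker
  refine ⟨Λ, inferInstance, z, fun l => (L (Pi.single l 1)).1, fun l => l.2, fun p hp => ?_⟩
  have h1 := congrArg (fun φ => (φ ⟨p, (mem_restrictTotalDegree _ _ _).2 hp⟩).1) hL
  simp only [LinearMap.comp_apply, LinearMap.id_apply] at h1
  have h2 : ev ⟨p, (mem_restrictTotalDegree _ _ _).2 hp⟩ =
      ∑ l, eval (z l) p • (Pi.single l 1 : Λ → ℚ) := by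
    ext l
    rw [hev, Finset.sum_apply]
    rw [Finset.sum_eq_single l]
    · simp
    · intro x _ hx
      simp [Pi.single_eq_of_ne hx.symm]
    · intro h
      exact absurd (Finset.mem_univ l) h
  conv_lhs => rw [← h1]
  rw [h2, map_sum]
  simp only [map_smul, Submodule.coe_sum, Submodule.coe_smul]

lemma exists_eval_ne_zero {A : Type} [CommRing A] [IsDomain A] [Algebra ℚ A] (δ : Polynomial A)
    (hδ : δ ≠ 0) : ∃ s : ℚ, δ.eval (algebraMap ℚ A s) ≠ 0 := by
  by_contra! h
  apply hδ
  refine eq_zero_of_eval_inv δ (Finset.range (δ.natDegree + 1)) (by simp) fun k _ => h _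

lemma exists_shift {A : Type} [CommRing A] (c : A) :
    ∃ sh : Polynomial A ≃+* Polynomial A, (∀ a, sh (Polynomial.C a) = Polynomial.C a) ∧
      sh Polynomial.X = Polynomial.X + Polynomial.C c :=
  ⟨(Polynomial.algEquivAevalXAddC c).toRingEquiv, fun a => by simp, by simp⟩

/-- One-parameter Hilbert irreducibility over a polynomial ring. -/
lemma exists_irreducible_spec_one {r : ℕ} (P : Polynomial (Polynomial (MvPolynomial (Fin r) ℚ)))
    (hP : P.Monic) (hirr : Irreducible P) :
    ∃ s : ℚ, Irreducible (P.map (Polynomial.evalRingHom (algebraMap ℚ _ s))) := by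
  obtain ⟨δ, U, V, hδ, hUV⟩ := exists_separability P hP hirr
  obtain ⟨s0, hs0⟩ := exists_eval_ne_zero δ hδ
  obtain ⟨sh, hshC, hshX⟩ := exists_shift (algebraMap ℚ (MvPolynomial (Fin r) ℚ) s0)
  set P1 := P.map (sh : Polynomial (MvPolynomial (Fin r) ℚ) →+* Polynomial (MvPolynomial (Fin r) ℚ)) with hP1
  have hcomp : ∀ s : ℚ, P1.map (Polynomial.evalRingHom (algebraMap ℚ (MvPolynomial (Fin r) ℚ) s)) =
      P.map (Polynomial.evalRingHom (algebraMap ℚ (MvPolynomial (Fin r) ℚ) (s + s0))) := by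
    intro s
    rw [hP1, Polynomial.map_map]
    congr 1
    apply Polynomial.ringHom_ext <;> simp [hshC, hshX]
  have hP1m : P1.Monic := hP.map _
  have hP1i : Irreducible P1 :=
    (MulEquiv.irreducible_iff (Polynomial.mapEquiv sh)).2 hirr
  obtain ⟨b, hb⟩ := exists_degree_bound P1 hP1m
  obtain ⟨Λ, _, z, lam, hz, hlam⟩ := exists_recovery b _ hs0
  have hsp := sparse_reducible P1 hP1m hP1i (fun l => (aeval (z l) : MvPolynomial (Fin r) ℚ →ₐ[ℚ] ℚ)) lam ?_ ?_
  · obtain ⟨k, -, hk⟩ := hsp.exists_notMem 0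
    simp only [Set.mem_ofPred_eq, not_not] at hk
    rw [hcomp] at hk
    exact ⟨_, hk⟩
  · intro l
    rw [hP1, Polynomial.map_map, Polynomial.map_map]
    refine separable_of_bezout _ P U V δ hUV ?_
    have : (((Polynomial.evalRingHom (0 : ℚ)).comp
        (Polynomial.mapRingHom ((aeval (z l) : MvPolynomial (Fin r) ℚ →ₐ[ℚ] ℚ) : MvPolynomial (Fin r) ℚ →+* ℚ))).comp
        (sh : Polynomial (MvPolynomial (Fin r) ℚ) →+* Polynomial (MvPolynomial (Fin r) ℚ))) δ =
        eval (z l) (δ.eval (algebraMap ℚ (MvPolynomial (Fin r) ℚ) s0)) := by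
      have : ((Polynomial.evalRingHom (0 : ℚ)).comp
        (Polynomial.mapRingHom ((aeval (z l) : MvPolynomial (Fin r) ℚ →ₐ[ℚ] ℚ) : MvPolynomial (Fin r) ℚ →+* ℚ))).comp
        (sh : Polynomial (MvPolynomial (Fin r) ℚ) →+* Polynomial (MvPolynomial (Fin r) ℚ)) =
        (eval (z l)).comp (Polynomial.evalRingHom (algebraMap ℚ (MvPolynomial (Fin r) ℚ) s0)) := by
        apply Polynomial.ringHom_ext
        · intro a
          simp [hshC]
        · simp [hshX]
      rw [this]; rfl
    rw [RingHom.comp_assoc] at this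
    rw [← RingHom.comp_assoc] at this
    rw [this]
    exact hz l
  · intro k g _ hdvd j
    exact hlam _ (hb _ g hdvd j)

/-- **Hilbert irreducibility** in several parameters, for monic polynomials. -/
lemma hilbert_irreducibility : ∀ (r : ℕ) (P : Polynomial (MvPolynomial (Fin r) ℚ)), P.Monic →
    Irreducible P → ∃ z : Fin r → ℚ, Irreducible (P.map (eval z)) := by
  intro r
  induction r with
  | zero =>
    intro P _ hirr
    refine ⟨Fin.elim0, ?_⟩
    have : (eval (Fin.elim0 : Fin 0 → ℚ)) = ((isEmptyAlgEquiv ℚ (Fin 0)).toRingEquiv :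
        MvPolynomial (Fin 0) ℚ →+* ℚ) := by
      apply MvPolynomial.ringHom_ext
      · intro a
        exact RingHom.congr_fun (Subsingleton.elim ((eval (Fin.elim0 : Fin 0 → ℚ)).comp C)
          (((isEmptyAlgEquiv ℚ (Fin 0)).toRingEquiv : MvPolynomial (Fin 0) ℚ →+* ℚ).comp C)) a
      · intro i; exact i.elim0
    rw [this]
    exact (MulEquiv.irreducible_iff
      (Polynomial.mapEquiv (isEmptyAlgEquiv ℚ (Fin 0)).toRingEquiv)).2 hirr
  | succ r ih =>
    intro P hP hirr
    set P' := P.map ((finSuccEquiv ℚ r).toRingEquiv :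
      MvPolynomial (Fin (r + 1)) ℚ →+* Polynomial (MvPolynomial (Fin r) ℚ)) with hP'
    obtain ⟨s, hs⟩ := exists_irreducible_spec_one P' (hP.map _)
      ((MulEquiv.irreducible_iff (Polynomial.mapEquiv (finSuccEquiv ℚ r).toRingEquiv)).2 hirr)
    obtain ⟨z, hz⟩ := ih _ ((hP.map _).map _) hs
    refine ⟨Fin.cons s z, ?_⟩
    convert hz using 1
    rw [Polynomial.map_map, Polynomial.map_map]
    congr 1
    apply MvPolynomial.ringHom_ext'
    · exact Subsingleton.elim _ _
    · intro i
      refine Fin.cases ?_ (fun i => ?_) i <;> simp [finSuccEquiv_X_zero, finSuccEquiv_X_succ]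

/-! ### Taylor expansion and linear forms -/

/-- First order Taylor expansion of a polynomial map. -/
lemma exists_taylor {m : ℕ} {B : Type*} [CommRing B] [Algebra ℚ B] (f : MvPolynomial (Fin m) ℚ)
    (y s : Fin m → B) (ε : B) :
    ∃ R : B, aeval (fun j => y j + ε * s j) f =
      aeval y f + ε * (∑ j, aeval y (pderiv j f) * s j) + ε ^ 2 * R := by
  induction f using MvPolynomial.induction_on with
  | C c => exact ⟨0, by simp⟩
  | add p q hp hq =>
    obtain ⟨R, hR⟩ := hp
    obtain ⟨S, hS⟩ := hq
    refine ⟨R + S, ?_⟩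
    simp only [map_add, hR, hS, add_mul, Finset.sum_add_distrib]
    ring
  | mul_X p i hp =>
    obtain ⟨R, hR⟩ := hp
    have h1 : ∑ j, aeval y (pderiv j (p * X i)) * s j =
        (∑ j, aeval y (pderiv j p) * s j) * y i + aeval y p * s i := by
      simp only [Derivation.leibniz, smul_eq_mul, map_add, map_mul, aeval_X, add_mul,
        Finset.sum_add_distrib, pderiv_X]
      rw [add_comm]
      congr 1
      · rw [Finset.sum_mul]
        exact Finset.sum_congr rfl fun j _ => by ring
      · rw [Finset.sum_eq_single i]
        · simp
        · intro j _ hj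
          simp [Ne.symm hj]
        · intro h
          exact absurd (Finset.mem_univ i) h
    refine ⟨R * (y i + ε * s i) + (∑ j, aeval y (pderiv j p) * s j) * s i, ?_⟩
    rw [h1, map_mul, map_mul, hR, aeval_X, aeval_X]
    ring

lemma coeff_aeval_homogeneous {m d : ℕ} {A : Type*} [CommRing A] [Algebra ℚ A]
    {f : MvPolynomial (Fin m) ℚ} (hf : f.IsHomogeneous d) (y : Fin m → Polynomial A) (E : ℕ)
    (hy : ∀ l, (y l).natDegree ≤ E) :
    (aeval y f).natDegree ≤ d * E ∧
      (aeval y f).coeff (d * E) = aeval (fun l => (y l).coeff E) f := by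
  have key : ∀ s : Fin m →₀ ℕ, ∀ T : Finset (Fin m),
      (∏ i ∈ T, y i ^ s i).natDegree ≤ (∑ i ∈ T, s i) * E ∧
      (∏ i ∈ T, y i ^ s i).coeff ((∑ i ∈ T, s i) * E) = ∏ i ∈ T, (y i).coeff E ^ s i := by
    classical
    intro s T
    induction T using Finset.induction_on with
    | empty => simp
    | insert i T hi ih =>
      rw [Finset.prod_insert hi, Finset.sum_insert hi, Finset.prod_insert hi, add_mul]
      have h1 : (y i ^ s i).natDegree ≤ s i * E := Polynomial.natDegree_pow_le_of_le _ (hy i)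
      refine ⟨Polynomial.natDegree_mul_le_of_le h1 ih.1, ?_⟩
      rw [Polynomial.coeff_mul_add_eq_of_natDegree_le h1 ih.1, ih.2,
        Polynomial.coeff_pow_of_natDegree_le (hy i)]
  have hs : ∀ s ∈ f.support, ∑ i, s i = d := by
    intro s hs
    have := hf (mem_support_iff.1 hs)
    rw [← this, Finsupp.weight_apply, Finsupp.sum_fintype]
    · simp
    · simp
  rw [aeval_def, eval₂_eq', aeval_def, eval₂_eq']
  constructor
  · refine Polynomial.natDegree_sum_le_of_forall_le _ _ fun s h => ?_
    rw [IsScalarTower.algebraMap_apply ℚ A (Polynomial A), Polynomial.algebraMap_eq]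
    refine (Polynomial.natDegree_C_mul_le _ _).trans ?_
    have := (key s Finset.univ).1
    rwa [hs s h] at this
  · rw [Polynomial.finsetSum_coeff]
    refine Finset.sum_congr rfl fun s h => ?_
    rw [IsScalarTower.algebraMap_apply ℚ A (Polynomial A), Polynomial.algebraMap_eq,
      Polynomial.coeff_C_mul]
    have := (key s Finset.univ).2
    rw [hs s h] at this
    rw [this]

/-- The value of the rational linear form with coefficients `l` at the tuple `y`. -/
def lin {m : ℕ} {B : Type*} [CommRing B] [Algebra ℚ B] (l : Fin m → ℚ) (y : Fin m → B) : B :=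
  ∑ j, algebraMap ℚ B (l j) * y j

/-- The linear form with coefficients `l` as a polynomial. -/
def linPoly {m : ℕ} (l : Fin m → ℚ) : MvPolynomial (Fin m) ℚ := ∑ j, C (l j) * X j

section lin
variable {m : ℕ} {B B' : Type*} [CommRing B] [Algebra ℚ B] [CommRing B'] [Algebra ℚ B']

lemma aeval_linPoly (l : Fin m → ℚ) (y : Fin m → B) : aeval y (linPoly l) = lin l y := by
  simp [linPoly, lin, algHom_C]

lemma eval_linPoly (l y : Fin m → ℚ) : eval y (linPoly l) = lin l y := by
  simp [linPoly, lin]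

lemma linPoly_homogeneous (l : Fin m → ℚ) : (linPoly l).IsHomogeneous 1 :=
  IsHomogeneous.sum _ _ _ fun j _ => by
    simpa using (isHomogeneous_C _ (l j)).mul (isHomogeneous_X ℚ j)

lemma lin_add (l : Fin m → ℚ) (y z : Fin m → B) :
    lin l (fun j => y j + z j) = lin l y + lin l z := by
  simp [lin, mul_add, Finset.sum_add_distrib]

lemma lin_mul_left (l : Fin m → ℚ) (y : Fin m → B) (c : B) :
    lin l (fun j => c * y j) = c * lin l y := by
  simp only [lin, Finset.mul_sum]
  exact Finset.sum_congr rfl fun j _ => by ring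

lemma lin_mul_right (l : Fin m → ℚ) (y : Fin m → B) (c : B) :
    lin l (fun j => y j * c) = lin l y * c := by
  simp only [lin, Finset.sum_mul]
  exact Finset.sum_congr rfl fun j _ => by ring

lemma lin_sum {ι : Type*} (s : Finset ι) (l : Fin m → ℚ) (y : ι → Fin m → B) :
    lin l (fun j => ∑ k ∈ s, y k j) = ∑ k ∈ s, lin l (y k) := by
  simp only [lin, Finset.mul_sum]
  exact Finset.sum_comm

lemma lin_algHom (θ : B →ₐ[ℚ] B') (l : Fin m → ℚ) (y : Fin m → B) :
    lin l (fun j => θ (y j)) = θ (lin l y) := by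
  simp [lin]

lemma lin_algebraMap (l y : Fin m → ℚ) :
    lin l (fun j => algebraMap ℚ B (y j)) = algebraMap ℚ B (lin l y) := by
  simp [lin]

end lin

/-! ### Curves through given points of the cone -/

/-- The data of a family of curves `x ↦ ψ(x) + M(x) (x ^ a v + s)` in affine space, where the
parameter `s` satisfies `l1 s = l2 s = 0`. These curves meet the cone `f = 0` in the zeros of `M` and
in `d (a + deg M) - deg M` further points.

The vector `v` lies off the cone and spans, with the other common zeros of `l1` and `l2`, the fibre
directions of the projection `l1 / l2`; `b1`, `b2` are dual to `l1`, `l2`. Every curve of the family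
is a section of this projection, since `l1 ψ = x` and `l2 ψ = 1`. By `hcop`, the direction `v` is
transversal to the cone at the points `ψ(x)` with `M(x) = 0`. The conditions on `a` make the term
`x ^ a v` dominate all others. -/
structure Datum {m : ℕ} (d : ℕ) (f : MvPolynomial (Fin m) ℚ) where
  v : Fin m → ℚ
  l1 : Fin m → ℚ
  l2 : Fin m → ℚ
  b1 : Fin m → ℚ
  b2 : Fin m → ℚ
  M : Polynomial ℚ
  psi : Fin m → Polynomial ℚ
  a : ℕ
  hirr : Irreducible f
  hhom : f.IsHomogeneous d
  hv : eval v f ≠ 0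
  l1v : lin l1 v = 0
  l2v : lin l2 v = 0
  l1b1 : lin l1 b1 = 1
  l1b2 : lin l1 b2 = 0
  l2b1 : lin l2 b1 = 0
  l2b2 : lin l2 b2 = 1
  hM : M.Monic
  l1psi : lin l1 psi = Polynomial.X
  l2psi : lin l2 psi = 1
  hdvd : M ∣ aeval psi f
  hcop : IsCoprime M (∑ j, aeval psi (pderiv j f) * Polynomial.C (v j))
  ha : 2 ≤ a
  hpsi : ∀ l, (psi l).natDegree < a + M.natDegree
  hbig : M.natDegree + M.natDegree < d * (a + M.natDegree)

namespace Datum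
variable {m d : ℕ} {f : MvPolynomial (Fin m) ℚ} (D : Datum d f)
variable {A A' : Type} [CommRing A] [Algebra ℚ A] [CommRing A'] [Algebra ℚ A']

/-- The number of moving intersection points. -/
def deg : ℕ := d * (D.a + D.M.natDegree) - D.M.natDegree

/-- The parametrised curve with parameter `s`. -/
def phi (s : Fin m → A) (l : Fin m) : Polynomial A :=
  (D.psi l).map (algebraMap ℚ A) + D.M.map (algebraMap ℚ A) *
    (Polynomial.X ^ D.a * Polynomial.C (algebraMap ℚ A (D.v l)) + Polynomial.C (s l))

/-- The monic polynomial whose zeros are the moving intersection points of the curve `phi s` with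
the cone `f = 0`. -/
def quo (s : Fin m → A) : Polynomial A :=
  (Polynomial.C (algebraMap ℚ A (eval D.v f)⁻¹) * aeval (D.phi s) f) /ₘ
    (D.M.map (algebraMap ℚ A))

lemma map_algebraMap (θ : A →ₐ[ℚ] A') (p : Polynomial ℚ) :
    (p.map (algebraMap ℚ A)).map (θ : A →+* A') = p.map (algebraMap ℚ A') := by
  rw [Polynomial.map_map, AlgHom.comp_algebraMap]

lemma phi_map (θ : A →ₐ[ℚ] A') (s : Fin m → A) (l : Fin m) :
    (D.phi s l).map (θ : A →+* A') = D.phi (fun l => θ (s l)) l := by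
  simp only [phi, Polynomial.map_add, Polynomial.map_mul, Polynomial.map_pow, Polynomial.map_X,
    Polynomial.map_C, map_algebraMap, RingHom.coe_coe, AlgHom.commutes]

lemma aeval_map (θ : A →ₐ[ℚ] A') (y : Fin m → Polynomial A) (g : MvPolynomial (Fin m) ℚ) :
    (aeval y g).map (θ : A →+* A') = aeval (fun l => (y l).map (θ : A →+* A')) g := by
  have := comp_aeval_apply y (Polynomial.mapAlgHom θ) g
  simpa using this

lemma aeval_phi_map (θ : A →ₐ[ℚ] A') (s : Fin m → A) (g : MvPolynomial (Fin m) ℚ) :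
    (aeval (D.phi s) g).map (θ : A →+* A') = aeval (D.phi fun l => θ (s l)) g := by
  rw [aeval_map]
  simp only [phi_map]

lemma quo_map (θ : A →ₐ[ℚ] A') (s : Fin m → A) :
    (D.quo s).map (θ : A →+* A') = D.quo (fun l => θ (s l)) := by
  rw [quo, Polynomial.map_divByMonic _ (D.hM.map _), Polynomial.map_mul, aeval_phi_map,
    map_algebraMap, Polynomial.map_C, quo]
  simp only [RingHom.coe_coe, AlgHom.commutes]

lemma exists_expansion (s : Fin m → A) :
    ∃ R : Polynomial A, aeval (D.phi s) f = D.M.map (algebraMap ℚ A) * (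
      (aeval D.psi f /ₘ D.M).map (algebraMap ℚ A) +
      (∑ j, (aeval D.psi (pderiv j f)).map (algebraMap ℚ A) *
      (Polynomial.X ^ D.a * Polynomial.C (algebraMap ℚ A (D.v j)) + Polynomial.C (s j))) +
      D.M.map (algebraMap ℚ A) * R) := by
  have h0 : aeval D.psi f = D.M * (aeval D.psi f /ₘ D.M) := by
    have h1 := Polynomial.modByMonic_add_div (aeval D.psi f) D.M
    rw [(Polynomial.modByMonic_eq_zero_iff_dvd D.hM).2 D.hdvd, zero_add] at h1
    exact h1.symm
  obtain ⟨R, hR⟩ := exists_taylor f (fun j => (D.psi j).map (algebraMap ℚ A))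
    (fun j => Polynomial.X ^ D.a * Polynomial.C (algebraMap ℚ A (D.v j)) + Polynomial.C (s j))
    (D.M.map (algebraMap ℚ A))
  have h2 : ∀ g, aeval (fun j => (D.psi j).map (algebraMap ℚ A)) g =
      (aeval D.psi g).map (algebraMap ℚ A) := fun g => by
    have := aeval_map (Algebra.ofId ℚ A) D.psi g
    exact this.symm
  refine ⟨R, ?_⟩
  have h3 : D.phi s = fun j => (D.psi j).map (algebraMap ℚ A) + (D.M.map (algebraMap ℚ A)) *
    (Polynomial.X ^ D.a * Polynomial.C (algebraMap ℚ A (D.v j)) + Polynomial.C (s j)) := rfl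
  rw [h3, hR]
  simp only [h2]
  have h4 : (aeval D.psi f).map (algebraMap ℚ A) = D.M.map (algebraMap ℚ A) *
      (aeval D.psi f /ₘ D.M).map (algebraMap ℚ A) := by
    rw [← Polynomial.map_mul, ← h0]
  rw [h4]
  ring

lemma natDegree_phi (s : Fin m → A) (l : Fin m) :
    (D.phi s l).natDegree ≤ D.a + D.M.natDegree ∧
      (D.phi s l).coeff (D.a + D.M.natDegree) = algebraMap ℚ A (D.v l) := by
  have h1 : ((D.psi l).map (algebraMap ℚ A)).natDegree < D.a + D.M.natDegree :=
    Polynomial.natDegree_map_le.trans_lt (D.hpsi l)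
  have h2 : (D.M.map (algebraMap ℚ A)).natDegree ≤ D.M.natDegree := Polynomial.natDegree_map_le
  have h3 : (Polynomial.X ^ D.a * Polynomial.C (algebraMap ℚ A (D.v l)) +
      Polynomial.C (s l)).natDegree ≤ D.a := by
    refine Polynomial.natDegree_add_le_of_degree_le ?_ ((Polynomial.natDegree_C _).le.trans
      (Nat.zero_le _))
    exact (Polynomial.natDegree_mul_C_le _ _).trans (Polynomial.natDegree_X_pow_le _)
  have h4 : (Polynomial.X ^ D.a * Polynomial.C (algebraMap ℚ A (D.v l)) +
      Polynomial.C (s l)).coeff D.a = algebraMap ℚ A (D.v l) := by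
    have := D.ha
    rw [Polynomial.coeff_add, Polynomial.coeff_mul_C, Polynomial.coeff_X_pow_self,
      Polynomial.coeff_C_of_ne_zero (by omega), one_mul, add_zero]
  constructor
  · rw [phi, add_comm D.a]
    refine Polynomial.natDegree_add_le_of_degree_le (by omega) ?_
    exact Polynomial.natDegree_mul_le_of_le h2 h3
  · rw [phi, Polynomial.coeff_add, Polynomial.coeff_eq_zero_of_natDegree_lt h1, zero_add,
      add_comm D.a, Polynomial.coeff_mul_add_eq_of_natDegree_le h2 h3, h4, Polynomial.coeff_map,
      D.hM.coeff_natDegree, map_one, one_mul]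

lemma monic_aeval_phi (s : Fin m → A) [Nontrivial A] :
    (Polynomial.C (algebraMap ℚ A (eval D.v f)⁻¹) * aeval (D.phi s) f).Monic ∧
    (Polynomial.C (algebraMap ℚ A (eval D.v f)⁻¹) * aeval (D.phi s) f).natDegree =
      d * (D.a + D.M.natDegree) := by
  obtain ⟨h1, h2⟩ := coeff_aeval_homogeneous D.hhom (D.phi s) _ fun l => (D.natDegree_phi s l).1
  have h3 : (aeval fun l => (D.phi s l).coeff (D.a + D.M.natDegree)) f =
      algebraMap ℚ A (eval D.v f) := by
    simp only [(D.natDegree_phi s _).2]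
    exact aeval_algebraMap_apply A D.v f
  have h4 : (Polynomial.C (algebraMap ℚ A (eval D.v f)⁻¹) * aeval (D.phi s) f).coeff
      (d * (D.a + D.M.natDegree)) = 1 := by
    rw [Polynomial.coeff_C_mul, h2, h3, ← map_mul, inv_mul_cancel₀ D.hv, map_one]
  have h5 := (Polynomial.natDegree_C_mul_le (algebraMap ℚ A (eval D.v f)⁻¹)
    (aeval (D.phi s) f)).trans h1
  exact ⟨Polynomial.monic_of_natDegree_le_of_coeff_eq_one _ h5 h4,
    Polynomial.natDegree_eq_of_le_of_coeff_ne_zero h5 (by rw [h4]; exact one_ne_zero)⟩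

lemma mul_quo (s : Fin m → A) :
    D.M.map (algebraMap ℚ A) * D.quo s =
      Polynomial.C (algebraMap ℚ A (eval D.v f)⁻¹) * aeval (D.phi s) f := by
  have h1 := Polynomial.modByMonic_add_div
    (Polynomial.C (algebraMap ℚ A (eval D.v f)⁻¹) * aeval (D.phi s) f) (D.M.map (algebraMap ℚ A))
  obtain ⟨R, hR⟩ := D.exists_expansion s
  rw [(Polynomial.modByMonic_eq_zero_iff_dvd (D.hM.map _)).2, zero_add] at h1
  · exact h1
  · rw [hR]
    exact (dvd_mul_right _ _).mul_left _

lemma aeval_phi (s : Fin m → A) : aeval (D.phi s) f =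
    Polynomial.C (algebraMap ℚ A (eval D.v f)) * (D.M.map (algebraMap ℚ A) * D.quo s) := by
  rw [mul_quo, ← mul_assoc, ← Polynomial.C_mul, ← map_mul, mul_inv_cancel₀ D.hv, map_one,
    Polynomial.C_1, one_mul]

lemma quo_monic [Nontrivial A] (s : Fin m → A) : (D.quo s).Monic := by
  have := (D.monic_aeval_phi s).1
  rw [← mul_quo] at this
  exact (D.hM.map _).of_mul_monic_left this

lemma quo_natDegree [Nontrivial A] (s : Fin m → A) : (D.quo s).natDegree = D.deg := by
  have := (D.monic_aeval_phi s).2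
  rw [← mul_quo, (D.hM.map _).natDegree_mul (D.quo_monic s), D.hM.natDegree_map] at this
  rw [deg, ← this]
  omega

/-- For a suitable parameter on the line spanned by `v`, the moving intersection points are
disjoint from the zeros of `M`. -/
lemma exists_coprime : ∃ t : ℚ, IsCoprime D.M (D.quo fun l => t * D.v l) := by
  classical
  set Q := aeval D.psi f /ₘ D.M
  set B := ∑ j, aeval D.psi (pderiv j f) * Polynomial.C (D.v j) with hB
  have hfin : ∃ t : ℚ, algebraMap ℚ Qbar t ∉ (D.M.aroots Qbar).toFinset.image (fun α =>
      - α ^ D.a - Polynomial.aeval α Q / Polynomial.aeval α B) := by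
    obtain ⟨x, ⟨t, rfl⟩, ht⟩ := (Set.infinite_range_of_injective
      (algebraMap ℚ Qbar).injective).exists_notMem_finset ((D.M.aroots Qbar).toFinset.image
        (fun α => - α ^ D.a - Polynomial.aeval α Q / Polynomial.aeval α B))
    exact ⟨t, ht⟩
  obtain ⟨t, ht⟩ := hfin
  refine ⟨t, ?_⟩
  rw [Polynomial.isCoprime_iff_aeval_ne_zero_of_isAlgClosed ℚ Qbar]
  intro α
  by_contra! hα
  have hBα : Polynomial.aeval α B ≠ 0 :=
    ((Polynomial.isCoprime_iff_aeval_ne_zero_of_isAlgClosed ℚ Qbar _ _).1 D.hcop α).resolve_left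
      (not_not.2 hα.1)
  obtain ⟨R, hR⟩ := D.exists_expansion (A := ℚ) (fun l => t * D.v l)
  rw [aeval_phi] at hR
  simp only [Algebra.algebraMap_self, Polynomial.map_id, RingHom.id_apply] at hR
  rw [mul_left_comm] at hR
  have h1 := mul_left_cancel₀ D.hM.ne_zero hR
  have h2 : (∑ j, aeval D.psi (pderiv j f) *
      (Polynomial.X ^ D.a * Polynomial.C (D.v j) + Polynomial.C (t * D.v j))) =
      B * (Polynomial.X ^ D.a + Polynomial.C t) := by
    rw [hB, Finset.sum_mul]
    refine Finset.sum_congr rfl fun j _ => ?_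
    rw [Polynomial.C_mul]
    ring
  rw [h2] at h1
  have h3 := congrArg (Polynomial.aeval α) h1
  simp only [map_mul, map_add, hα.1, hα.2, mul_zero, zero_mul, add_zero, Polynomial.aeval_C,
    map_pow, Polynomial.aeval_X] at h3
  apply ht
  rw [Finset.mem_image]
  refine ⟨α, ?_, ?_⟩
  · rw [Multiset.mem_toFinset, Polynomial.mem_aroots]
    exact ⟨D.hM.ne_zero, hα.1⟩
  · field_simp
    linear_combination h3

lemma lin_phi (l : Fin m → ℚ) (s : Fin m → A) : lin l (D.phi s) =
    (lin l D.psi).map (algebraMap ℚ A) + D.M.map (algebraMap ℚ A) *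
    (Polynomial.X ^ D.a * Polynomial.C (algebraMap ℚ A (lin l D.v)) + Polynomial.C (lin l s)) := by
  have h1 : ∀ j, D.phi s j = (Polynomial.mapAlgHom (Algebra.ofId ℚ A) (D.psi j)) +
    D.M.map (algebraMap ℚ A) *
    (Polynomial.X ^ D.a * (algebraMap ℚ (Polynomial A) (D.v j)) +
      (Polynomial.CAlgHom (R := ℚ) (s j))) := fun j => rfl
  rw [show D.phi s = fun j => (Polynomial.mapAlgHom (Algebra.ofId ℚ A) (D.psi j)) +
    D.M.map (algebraMap ℚ A) *
    (Polynomial.X ^ D.a * (algebraMap ℚ (Polynomial A) (D.v j)) +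
      (Polynomial.CAlgHom (R := ℚ) (s j))) from funext h1, lin_add, lin_mul_left, lin_add,
      lin_mul_left, lin_algebraMap, lin_algHom, lin_algHom]
  rfl

lemma lin1_phi (s : Fin m → A) (hs : lin D.l1 s = 0) : lin D.l1 (D.phi s) = Polynomial.X := by
  rw [lin_phi, hs, D.l1v, D.l1psi]; simp

lemma lin2_phi (s : Fin m → A) (hs : lin D.l2 s = 0) : lin D.l2 (D.phi s) = 1 := by
  rw [lin_phi, hs, D.l2v, D.l2psi]; simp

end Datum

/-! ### Irreducibility of the generic moving part -/

lemma lin_sub {m : ℕ} {B : Type*} [CommRing B] [Algebra ℚ B] (l : Fin m → ℚ) (y z : Fin m → B) :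
    lin l (fun j => y j - z j) = lin l y - lin l z := by
  simp [lin, mul_sub, Finset.sum_sub_distrib]

lemma aeval_homogeneous_mul {m d : ℕ} {B : Type*} [CommRing B] [Algebra ℚ B]
    {g : MvPolynomial (Fin m) ℚ} (hg : g.IsHomogeneous d) (t : B) (y : Fin m → B) :
    aeval (fun j => t * y j) g = t ^ d * aeval y g := by
  rw [aeval_def, eval₂_eq', aeval_def, eval₂_eq', Finset.mul_sum]
  refine Finset.sum_congr rfl fun s hs => ?_
  have : ∑ i, s i = d := by
    have := hg (mem_support_iff.1 hs)
    rw [← this, Finsupp.weight_apply, Finsupp.sum_fintype]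
    · simp
    · simp
  simp only [mul_pow, Finset.prod_mul_distrib, Finset.prod_pow_eq_pow_sum, this]
  ring

/-- A linear form with rational coefficients as a linear functional. -/
def linMap {m : ℕ} (l : Fin m → ℚ) : (Fin m → ℚ) →ₗ[ℚ] ℚ where
  toFun c := lin l c
  map_add' y z := lin_add l y z
  map_smul' c y := lin_mul_left l y c

lemma exists_lin_eq {m : ℕ} (L : (Fin m → ℚ) →ₗ[ℚ] ℚ) : ∃ l : Fin m → ℚ, ∀ c, lin l c = L c := by
  refine ⟨fun j => L fun i => if j = i then 1 else 0, fun c => ?_⟩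
  rw [LinearMap.pi_apply_eq_sum_univ L c]
  exact Finset.sum_congr rfl fun j _ => mul_comm _ _

/-- The subalgebra of values at `y` of homogeneous polynomials, for a tuple `y` on the affine
hyperplane `l = 1`. It is closed under addition since forms of different degrees can be multiplied
by powers of `l`. -/
def homValues {m : ℕ} {B : Type*} [CommRing B] [Algebra ℚ B] (l : Fin m → ℚ) (y : Fin m → B)
    (h : lin l y = 1) : Subalgebra ℚ B where
  carrier := {b | ∃ (e : ℕ) (g : MvPolynomial (Fin m) ℚ), g.IsHomogeneous e ∧ aeval y g = b}
  mul_mem' := by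
    rintro _ _ ⟨e, g, hg, rfl⟩ ⟨e', g', hg', rfl⟩
    exact ⟨e + e', g * g', hg.mul hg', map_mul _ _ _⟩
  add_mem' := by
    rintro _ _ ⟨e, g, hg, rfl⟩ ⟨e', g', hg', rfl⟩
    refine ⟨e + e', g * linPoly l ^ e' + g' * linPoly l ^ e, ?_, ?_⟩
    · have h1 := hg.mul ((linPoly_homogeneous l).pow e')
      have h2 := hg'.mul ((linPoly_homogeneous l).pow e)
      rw [one_mul] at h1 h2
      rw [add_comm e' e] at h2
      exact h1.add h2
    · simp [aeval_linPoly, h]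
  algebraMap_mem' c := ⟨0, C c, isHomogeneous_C _ _, algHom_C _ _⟩

namespace Datum
variable {m d : ℕ} {f : MvPolynomial (Fin m) ℚ} (D : Datum d f)

/-- Linear coordinates on the common kernel of `l1` and `l2`. -/
lemma exists_coords : ∃ (r : ℕ) (u mu : Fin r → Fin m → ℚ),
    (∀ k, lin D.l1 (u k) = 0) ∧ (∀ k, lin D.l2 (u k) = 0) ∧
    (∀ k l, lin (mu k) (u l) = if k = l then 1 else 0) ∧
    ∀ c : Fin m → ℚ, lin D.l1 c = 0 → lin D.l2 c = 0 → ∀ j, c j = ∑ k, lin (mu k) c * u k j := by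
  classical
  let U : Submodule ℚ (Fin m → ℚ) := LinearMap.ker (linMap D.l1) ⊓ LinearMap.ker (linMap D.l2)
  have hU : ∀ c, c ∈ U ↔ lin D.l1 c = 0 ∧ lin D.l2 c = 0 := fun c => Iff.rfl
  let B := Module.finBasis ℚ U
  obtain ⟨π, hπ⟩ := LinearMap.exists_leftInverse_of_injective U.subtype U.ker_subtype
  have hπ' : ∀ x : U, π x.1 = x := fun x => LinearMap.congr_fun hπ x
  choose mu hmu using fun k => exists_lin_eq ((B.coord k).comp π)
  refine ⟨_, fun k => (B k).1, mu, fun k => ((hU _).1 (B k).2).1, fun k => ((hU _).1 (B k).2).2,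
    fun k l => ?_, fun c h1 h2 j => ?_⟩
  · rw [hmu, LinearMap.comp_apply, hπ', Module.Basis.coord_apply, Module.Basis.repr_self,
      Finsupp.single_apply]
    simp only [eq_comm]
  · have h3 := B.sum_repr ⟨c, (hU c).2 ⟨h1, h2⟩⟩
    have h4 := congrArg (fun x : U => x.1 j) h3
    simp only [Submodule.coe_sum, Submodule.coe_smul, Finset.sum_apply, Pi.smul_apply,
      smul_eq_mul] at h4
    rw [← h4]
    refine Finset.sum_congr rfl fun k _ => ?_
    rw [hmu, LinearMap.comp_apply, Module.Basis.coord_apply]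
    congr 3
    exact (hπ' ⟨c, (hU c).2 ⟨h1, h2⟩⟩).symm

section generic
variable {r : ℕ} (u mu : Fin r → Fin m → ℚ)

/-- The generic parameter `∑ Z_k u_k`. -/
def gen (u : Fin r → Fin m → ℚ) (j : Fin m) : MvPolynomial (Fin r) ℚ := ∑ k, X k * C (u k j)

lemma lin_gen (l : Fin m → ℚ) : lin l (gen u) = ∑ k, X k * C (lin l (u k)) := by
  have : gen u = fun j => ∑ k, X k * algebraMap ℚ (MvPolynomial (Fin r) ℚ) (u k j) := rfl
  rw [this, lin_sum]
  simp only [lin_mul_left, lin_algebraMap]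
  rfl

lemma eval_gen (Z : Fin r → ℚ) (j : Fin m) :
    (aeval Z : MvPolynomial (Fin r) ℚ →ₐ[ℚ] ℚ) (gen u j) = ∑ k, Z k * u k j := by
  simp [gen]

/-- A homogeneous polynomial vanishing on the generic curve is zero: the curves sweep out a dense
set of the hyperplane `l2 = 1`. -/
lemma eq_zero_of_aeval_gen (h1 : ∀ k, lin D.l1 (u k) = 0) (h2 : ∀ k, lin D.l2 (u k) = 0)
    (hmu : ∀ k l, lin (mu k) (u l) = if k = l then 1 else 0)
    (hc : ∀ c : Fin m → ℚ, lin D.l1 c = 0 → lin D.l2 c = 0 → ∀ j, c j = ∑ k, lin (mu k) c * u k j)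
    {e : ℕ} {g : MvPolynomial (Fin m) ℚ} (hg : g.IsHomogeneous e)
    (h0 : aeval (D.phi (gen u)) g = 0) : g = 0 := by
  have hl1 : lin D.l1 (gen u) = 0 := by simp [lin_gen, h1]
  have hl2 : lin D.l2 (gen u) = 0 := by simp [lin_gen, h2]
  have hlm : ∀ k, lin (mu k) (gen u) = X k := fun k => by
    simp [lin_gen, hmu]
  -- rational points with `l2 c ≠ 0` and `M (l1 c / l2 c) ≠ 0` are scalar multiples of curve points
  have key : ∀ c : Fin m → ℚ, lin D.l2 c ≠ 0 → D.M.eval (lin D.l1 c / lin D.l2 c) ≠ 0 →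
      eval c g = 0 := by
    intro c hy hM
    set y := lin D.l2 c with hyd
    set x := lin D.l1 c / y with hx
    let c' : Fin m → ℚ := fun j => y⁻¹ * c j
    let Z : Fin r → ℚ := fun k => (lin (mu k) c' - (lin (mu k) D.psi).eval x) / D.M.eval x -
      x ^ D.a * lin (mu k) D.v
    let θ : Polynomial (MvPolynomial (Fin r) ℚ) →ₐ[ℚ] ℚ :=
      (Polynomial.aeval x).comp (Polynomial.mapAlgHom (aeval Z))
    have hθ : ∀ j, θ (D.phi (gen u) j) = c' j := by
      have e1 : lin D.l1 c' = x := by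
        change lin D.l1 (fun j => y⁻¹ * c j) = x
        rw [lin_mul_left, hx]; ring
      have e2 : lin D.l2 c' = 1 := by
        change lin D.l2 (fun j => y⁻¹ * c j) = 1
        rw [lin_mul_left, ← hyd, inv_mul_cancel₀ hy]
      have w := hc (fun j => c' j - θ (D.phi (gen u) j)) ?_ ?_
      · intro j
        have w1 := w j
        rw [Finset.sum_eq_zero] at w1
        · linarith
        · intro k _
          rw [lin_sub, lin_algHom, lin_phi, hlm]
          have : lin (mu k) c' - θ ((lin (mu k) D.psi).map
              (algebraMap ℚ (MvPolynomial (Fin r) ℚ)) +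
              D.M.map (algebraMap ℚ (MvPolynomial (Fin r) ℚ)) * (Polynomial.X ^ D.a *
              Polynomial.C (algebraMap ℚ (MvPolynomial (Fin r) ℚ) (lin (mu k) D.v)) +
              Polynomial.C (X k))) = 0 := by
            have e3 : ∀ p : Polynomial ℚ, θ (p.map (algebraMap ℚ (MvPolynomial (Fin r) ℚ))) =
                p.eval x := by
              intro p
              have := map_algebraMap (aeval Z : MvPolynomial (Fin r) ℚ →ₐ[ℚ] ℚ) p
              simp only [Algebra.algebraMap_self, Polynomial.map_id] at this
              rw [← Polynomial.coe_aeval_eq_eval]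
              exact congrArg (Polynomial.aeval x) this
            have e4 : ∀ p : MvPolynomial (Fin r) ℚ, θ (Polynomial.C p) = eval Z p := by
              intro p
              simp [θ]
            have e5 : θ Polynomial.X = x := by simp [θ]
            rw [map_add, map_mul, map_add, map_mul, map_pow, e3, e3, e4, e4, e5, eval_X]
            simp only [algebraMap_eq, eval_C, Z]
            field_simp
            ring
          rw [this, zero_mul]
      · rw [lin_sub, lin_algHom, D.lin1_phi _ hl1, e1]
        simp [θ]
      · rw [lin_sub, lin_algHom, D.lin2_phi _ hl2, e2]
        simp
    have hc' : aeval c' g = 0 := by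
      have := comp_aeval_apply (D.phi (gen u)) θ g
      rw [h0, map_zero] at this
      simp only [hθ] at this
      exact this.symm
    have hcc : c = fun j => y * c' j := by
      funext j
      simp only [c']
      field_simp
    have h5 := aeval_homogeneous_mul hg y c'
    rw [hc', mul_zero, ← hcc] at h5
    exact h5
  let Mh : MvPolynomial (Fin m) ℚ := ∑ i ∈ Finset.range (D.M.natDegree + 1),
    C (D.M.coeff i) * linPoly D.l1 ^ i * linPoly D.l2 ^ (D.M.natDegree - i)
  have hMh : ∀ c, eval c Mh = ∑ i ∈ Finset.range (D.M.natDegree + 1),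
    D.M.coeff i * lin D.l1 c ^ i * lin D.l2 c ^ (D.M.natDegree - i) := by
    intro c
    simp [Mh, eval_linPoly]
  have hMh0 : Mh ≠ 0 := by
    intro h
    have := hMh D.b1
    rw [h, map_zero, Finset.sum_eq_single D.M.natDegree, D.l1b1, D.hM.coeff_natDegree] at this
    · simp at this
    · intro i hi hne
      have : D.M.natDegree - i ≠ 0 := by
        have := Finset.mem_range.1 hi
        omega
      rw [D.l2b1, zero_pow this, mul_zero]
    · simp
  have hL0 : linPoly D.l2 ≠ 0 := by
    intro h
    have := eval_linPoly D.l2 D.b2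
    rw [h, map_zero, D.l2b2] at this
    exact zero_ne_one this
  have hprod : g * (linPoly D.l2 * Mh) = 0 := by
    apply MvPolynomial.funext
    intro c
    rw [map_mul, map_mul, map_zero]
    by_cases hy : lin D.l2 c = 0
    · rw [eval_linPoly, hy]; ring
    by_cases hM : D.M.eval (lin D.l1 c / lin D.l2 c) = 0
    · have : eval c Mh = lin D.l2 c ^ D.M.natDegree * D.M.eval (lin D.l1 c / lin D.l2 c) := by
        rw [hMh, Polynomial.eval_eq_sum_range, Finset.mul_sum]
        refine Finset.sum_congr rfl fun i hi => ?_
        have hi' : i ≤ D.M.natDegree := by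
          have := Finset.mem_range.1 hi
          omega
        rw [div_pow]
        field_simp
        rw [mul_assoc, mul_assoc, mul_comm (_ ^ (_ - _)) , mul_assoc, ← pow_add,
          Nat.add_sub_of_le hi']
      rw [this, hM]; ring
    · rw [key c hy hM, zero_mul]
  exact (mul_eq_zero.1 hprod).resolve_right (mul_ne_zero hL0 hMh0)

/-- Up to powers of `M`, every polynomial is a homogeneous function of the generic curve. -/
lemma exists_pow_mul_mem (hl1 : lin D.l1 (gen u) = 0) (hl2 : lin D.l2 (gen u) = 0)
    (hlm : ∀ k, lin (mu k) (gen u) = X k) (g : Polynomial (MvPolynomial (Fin r) ℚ)) :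
    D.M.map (algebraMap ℚ (MvPolynomial (Fin r) ℚ)) ∈
      homValues D.l2 (D.phi (gen u)) (D.lin2_phi _ hl2) ∧
    ∃ N : ℕ, D.M.map (algebraMap ℚ (MvPolynomial (Fin r) ℚ)) ^ N * g ∈
      homValues D.l2 (D.phi (gen u)) (D.lin2_phi _ hl2) := by
  set S := homValues D.l2 (D.phi (gen u)) (D.lin2_phi _ hl2) with hS
  have hlin : ∀ l, lin l (D.phi (gen u)) ∈ S := fun l =>
    ⟨1, linPoly l, linPoly_homogeneous l, aeval_linPoly _ _⟩
  have hX : Polynomial.X ∈ S := by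
    rw [← D.lin1_phi (gen u) hl1]
    exact hlin _
  have hCQ : ∀ c : ℚ, Polynomial.C (C c) ∈ S := fun c => S.algebraMap_mem c
  have hpol : ∀ p : Polynomial ℚ, p.map (algebraMap ℚ (MvPolynomial (Fin r) ℚ)) ∈ S := by
    intro p
    induction p using Polynomial.induction_on' with
    | add p q hp hq => rw [Polynomial.map_add]; exact S.add_mem hp hq
    | monomial n c =>
      rw [Polynomial.map_monomial, ← Polynomial.C_mul_X_pow_eq_monomial]
      exact S.mul_mem (hCQ c) (S.pow_mem hX n)
  refine ⟨hpol D.M, ?_⟩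
  set Mr := D.M.map (algebraMap ℚ (MvPolynomial (Fin r) ℚ)) with hMr
  have hZ : ∀ k, Mr * Polynomial.C (X k) ∈ S := by
    intro k
    have h1 := D.lin_phi (mu k) (gen u)
    rw [hlm, ← hMr] at h1
    have h2 : Mr * Polynomial.C (X k) = lin (mu k) (D.phi (gen u)) -
        (lin (mu k) D.psi).map (algebraMap ℚ (MvPolynomial (Fin r) ℚ)) -
        Mr * (Polynomial.X ^ D.a * Polynomial.C (C (lin (mu k) D.v))) := by
      rw [h1, algebraMap_eq]
      ring
    rw [h2]
    exact S.sub_mem (S.sub_mem (hlin _) (hpol _))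
      (S.mul_mem (hpol _) (S.mul_mem (S.pow_mem hX _) (hCQ _)))
  have hadd : ∀ g h : Polynomial (MvPolynomial (Fin r) ℚ), (∃ N, Mr ^ N * g ∈ S) →
      (∃ N, Mr ^ N * h ∈ S) → ∃ N, Mr ^ N * (g + h) ∈ S := by
    rintro g h ⟨N, hN⟩ ⟨N', hN'⟩
    refine ⟨N + N', ?_⟩
    have : Mr ^ (N + N') * (g + h) = Mr ^ N' * (Mr ^ N * g) + Mr ^ N * (Mr ^ N' * h) := by ring
    rw [this]
    exact S.add_mem (S.mul_mem (S.pow_mem (hpol _) _) hN) (S.mul_mem (S.pow_mem (hpol _) _) hN')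
  have hmul : ∀ g h : Polynomial (MvPolynomial (Fin r) ℚ), (∃ N, Mr ^ N * g ∈ S) →
      (∃ N, Mr ^ N * h ∈ S) → ∃ N, Mr ^ N * (g * h) ∈ S := by
    rintro g h ⟨N, hN⟩ ⟨N', hN'⟩
    refine ⟨N + N', ?_⟩
    have : Mr ^ (N + N') * (g * h) = (Mr ^ N * g) * (Mr ^ N' * h) := by ring
    rw [this]
    exact S.mul_mem hN hN'
  have hCA : ∀ p : MvPolynomial (Fin r) ℚ, ∃ N, Mr ^ N * Polynomial.C p ∈ S := by
    intro p
    induction p using MvPolynomial.induction_on with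
    | C c => exact ⟨0, by rw [pow_zero, one_mul]; exact hCQ c⟩
    | add p q hp hq => rw [Polynomial.C_add]; exact hadd _ _ hp hq
    | mul_X p k hp =>
      rw [Polynomial.C_mul]
      exact hmul _ _ hp ⟨1, by rw [pow_one]; exact hZ k⟩
  induction g using Polynomial.induction_on' with
  | add p q hp hq => exact hadd _ _ hp hq
  | monomial n c =>
    rw [← Polynomial.C_mul_X_pow_eq_monomial]
    exact hmul _ _ (hCA c) ⟨0, by rw [pow_zero, one_mul]; exact S.pow_mem hX n⟩

/-- The moving intersection with the generic curve is irreducible: up to powers of `M`, a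
factorisation lifts to homogeneous polynomials, one of which is divisible by the prime `f`. -/
lemma irreducible_quo_gen (h1 : ∀ k, lin D.l1 (u k) = 0) (h2 : ∀ k, lin D.l2 (u k) = 0)
    (hmu : ∀ k l, lin (mu k) (u l) = if k = l then 1 else 0)
    (hc : ∀ c : Fin m → ℚ, lin D.l1 c = 0 → lin D.l2 c = 0 →
      ∀ j, c j = ∑ k, lin (mu k) c * u k j) :
    Irreducible (D.quo (gen u)) := by
  have hl1 : lin D.l1 (gen u) = 0 := by simp [lin_gen, h1]
  have hl2 : lin D.l2 (gen u) = 0 := by simp [lin_gen, h2]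
  have hlm : ∀ k, lin (mu k) (gen u) = X k := fun k => by
    simp [lin_gen, hmu]
  have hmem := D.exists_pow_mul_mem u mu hl1 hl2 hlm
  have hzero := fun {e} {g} => D.eq_zero_of_aeval_gen u mu h1 h2 hmu hc (e := e) (g := g)
  set Mr := D.M.map (algebraMap ℚ (MvPolynomial (Fin r) ℚ)) with hMr
  have hMrm : Mr.Monic := D.hM.map _
  have hMrd : Mr.natDegree = D.M.natDegree := D.hM.natDegree_map _
  have hcc := D.monic_aeval_phi (gen u)
  have hbig := D.hbig
  have hdegpos : 0 < D.deg := by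
    unfold deg
    omega
  -- `f` has too large a degree along the curve to divide the form `l2` or a homogeneous lift of `M`
  have hfdvd : ∀ g : MvPolynomial (Fin m) ℚ, f ∣ g → aeval (D.phi (gen u)) g ≠ 0 →
      d * (D.a + D.M.natDegree) ≤ (aeval (D.phi (gen u)) g).natDegree := by
    rintro _ ⟨q, rfl⟩ hne
    rw [map_mul] at hne ⊢
    rw [Polynomial.natDegree_mul (left_ne_zero_of_mul hne) (right_ne_zero_of_mul hne), ← hcc.2,
      Polynomial.natDegree_C_mul]
    · omega
    · rw [algebraMap_eq]
      exact fun h => inv_ne_zero D.hv (C_injective _ _ (by rw [h, map_zero]))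
  have hprime : Prime f := D.hirr.prime
  obtain ⟨eM, Mh, hMhh, hMh⟩ := (hmem 0).1
  have hfM : ¬ f ∣ Mh := by
    intro h
    have := hfdvd _ h (by rw [hMh]; exact hMrm.ne_zero)
    rw [hMh, hMrd] at this
    omega
  have hfL : ¬ f ∣ linPoly D.l2 := by
    intro h
    have h3 := aeval_linPoly D.l2 (D.phi (gen u))
    rw [D.lin2_phi _ hl2] at h3
    have := hfdvd _ h (by rw [h3]; exact one_ne_zero)
    rw [h3, Polynomial.natDegree_one] at this
    omega
  -- a factor of the moving part supported on the zeros of `M` is trivial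
  have htriv : ∀ q : Polynomial (MvPolynomial (Fin r) ℚ), q.Monic → q ∣ D.quo (gen u) →
      ∀ N, q ∣ Mr ^ N → q = 1 := by
    intro q hq hqP N hqM
    obtain ⟨t, ht⟩ := D.exists_coprime
    let Z : Fin r → ℚ := fun k => lin (mu k) (fun j => t * D.v j)
    let θ : MvPolynomial (Fin r) ℚ →ₐ[ℚ] ℚ := aeval Z
    have hθ : (fun j => θ (gen u j)) = fun j => t * D.v j := by
      funext j
      simp only [θ]
      rw [eval_gen, hc (fun j => t * D.v j)]
      · rw [lin_mul_left, D.l1v, mul_zero]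
      · rw [lin_mul_left, D.l2v, mul_zero]
    have e1 : q.map (θ : MvPolynomial (Fin r) ℚ →+* ℚ) ∣ D.quo (fun j => t * D.v j) := by
      have := Polynomial.map_dvd (θ : MvPolynomial (Fin r) ℚ →+* ℚ) hqP
      rwa [quo_map, hθ] at this
    have e2 : q.map (θ : MvPolynomial (Fin r) ℚ →+* ℚ) ∣ D.M ^ N := by
      have := Polynomial.map_dvd (θ : MvPolynomial (Fin r) ℚ →+* ℚ) hqM
      rw [Polynomial.map_pow, hMr, map_algebraMap] at this
      simpa using this
    have e3 : IsUnit (q.map (θ : MvPolynomial (Fin r) ℚ →+* ℚ)) :=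
      (ht.pow_left (m := N)).isUnit_of_dvd' e2 e1
    have e4 := Polynomial.natDegree_eq_zero_of_isUnit e3
    rw [hq.natDegree_map] at e4
    exact hq.natDegree_eq_zero.1 e4
  -- if the homogeneous lift of one factor is divisible by `f`, the other factor is trivial
  have hside : ∀ (g q : Polynomial (MvPolynomial (Fin r) ℚ)) (N : ℕ)
      (gh : MvPolynomial (Fin m) ℚ), g.Monic → q.Monic → g * q = D.quo (gen u) →
      aeval (D.phi (gen u)) gh = Mr ^ N * g → f ∣ gh → q = 1 := by
    intro g q N gh hgm hqm hgq hgh hf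
    refine htriv q hqm ⟨g, by rw [← hgq, mul_comm]⟩ N ?_
    obtain ⟨w, hw⟩ := hf
    rw [hw, map_mul, aeval_phi, ← hgq, ← hMr] at hgh
    refine ⟨Polynomial.C (algebraMap ℚ _ (eval D.v f)) * Mr * aeval (D.phi (gen u)) w, ?_⟩
    apply mul_right_cancel₀ hgm.ne_zero
    rw [← hgh]
    ring
  rw [Polynomial.irreducible_of_monic (D.quo_monic _)]
  · intro g q hg hq hgq
    obtain ⟨-, N1, e1, gh, hgh, hg1⟩ := hmem g
    obtain ⟨-, N2, e2, qh, hqh, hq1⟩ := hmem q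
    have key : gh * qh * Mh * linPoly D.l2 ^ ((N1 + N2) * eM + d) =
        Mh ^ (N1 + N2) * C (eval D.v f)⁻¹ * f * linPoly D.l2 ^ (e1 + e2 + eM) := by
      rw [← sub_eq_zero]
      have hh1 := ((hgh.mul hqh).mul hMhh).mul
        ((linPoly_homogeneous D.l2).pow ((N1 + N2) * eM + d))
      have hh2 := (((hMhh.pow (N1 + N2)).mul (isHomogeneous_C (Fin m) (eval D.v f)⁻¹)).mul
        D.hhom).mul ((linPoly_homogeneous D.l2).pow (e1 + e2 + eM))
      have hee : eM * (N1 + N2) + 0 + d + 1 * (e1 + e2 + eM) =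
        e1 + e2 + eM + 1 * ((N1 + N2) * eM + d) := by ring
      rw [hee] at hh2
      refine hzero (hh1.sub hh2) ?_
      simp only [map_sub, map_mul, map_pow, aeval_linPoly, D.lin2_phi _ hl2, hMh, hg1, hq1,
        aeval_phi, ← hMr, algHom_C, one_pow, mul_one]
      rw [← hgq]
      have : algebraMap ℚ (Polynomial (MvPolynomial (Fin r) ℚ)) (eval D.v f)⁻¹ *
          Polynomial.C (algebraMap ℚ _ (eval D.v f)) = 1 := by
        change Polynomial.C (algebraMap ℚ _ (eval D.v f)⁻¹) * _ = 1
        rw [← Polynomial.C_mul, ← map_mul, inv_mul_cancel₀ D.hv, map_one, Polynomial.C_1]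
      linear_combination (- Mr ^ (N1 + N2) * Mr * g * q) * this
    have hdv : f ∣ gh * qh * Mh * linPoly D.l2 ^ ((N1 + N2) * eM + d) := by
      rw [key]
      exact (dvd_mul_left _ _).mul_right _
    rcases hprime.dvd_or_dvd hdv with h | h
    · rcases hprime.dvd_or_dvd h with h | h
      · rcases hprime.dvd_or_dvd h with h | h
        · right
          exact hside g q N1 gh hg hq hgq hg1 h
        · left
          exact hside q g N2 qh hq hg (by rw [mul_comm, hgq]) hq1 h
      · exact absurd h hfM
    · exact absurd (hprime.dvd_of_dvd_pow h) hfL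
  · intro h
    have := D.quo_natDegree (gen u)
    rw [h, Polynomial.natDegree_one] at this
    omega

end generic
end Datum

/-! ### Infinitely many fields from one curve -/

namespace Datum
variable {m d : ℕ} {f : MvPolynomial (Fin m) ℚ} (D : Datum d f)

lemma natDegree_lt_deg : D.M.natDegree < D.deg := by
  have := D.hbig
  unfold deg
  omega

/-- A root of an irreducible moving part gives a new non-singular point. -/
lemma isNewPoint_of_root (s : Fin m → ℚ) (h1 : lin D.l1 s = 0) (h2 : lin D.l2 s = 0)
    (hirr : Irreducible (D.quo s)) (x : Qbar) (hx : Polynomial.aeval x (D.quo s) = 0) :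
    FiniteDimensional ℚ ↥(IntermediateField.adjoin ℚ {x}) ∧
    Module.finrank ℚ ↥(IntermediateField.adjoin ℚ {x}) = D.deg ∧
    IsNewPoint f (IntermediateField.adjoin ℚ {x}) := by
  have hinteg : IsIntegral ℚ x := ⟨D.quo s, D.quo_monic s, hx⟩
  have hmin := minpoly.eq_of_irreducible_of_monic hirr hx (D.quo_monic s)
  have hMx : Polynomial.aeval x D.M ≠ 0 := by
    intro h
    have := Polynomial.natDegree_le_of_dvd (minpoly.dvd ℚ x h) D.hM.ne_zero
    rw [← hmin, quo_natDegree] at this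
    exact absurd D.natDegree_lt_deg (not_lt.2 this)
  refine ⟨IntermediateField.adjoin.finiteDimensional hinteg, ?_, ?_⟩
  · rw [IntermediateField.adjoin.finrank hinteg, ← hmin, quo_natDegree]
  set a : Fin m → Qbar := fun l => Polynomial.aeval x (D.phi s l) with ha
  have hl1 : lin D.l1 a = x := by
    rw [ha, lin_algHom, D.lin1_phi _ h1, Polynomial.aeval_X]
  have hl2 : lin D.l2 a = 1 := by
    rw [ha, lin_algHom, D.lin2_phi _ h2, map_one]
  have hxK : x ∈ IntermediateField.adjoin ℚ {x} := IntermediateField.mem_adjoin_simple_self ℚ x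
  have haK : ∀ j, a j ∈ IntermediateField.adjoin ℚ {x} := fun j =>
    IntermediateField.algebra_adjoin_le_adjoin ℚ {x} (Polynomial.aeval_mem_adjoin_singleton ℚ x)
  have ha0 : a ≠ 0 := by
    intro h
    rw [h] at hl2
    simp [lin] at hl2
  have hfa : aeval a f = 0 := by
    have := comp_aeval_apply (D.phi s) (Polynomial.aeval x : Polynomial ℚ →ₐ[ℚ] Qbar) f
    rw [aeval_phi, map_mul, map_mul, hx, mul_zero, mul_zero] at this
    exact this.symm
  refine ⟨a, haK, ha0, hfa, ?_, ?_⟩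
  · by_contra! hsing
    -- a singular point would be a multiple zero of `M * quo`
    have hdiv : ∀ l, ∃ w : Polynomial Qbar, (D.phi s l).map (algebraMap ℚ Qbar) =
        Polynomial.C (a l) + (Polynomial.X - Polynomial.C x) * w := by
      intro l
      obtain ⟨w, hw⟩ := Polynomial.X_sub_C_dvd_sub_C_eval (a := x)
        (p := (D.phi s l).map (algebraMap ℚ Qbar))
      refine ⟨w, ?_⟩
      rw [← hw, Polynomial.eval_map_algebraMap]
      ring
    choose w hw using hdiv
    obtain ⟨R, hR⟩ := exists_taylor f (fun l => Polynomial.C (a l)) w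
      (Polynomial.X - Polynomial.C x)
    have hC : ∀ g : MvPolynomial (Fin m) ℚ, aeval (fun l => Polynomial.C (a l)) g =
        Polynomial.C (aeval a g) := fun g =>
      (comp_aeval_apply a (Polynomial.CAlgHom (R := ℚ) (A := Qbar)) g).symm
    simp only [hC, hfa, hsing, map_zero, zero_mul, Finset.sum_const_zero, mul_zero, zero_add,
      ← hw] at hR
    have h3 := aeval_map (Algebra.ofId ℚ Qbar) (D.phi s) f
    have h4 : (aeval (D.phi s) f).map (algebraMap ℚ Qbar) =
        (Polynomial.X - Polynomial.C x) ^ 2 * R := h3.trans hR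
    have h5 := congrArg (fun p => (Polynomial.derivative p).eval x) h4
    simp only [aeval_phi, Polynomial.map_mul, Polynomial.derivative_mul, Polynomial.derivative_map,
      Polynomial.eval_add, Polynomial.eval_mul, Polynomial.eval_map_algebraMap, hx,
      Polynomial.derivative_pow, Polynomial.eval_pow, Polynomial.eval_sub, Polynomial.eval_X,
      Polynomial.eval_C, sub_self, mul_zero, zero_mul, add_zero, zero_add,
      Polynomial.map_C, Polynomial.derivative_C, Polynomial.derivative_sub,
      Polynomial.derivative_X, Algebra.algebraMap_self, Polynomial.map_id, RingHom.id_apply,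
      pow_one, Nat.cast_ofNat, ne_eq, OfNat.ofNat_ne_zero,
      not_false_eq_true, zero_pow, Nat.add_one_sub_one] at h5
    have h6 : Polynomial.aeval x (Polynomial.derivative (D.quo s)) ≠ 0 :=
      hirr.separable.aeval_derivative_ne_zero hx
    exact D.hv (by simpa [h6, hMx] using h5)
  · obtain ⟨i, hi⟩ := Function.ne_iff.1 ha0
    have hi' : a i ≠ 0 := hi
    refine ⟨i, hi', ?_⟩
    apply le_antisymm
    · rw [IntermediateField.adjoin_le_iff]
      rintro _ ⟨j, rfl⟩
      exact div_mem (haK j) (haK i)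
    · set F := IntermediateField.adjoin ℚ (Set.range fun j => a j / a i) with hF
      have hmem : ∀ l : Fin m → ℚ, lin l a / a i ∈ F := by
        intro l
        rw [lin, Finset.sum_div]
        refine sum_mem fun j _ => ?_
        rw [mul_div_assoc]
        exact mul_mem (F.algebraMap_mem _) (IntermediateField.subset_adjoin _ _ ⟨j, rfl⟩)
      rw [IntermediateField.adjoin_le_iff]
      rintro _ rfl
      have e1 := hmem D.l1
      have e2 := hmem D.l2
      rw [hl1] at e1
      rw [hl2] at e2
      have := div_mem e1 e2
      rwa [div_div_div_cancel_right₀ hi', div_one] at this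

lemma exists_param : ∃ s : Fin m → ℚ, lin D.l1 s = 0 ∧ lin D.l2 s = 0 ∧
    Irreducible (D.quo s) := by
  obtain ⟨r, u, mu, h1, h2, hmu, hc⟩ := D.exists_coords
  obtain ⟨z, hz⟩ := hilbert_irreducibility r (D.quo (gen u)) (D.quo_monic _)
    (D.irreducible_quo_gen u mu h1 h2 hmu hc)
  have h3 := D.quo_map (aeval z : MvPolynomial (Fin r) ℚ →ₐ[ℚ] ℚ) (gen u)
  have h4 : ((aeval z : MvPolynomial (Fin r) ℚ →ₐ[ℚ] ℚ) : MvPolynomial (Fin r) ℚ →+* ℚ) =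
    eval z := rfl
  rw [h4] at h3
  rw [h3] at hz
  refine ⟨_, ?_, ?_, hz⟩
  · rw [lin_algHom, lin_gen]
    simp [h1]
  · rw [lin_algHom, lin_gen]
    simp [h2]

/-- The pencil of parameters `s + t v`. -/
def pencil (s : Fin m → ℚ) (A : Type) [CommRing A] [Algebra ℚ A] (l : Fin m) : Polynomial A :=
  Polynomial.C (algebraMap ℚ A (s l)) + Polynomial.X * Polynomial.C (algebraMap ℚ A (D.v l))

lemma quo_pencil_eval (s : Fin m → ℚ) (q : ℚ) :
    (D.quo (D.pencil s ℚ)).map (Polynomial.evalRingHom q) = D.quo (fun l => s l + q * D.v l) := by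
  rw [← Polynomial.coe_aeval_eq_evalRingHom, quo_map]
  congr 1
  funext l
  simp [pencil, mul_comm (D.v l)]

lemma quo_pencil_map (s : Fin m → ℚ) (K : Type) [Field K] [Algebra ℚ K] :
    (D.quo (D.pencil s ℚ)).map (Polynomial.mapRingHom (algebraMap ℚ K)) =
      D.quo (D.pencil s K) := by
  have := D.quo_map (Polynomial.mapAlgHom (Algebra.ofId ℚ K)) (D.pencil s ℚ)
  have h1 : (fun l => (Polynomial.mapAlgHom (Algebra.ofId ℚ K)) (D.pencil s ℚ l)) =
      D.pencil s K := by
    funext l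
    change (D.pencil s ℚ l).map (algebraMap ℚ K) = _
    simp [pencil]
  rw [h1] at this
  exact this

lemma aeval_eq_comp {K : Type} [Field K] [Algebra ℚ K] (p : Polynomial ℚ) (q : Polynomial K) :
    Polynomial.aeval q p = (p.map (algebraMap ℚ K)).comp q := by
  rw [Polynomial.comp, Polynomial.eval₂_map]
  rfl

/-- The moving points of the pencil are not polynomial functions of the parameter: along such a
function `p` the term in direction `v` dominates, and `f v ≠ 0`. -/
lemma eval_quo_pencil_ne_zero (s : Fin m → ℚ) (hirr : Irreducible (D.quo s)) (K : Type) [Field K]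
    [Algebra ℚ K] (p : Polynomial K) : (D.quo (D.pencil s K)).eval p ≠ 0 := by
  intro h0
  have hv : algebraMap ℚ K (eval D.v f) ≠ 0 := by
    rw [Ne, map_eq_zero]
    exact D.hv
  have hav : (aeval fun l => algebraMap ℚ K (D.v l)) f = algebraMap ℚ K (eval D.v f) :=
    aeval_algebraMap_apply K D.v f
  set w : Fin m → Polynomial K := fun l => (D.phi (D.pencil s K) l).eval p with hw
  have hfw : aeval w f = 0 := by
    have := comp_aeval_apply (D.phi (D.pencil s K))
      ((Polynomial.aeval p : Polynomial (Polynomial K) →ₐ[Polynomial K] Polynomial K).restrictScalars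
        ℚ) f
    simp only [AlgHom.restrictScalars_apply, Polynomial.coe_aeval_eq_eval] at this
    rw [aeval_phi, Polynomial.eval_mul, Polynomial.eval_mul, h0, mul_zero, mul_zero] at this
    exact this.symm
  have hwl : ∀ l, w l = (D.psi l |>.map (algebraMap ℚ K)).comp p +
      (D.M.map (algebraMap ℚ K)).comp p * (p ^ D.a * Polynomial.C (algebraMap ℚ K (D.v l)) +
        (Polynomial.C (algebraMap ℚ K (s l)) +
          Polynomial.X * Polynomial.C (algebraMap ℚ K (D.v l)))) := by
    intro l
    simp only [hw, phi, Polynomial.eval_add, Polynomial.eval_mul, Polynomial.eval_pow,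
      Polynomial.eval_X, Polynomial.eval_C, Polynomial.eval_map_algebraMap, aeval_eq_comp, pencil]
    rfl
  by_cases hq : p.natDegree = 0
  · obtain ⟨x, rfl⟩ : ∃ x, p = Polynomial.C x := ⟨_, Polynomial.eq_C_of_natDegree_eq_zero hq⟩
    have hwc : ∀ l, (w l).natDegree ≤ 1 ∧ (w l).coeff 1 =
        Polynomial.aeval x D.M * algebraMap ℚ K (D.v l) := by
      intro l
      have : w l = Polynomial.C (Polynomial.aeval x D.M * algebraMap ℚ K (D.v l)) * Polynomial.X +
          Polynomial.C (Polynomial.aeval x (D.psi l) + Polynomial.aeval x D.M *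
            (x ^ D.a * algebraMap ℚ K (D.v l) + algebraMap ℚ K (s l))) := by
        rw [hwl, Polynomial.comp_C, Polynomial.comp_C, Polynomial.eval_map_algebraMap,
          Polynomial.eval_map_algebraMap]
        simp only [Polynomial.C_add, Polynomial.C_mul, Polynomial.C_pow]
        ring
      rw [this]
      exact ⟨Polynomial.natDegree_linear_le, by
        rw [Polynomial.coeff_add, Polynomial.coeff_C_mul, Polynomial.coeff_X_one,
          Polynomial.coeff_C_of_ne_zero one_ne_zero, mul_one, add_zero]⟩
    have h1 := (coeff_aeval_homogeneous D.hhom w 1 fun l => (hwc l).1).2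
    simp only [(hwc _).2] at h1
    rw [hfw, Polynomial.coeff_zero, aeval_homogeneous_mul D.hhom, hav] at h1
    have h2 : Polynomial.aeval x D.M ^ d = 0 := (mul_eq_zero.1 h1.symm).resolve_right hv
    have h3 : Polynomial.aeval x D.M = 0 := eq_zero_of_pow_eq_zero h2
    -- specialising the pencil at `0` shows that `quo s` divides `M`
    have h4 := congrArg (Polynomial.eval 0) h0
    have h5 : Polynomial.aeval x (D.quo s) = 0 := by
      have e1 := eval_eval_eq (D.quo (D.pencil s K)) (Polynomial.C x) 0
      rw [h0, Polynomial.eval_zero, Polynomial.eval_C, ← quo_pencil_map, Polynomial.map_map] at e1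
      have e2 : (Polynomial.evalRingHom (0 : K)).comp (Polynomial.mapRingHom (algebraMap ℚ K)) =
          (algebraMap ℚ K).comp (Polynomial.evalRingHom 0) := by
        apply Polynomial.ringHom_ext <;> simp
      rw [e2, ← Polynomial.map_map, quo_pencil_eval] at e1
      simp only [zero_mul, add_zero] at e1
      rw [Polynomial.eval_map_algebraMap] at e1
      exact e1.symm
    have h6 := minpoly.eq_of_irreducible_of_monic hirr h5 (D.quo_monic s)
    have h7 := Polynomial.natDegree_le_of_dvd (minpoly.dvd ℚ x h3) D.hM.ne_zero
    rw [← h6, quo_natDegree] at h7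
    exact absurd D.natDegree_lt_deg (not_lt.2 h7)
  · set q := p.natDegree with hqd
    have ha := D.ha
    have hq1 : 1 ≤ q := Nat.one_le_iff_ne_zero.2 hq
    have hMd : (D.M.map (algebraMap ℚ K)).natDegree = D.M.natDegree := D.hM.natDegree_map _
    have hwc : ∀ l, (w l).natDegree ≤ D.M.natDegree * q + D.a * q ∧
        (w l).coeff (D.M.natDegree * q + D.a * q) =
        (p.leadingCoeff ^ D.M.natDegree * p.leadingCoeff ^ D.a) * algebraMap ℚ K (D.v l) := by
      intro l
      have e1 : ((D.psi l |>.map (algebraMap ℚ K)).comp p).natDegree <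
          D.M.natDegree * q + D.a * q := by
        rw [Polynomial.natDegree_comp, ← add_mul, add_comm D.M.natDegree]
        exact Nat.mul_lt_mul_of_pos_right (Polynomial.natDegree_map_le.trans_lt (D.hpsi l)) hq1
      have e2 : ((D.M.map (algebraMap ℚ K)).comp p).natDegree ≤ D.M.natDegree * q := by
        rw [Polynomial.natDegree_comp, hMd]
      have e2' : ((D.M.map (algebraMap ℚ K)).comp p).coeff (D.M.natDegree * q) =
          p.leadingCoeff ^ D.M.natDegree := by
        have := Polynomial.coeff_comp_degree_mul_degree (p := D.M.map (algebraMap ℚ K)) hq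
        rw [hMd, (D.hM.map _).leadingCoeff, one_mul] at this
        exact this
      have hlt : 1 < D.a * q := by nlinarith
      have e3 : (Polynomial.C (algebraMap ℚ K (s l)) +
          Polynomial.X * Polynomial.C (algebraMap ℚ K (D.v l))).natDegree ≤ 1 := by
        rw [add_comm, mul_comm]
        exact Polynomial.natDegree_linear_le
      have e4 : (p ^ D.a * Polynomial.C (algebraMap ℚ K (D.v l))).natDegree ≤ D.a * q :=
        (Polynomial.natDegree_mul_C_le _ _).trans (Polynomial.natDegree_pow_le)
      have e5 : (p ^ D.a * Polynomial.C (algebraMap ℚ K (D.v l)) +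
        (Polynomial.C (algebraMap ℚ K (s l)) +
          Polynomial.X * Polynomial.C (algebraMap ℚ K (D.v l)))).natDegree ≤ D.a * q :=
        Polynomial.natDegree_add_le_of_degree_le e4 (by omega)
      rw [hwl]
      refine ⟨Polynomial.natDegree_add_le_of_degree_le e1.le
        (Polynomial.natDegree_mul_le_of_le e2 e5), ?_⟩
      rw [Polynomial.coeff_add, Polynomial.coeff_eq_zero_of_natDegree_lt e1, zero_add,
        Polynomial.coeff_mul_add_eq_of_natDegree_le e2 e5, e2', Polynomial.coeff_add,
        Polynomial.coeff_eq_zero_of_natDegree_lt (lt_of_le_of_lt e3 hlt), add_zero,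
        Polynomial.coeff_mul_C, Polynomial.coeff_pow_of_natDegree_le hqd.ge, mul_assoc]
      rfl
    have h1 := (coeff_aeval_homogeneous D.hhom w _ fun l => (hwc l).1).2
    simp only [(hwc _).2] at h1
    rw [hfw, Polynomial.coeff_zero, aeval_homogeneous_mul D.hhom, hav] at h1
    have hL : p.leadingCoeff ≠ 0 := by
      rw [Ne, Polynomial.leadingCoeff_eq_zero]
      rintro rfl
      simp [hqd] at hq
    exact mul_ne_zero (pow_ne_zero _ (mul_ne_zero (pow_ne_zero _ hL) (pow_ne_zero _ hL))) hv h1.symm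

/-- Were there only finitely many fields, then for all `k` outside a sparse set one of them would
contain a root of the member of the pencil at `t = 1 / k`, contrary to `sparse_root`. -/
theorem deg_mem_DinfSet : D.deg ∈ DinfSet f := by
  refine ⟨(Nat.zero_le _).trans_lt D.natDegree_lt_deg, fun hfin => ?_⟩
  obtain ⟨s, h1, h2, hirr⟩ := D.exists_param
  set H := D.quo (D.pencil s ℚ) with hH
  have hHm : H.Monic := D.quo_monic _
  have hH0 : H.map (Polynomial.evalRingHom 0) = D.quo s := by
    rw [hH, quo_pencil_eval]
    simp
  have hsep : (H.map (Polynomial.evalRingHom 0)).Separable := by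
    rw [hH0]
    exact hirr.separable
  have hHirr : Irreducible H :=
    Polynomial.Monic.irreducible_of_irreducible_map (Polynomial.evalRingHom 0) H hHm
      (by rw [hH0]; exact hirr)
  set 𝒦 := {K : IntermediateField ℚ Qbar |
    FiniteDimensional ℚ ↥K ∧ Module.finrank ℚ ↥K = D.deg ∧ IsNewPoint f K} with h𝒦
  have : Finite 𝒦 := hfin
  have hsp : Sparse (⋃ K : 𝒦, {k : ℕ | ∃ x : K.1, Polynomial.aeval x (spec H k) = 0}) := by
    refine Sparse.iUnion fun K => ?_
    have := K.2.1
    have : NumberField K.1 := NumberField.mk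
    refine sparse_root H hHm hsep fun p => ?_
    rw [hH, quo_pencil_map]
    exact D.eval_quo_pencil_ne_zero s hirr _ p
  obtain ⟨k, -, hk⟩ := ((sparse_reducible_rat H hHm hsep hHirr).union hsp).exists_notMem 0
  rw [Set.mem_union, not_or] at hk
  obtain ⟨hk1, hk2⟩ := hk
  rw [Set.mem_ofPred_eq, not_not] at hk1
  have hspec : spec H k = D.quo (fun l => s l + 1 / (k : ℚ) * D.v l) := D.quo_pencil_eval s _
  obtain ⟨x, hx⟩ := IsAlgClosed.exists_aeval_eq_zero Qbar (spec H k) (by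
    rw [Polynomial.degree_eq_natDegree hk1.ne_zero, hspec, quo_natDegree]
    exact_mod_cast ((Nat.zero_le _).trans_lt D.natDegree_lt_deg).ne')
  have hl : ∀ l, lin l s = 0 → lin l D.v = 0 → lin l (fun l => s l + 1 / (k : ℚ) * D.v l) = 0 := by
    intro l e1 e2
    rw [lin_add, lin_mul_left, e1, e2, mul_zero, add_zero]
  have hK := D.isNewPoint_of_root (fun l => s l + 1 / (k : ℚ) * D.v l) (hl _ h1 D.l1v)
    (hl _ h2 D.l2v) (hspec ▸ hk1) x (hspec ▸ hx)
  apply hk2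
  rw [Set.mem_iUnion]
  refine ⟨⟨_, hK⟩, ⟨x, IntermediateField.mem_adjoin_simple_self ℚ x⟩, ?_⟩
  apply Subtype.ext
  exact (Polynomial.aeval_subalgebra_coe (spec H k)
    (IntermediateField.adjoin ℚ {x}).toSubalgebra _).trans hx

end Datum

/-! ### Projections in general position -/

section avoid
variable {m : ℕ}

/-- Two linear forms in at least three variables have a common nontrivial zero. -/
lemma exists_common_zero (hm : 3 ≤ m) {F : Type*} [Field F] (p q : Fin m → F) :
    ∃ u : Fin m → F, u ≠ 0 ∧ ∑ j, u j * p j = 0 ∧ ∑ j, u j * q j = 0 := by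
  let L : (Fin m → F) →ₗ[F] (Fin 2 → F) := Matrix.mulVecLin (Matrix.of ![p, q])
  have hL : LinearMap.ker L ≠ ⊥ := by
    apply LinearMap.ker_ne_bot_of_finrank_lt
    simp
    omega
  obtain ⟨u, hu, hu0⟩ := (Submodule.ne_bot_iff _).1 hL
  have h : L u = 0 := hu
  refine ⟨u, hu0, ?_, ?_⟩
  · have := congrFun h 0
    simpa [L, Matrix.mulVec, dotProduct, mul_comm] using this
  · have := congrFun h 1
    simpa [L, Matrix.mulVec, dotProduct, mul_comm] using this

/-- A rational vector outside a hypersurface and finitely many hyperplanes over a field of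
characteristic zero. -/
lemma exists_vector {F : Type*} [Field F] [Algebra ℚ F] (f : MvPolynomial (Fin m) ℚ) (hf : f ≠ 0)
    {κ : Type*} [Finite κ] (c : κ → Fin m → F) (hc : ∀ k, c k ≠ 0) :
    ∃ v : Fin m → ℚ, eval v f ≠ 0 ∧ ∀ k, ∑ j, c k j * algebraMap ℚ F (v j) ≠ 0 := by
  have := Fintype.ofFinite κ
  have hinj : Function.Injective (algebraMap ℚ F) := (algebraMap ℚ F).injective
  set g : MvPolynomial (Fin m) F := map (algebraMap ℚ F) f * ∏ k, ∑ j, C (c k j) * X j with hg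
  have hg0 : g ≠ 0 := by
    refine mul_ne_zero ?_ (Finset.prod_ne_zero_iff.2 fun k _ h => hc k ?_)
    · rwa [Ne, map_eq_zero_iff _ (map_injective _ hinj)]
    · funext i
      have := congrArg (eval (Pi.single i 1)) h
      simpa [Pi.single_apply] using this
  have : ∃ v : Fin m → ℚ, eval (fun j => algebraMap ℚ F (v j)) g ≠ 0 := by
    by_contra! h
    apply hg0
    refine funext_set (fun _ => Set.range (algebraMap ℚ F))
      (fun _ => Set.infinite_range_of_injective hinj) fun x hx => ?_
    choose v hv using fun i => hx i (Set.mem_univ i)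
    rw [show x = fun j => algebraMap ℚ F (v j) from funext fun i => (hv i).symm, h, map_zero]
  obtain ⟨v, hv⟩ := this
  rw [hg, map_mul, map_prod] at hv
  refine ⟨v, fun h => left_ne_zero_of_mul hv ?_, fun k h => ?_⟩
  · have h1 : eval (fun j => algebraMap ℚ F (v j)) (map (algebraMap ℚ F) f) =
        algebraMap ℚ F (eval v f) := by
      rw [eval_map]
      exact aeval_algebraMap_apply F v f
    rw [h1, h, map_zero]
  · apply Finset.prod_ne_zero_iff.1 (right_ne_zero_of_mul hv) k (Finset.mem_univ k)
    simpa using h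

/-- A vector killed by all rational linear forms vanishing at `v` is proportional to `v`. -/
lemma eq_mul_of_forall_lin {F : Type*} [Field F] [Algebra ℚ F] (v : Fin m → ℚ) (hv : v ≠ 0)
    (w : Fin m → F) (h : ∀ l : Fin m → ℚ, lin l v = 0 → lin l w = 0) :
    ∃ c : F, ∀ j, w j = c * algebraMap ℚ F (v j) := by
  obtain ⟨i, hi⟩ := Function.ne_iff.1 hv
  have hi' : v i ≠ 0 := hi
  have hi'' : algebraMap ℚ F (v i) ≠ 0 := by rwa [Ne, map_eq_zero]
  have key : ∀ {B : Type _} [CommRing B] [Algebra ℚ B] (y : Fin m → B) (j : Fin m),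
      lin (fun k => (if k = j then v i else 0) - (if k = i then v j else 0)) y =
        algebraMap ℚ B (v i) * y j - algebraMap ℚ B (v j) * y i := by
    intro B _ _ y j
    simp only [lin, map_sub, sub_mul, Finset.sum_sub_distrib]
    simp only [apply_ite (algebraMap ℚ B), map_zero, ite_mul, zero_mul, Finset.sum_ite_eq',
      Finset.mem_univ, if_true]
  refine ⟨w i / algebraMap ℚ F (v i), fun j => ?_⟩
  have h1 := h (fun k => (if k = j then v i else 0) - (if k = i then v j else 0)) (by
    have : ∀ k, algebraMap ℚ ℚ k = k := fun _ => rfl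
    simp only [lin, this, sub_mul, Finset.sum_sub_distrib, ite_mul, zero_mul, Finset.sum_ite_eq',
      Finset.mem_univ, if_true]
    ring)
  rw [key, sub_eq_zero] at h1
  field_simp
  rw [mul_comm, h1, mul_comm]

/-- A rational linear form vanishing at `v` but at none of finitely many vectors that are not
proportional to `v`. -/
lemma exists_form {F : Type*} [Field F] [Algebra ℚ F] (v : Fin m → ℚ) (hv : v ≠ 0) {κ : Type*}
    [Finite κ] (w : κ → Fin m → F)
    (hw : ∀ k, ¬ ∃ c : F, ∀ j, w k j = c * algebraMap ℚ F (v j)) :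
    ∃ l : Fin m → ℚ, lin l v = 0 ∧ ∀ k, lin l (w k) ≠ 0 := by
  let V : Submodule ℚ (Fin m → ℚ) :=
    { carrier := {l | lin l v = 0}
      add_mem' := by
        intro a b ha hb
        simp only [Set.mem_ofPred_eq, lin, Pi.add_apply, map_add, add_mul,
          Finset.sum_add_distrib] at *
        rw [ha, hb, add_zero]
      zero_mem' := by simp [lin]
      smul_mem' := by
        intro c a ha
        simp only [Set.mem_ofPred_eq, lin, Pi.smul_apply, smul_eq_mul, map_mul, mul_assoc,
          ← Finset.mul_sum] at *
        rw [ha, mul_zero] }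
  let P : κ → Submodule ℚ V := fun k =>
    { carrier := {l | lin l.1 (w k) = 0}
      add_mem' := by
        intro a b ha hb
        simp only [Set.mem_ofPred_eq, lin, Submodule.coe_add, Pi.add_apply, map_add, add_mul,
          Finset.sum_add_distrib] at *
        rw [ha, hb, add_zero]
      zero_mem' := by simp [lin]
      smul_mem' := by
        intro c a ha
        simp only [Set.mem_ofPred_eq, lin, Submodule.coe_smul, Pi.smul_apply, smul_eq_mul, map_mul,
          mul_assoc, ← Finset.mul_sum] at *
        rw [ha, mul_zero] }
  by_contra! hcon
  have hcov : ⋃ k, (P k : Set V) = Set.univ := by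
    rw [Set.eq_univ_iff_forall]
    intro l
    obtain ⟨k, hk⟩ := hcon l.1 l.2
    exact Set.mem_iUnion.2 ⟨k, hk⟩
  obtain ⟨k, hk⟩ := Subspace.exists_eq_top_of_iUnion_eq_univ hcov
  refine hw k (eq_mul_of_forall_lin v hv (w k) fun l hl => ?_)
  have : (⟨l, hl⟩ : V) ∈ P k := hk ▸ Submodule.mem_top
  exact this

end avoid

/-- A new point has a representative over `K` with a coordinate `1`; its coordinates separate the
embeddings of `K`. -/
lemma IsNewPoint.exists_normalised {m d : ℕ} {f : MvPolynomial (Fin m) ℚ}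
    (hhom : f.IsHomogeneous d) {K : IntermediateField ℚ Qbar} (h : IsNewPoint f K) :
    ∃ a : Fin m → K, (∃ i, a i = 1) ∧ aeval a f = 0 ∧ (∃ j, aeval a (pderiv j f) ≠ 0) ∧
      ∀ σ τ : K →ₐ[ℚ] Qbar, (∀ j, σ (a j) = τ (a j)) → σ = τ := by
  obtain ⟨a, haK, -, hfa, ⟨j, hj⟩, i, hi, hK⟩ := h
  let b : Fin m → K := fun l => ⟨a l, haK l⟩
  have hbi : (b i)⁻¹ ≠ 0 := by
    refine inv_ne_zero fun h => hi ?_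
    exact congrArg Subtype.val h
  have hb : ∀ g : MvPolynomial (Fin m) ℚ, ((aeval b g : K) : Qbar) = aeval a g := fun g =>
    comp_aeval_apply b K.val g
  refine ⟨fun l => (b i)⁻¹ * b l, ⟨i, inv_mul_cancel₀ (by simpa using hbi)⟩, ?_, ⟨j, ?_⟩, ?_⟩
  · rw [aeval_homogeneous_mul hhom, show aeval b f = 0 from Subtype.ext ((hb f).trans hfa),
      mul_zero]
  · rw [aeval_homogeneous_mul hhom.pderiv]
    refine mul_ne_zero (pow_ne_zero _ hbi) fun h => hj ?_
    rw [← hb, h]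
    rfl
  · intro σ τ hστ
    refine IntermediateField.algHom_ext_of_eq_adjoin (K := Qbar) ℚ hK.symm ?_
    rintro _ ⟨l, rfl⟩
    have := hστ l
    convert this using 2 <;>
    · refine congrArg _ (Subtype.ext ?_)
      change a l / a i = (a i)⁻¹ * a l
      rw [div_eq_inv_mul]

/-- A projection to the line that separates the conjugates of finitely many non-singular points and
whose fibres are transversal to the hypersurface there. -/
lemma exists_projection {m d : ℕ} (hm : 3 ≤ m) (hd : 1 ≤ d) (f : MvPolynomial (Fin m) ℚ)
    (hirr : Irreducible f) (hhom : f.IsHomogeneous d) {ι : Type} [Finite ι] (K : ι → Type)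
    [∀ i, Field (K i)] [∀ i, Algebra ℚ (K i)] [∀ i, FiniteDimensional ℚ (K i)]
    (a : ∀ i, Fin m → K i) (ha1 : ∀ i, ∃ j, a i j = 1) (haf : ∀ i, aeval (a i) f = 0)
    (hns : ∀ i, ∃ j, aeval (a i) (pderiv j f) ≠ 0)
    (hgen : ∀ i, ∀ σ τ : K i →ₐ[ℚ] Qbar, (∀ j, σ (a i j) = τ (a i j)) → σ = τ) :
    ∃ v l1 l2 b1 b2 : Fin m → ℚ, eval v f ≠ 0 ∧ lin l1 v = 0 ∧ lin l2 v = 0 ∧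
      lin l1 b1 = 1 ∧ lin l1 b2 = 0 ∧ lin l2 b1 = 0 ∧ lin l2 b2 = 1 ∧
      ∀ i, lin l2 (a i) ≠ 0 ∧
        ∑ j, aeval (a i) (pderiv j f) * algebraMap ℚ (K i) (v j) ≠ 0 ∧
        (minpoly ℚ (lin l1 (a i) / lin l2 (a i))).natDegree = Module.finrank ℚ (K i) := by
  let κ1 := Σ i, (K i →ₐ[ℚ] Qbar)
  let κ2 := {x : Σ i, (K i →ₐ[ℚ] Qbar) × (K i →ₐ[ℚ] Qbar) // x.2.1 ≠ x.2.2}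
  -- a hyperplane through two conjugate points
  choose L hL0 hL1 hL2 using fun x : κ2 => exists_common_zero hm
    (fun j => x.1.2.1 (a x.1.1 j)) (fun j => x.1.2.2 (a x.1.1 j))
  obtain ⟨v, hv, hvc⟩ := exists_vector f hirr.ne_zero (κ := κ1 ⊕ κ2) (F := Qbar)
    (Sum.elim (fun x j => x.2 (aeval (a x.1) (pderiv j f))) L) (by
      rintro (x | x)
      · obtain ⟨j, hj⟩ := hns x.1
        intro h
        exact hj ((map_eq_zero x.2).1 (congrFun h j))
      · exact hL0 x)
  have hv0 : v ≠ 0 := by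
    rintro rfl
    apply hv
    have := aeval_homogeneous_mul hhom (0 : ℚ) (0 : Fin m → ℚ)
    rw [zero_pow (by omega), zero_mul] at this
    simpa using this
  have hva : aeval (fun j => algebraMap ℚ Qbar (v j)) f ≠ 0 := by
    have : aeval (fun j => algebraMap ℚ Qbar (v j)) f = algebraMap ℚ Qbar (eval v f) :=
      aeval_algebraMap_apply Qbar v f
    rwa [this, Ne, map_eq_zero]
  obtain ⟨i0, hi0⟩ := Function.ne_iff.1 hv0
  have hi0' : v i0 ≠ 0 := hi0
  -- rational vectors with vanishing coordinate `i0` are not proportional to `v`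
  have hprop : ∀ u : Fin m → ℚ, u ≠ 0 → u i0 = 0 →
      ¬ ∃ c : Qbar, ∀ j, algebraMap ℚ Qbar (u j) = c * algebraMap ℚ Qbar (v j) := by
    rintro u hu hui ⟨c, hc⟩
    have h1 := hc i0
    rw [hui, map_zero, eq_comm, mul_eq_zero, map_eq_zero] at h1
    have hc0 := h1.resolve_right hi0'
    apply hu
    funext j
    have := hc j
    rwa [hc0, zero_mul, map_eq_zero] at this
  obtain ⟨u0, hu0, hu0i, -⟩ := exists_common_zero hm (Pi.single i0 (1 : ℚ)) 0
  simp [Pi.single_apply] at hu0i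
  have hσ0 : ∀ x : κ1, (fun j => x.2 (a x.1 j)) ≠ 0 := by
    intro x h
    obtain ⟨j, hj⟩ := ha1 x.1
    have := congrFun h j
    simp [hj] at this
  obtain ⟨l2, hl2v, hl2⟩ := exists_form v hv0 (κ := Option κ1) (F := Qbar)
    (fun o => o.elim (fun j => algebraMap ℚ Qbar (u0 j)) fun x j => x.2 (a x.1 j)) (by
      rintro (_ | x)
      · exact hprop u0 hu0 hu0i
      · rintro ⟨c, hc⟩
        have hc' : (fun j => x.2 (a x.1 j)) = fun j => c * algebraMap ℚ Qbar (v j) := funext hc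
        have h1 : aeval (fun j => x.2 (a x.1 j)) f = 0 := by
          rw [← comp_aeval_apply, haf, map_zero]
        rw [hc', aeval_homogeneous_mul hhom, mul_eq_zero] at h1
        have h2 : c = 0 := eq_zero_of_pow_eq_zero (h1.resolve_right hva)
        apply hσ0 x
        rw [hc', h2]
        simp only [zero_mul]
        rfl)
  have hl2u0 : lin l2 u0 ≠ 0 := by
    have := hl2 none
    intro h
    apply this
    have h2 := lin_algebraMap (B := Qbar) l2 u0
    rw [h, map_zero] at h2
    exact h2
  have hl2σ : ∀ i (σ : K i →ₐ[ℚ] Qbar), σ (lin l2 (a i)) ≠ 0 := by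
    intro i σ
    rw [← lin_algHom]
    exact hl2 (some ⟨i, σ⟩)
  obtain ⟨u, hu, hui, hul⟩ := exists_common_zero hm (Pi.single i0 (1 : ℚ)) l2
  simp [Pi.single_apply] at hui
  have hul2 : lin l2 u = 0 := by
    rw [← hul]
    exact Finset.sum_congr rfl fun j _ => mul_comm _ _
  obtain ⟨l1, hl1v, hl1⟩ := exists_form v hv0 (κ := Option κ2) (F := Qbar)
    (fun o => o.elim (fun j => algebraMap ℚ Qbar (u j)) fun x j =>
      x.1.2.2 (lin l2 (a x.1.1)) * x.1.2.1 (a x.1.1 j) -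
        x.1.2.1 (lin l2 (a x.1.1)) * x.1.2.2 (a x.1.1 j)) (by
      rintro (_ | ⟨⟨i, σ, τ⟩, hne⟩)
      · exact hprop u hu hui
      · rintro ⟨c, hc⟩
        simp only [Option.elim_some] at hc
        have hσl := hl2σ i σ
        have hτl := hl2σ i τ
        -- apply the linear form `L` that vanishes at both points but not at `v`
        have h1 : ∑ j, L ⟨⟨i, σ, τ⟩, hne⟩ j * (τ (lin l2 (a i)) * σ (a i j) -
            σ (lin l2 (a i)) * τ (a i j)) = 0 := by
          have e1 := hL1 ⟨⟨i, σ, τ⟩, hne⟩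
          have e2 := hL2 ⟨⟨i, σ, τ⟩, hne⟩
          simp only at e1 e2
          calc _ = τ (lin l2 (a i)) * ∑ j, L ⟨⟨i, σ, τ⟩, hne⟩ j * σ (a i j) -
              σ (lin l2 (a i)) * ∑ j, L ⟨⟨i, σ, τ⟩, hne⟩ j * τ (a i j) := by
                rw [Finset.mul_sum, Finset.mul_sum, ← Finset.sum_sub_distrib]
                exact Finset.sum_congr rfl fun j _ => by ring
            _ = 0 := by rw [e1, e2]; ring
        have h2 := hvc (Sum.inr ⟨⟨i, σ, τ⟩, hne⟩)
        simp only [Sum.elim_inr] at h2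
        have hc0 : c = 0 := by
          rw [Finset.sum_congr rfl fun j _ => by rw [hc j, mul_left_comm], ← Finset.mul_sum,
            mul_eq_zero] at h1
          exact h1.resolve_right h2
        have h3 : ∀ j, τ (lin l2 (a i)) * σ (a i j) = σ (lin l2 (a i)) * τ (a i j) := by
          intro j
          have := hc j
          rwa [hc0, zero_mul, sub_eq_zero] at this
        obtain ⟨j0, hj0⟩ := ha1 i
        have h4 := h3 j0
        rw [hj0, map_one, map_one, mul_one, mul_one] at h4
        apply hne
        apply hgen i
        intro j
        have := h3 j
        rw [h4] at this
        exact mul_left_cancel₀ hσl this)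
  have hl1u : lin l1 u ≠ 0 := by
    have := hl1 none
    intro h
    apply this
    have h2 := lin_algebraMap (B := Qbar) l1 u
    rw [h, map_zero] at h2
    exact h2
  set b1 : Fin m → ℚ := fun j => (lin l1 u)⁻¹ * u j with hb1
  have h11 : lin l1 b1 = 1 := by rw [hb1, lin_mul_left, inv_mul_cancel₀ hl1u]
  have h21 : lin l2 b1 = 0 := by rw [hb1, lin_mul_left, hul2, mul_zero]
  set y : Fin m → ℚ := fun j => (lin l2 u0)⁻¹ * u0 j with hy
  have h2y : lin l2 y = 1 := by rw [hy, lin_mul_left, inv_mul_cancel₀ hl2u0]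
  refine ⟨v, l1, l2, b1, fun j => y j - lin l1 y * b1 j, hv, hl1v, hl2v, h11, ?_, h21, ?_, ?_⟩
  · rw [lin_sub, lin_mul_left _ b1, h11, mul_one, sub_self]
  · rw [lin_sub, lin_mul_left _ b1, h21, h2y, mul_zero, sub_zero]
  intro i
  have hσi : Nonempty (K i →ₐ[ℚ] Qbar) := ⟨IsAlgClosed.lift⟩
  obtain ⟨σ⟩ := hσi
  refine ⟨fun h => hl2σ i σ (by rw [h, map_zero]), ?_, ?_⟩
  · intro h
    apply hvc (Sum.inl ⟨i, σ⟩)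
    have := congrArg σ h
    rw [map_sum, map_zero] at this
    rw [← this]
    exact Finset.sum_congr rfl fun j _ => by simp
  · rw [← Field.primitive_element_iff_minpoly_natDegree_eq,
      Field.primitive_element_iff_algHom_eq_of_eval' ℚ Qbar (fun x => IsAlgClosed.splits _)]
    intro σ τ hστ
    by_contra hne
    have h1 := hl1 (some ⟨⟨i, σ, τ⟩, hne⟩)
    apply h1
    simp only [Option.elim_some]
    rw [lin_sub, lin_mul_left, lin_mul_left, lin_algHom, lin_algHom]
    have hσl := hl2σ i σ
    have hτl := hl2σ i τ
    simp only [map_div₀] at hστ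
    rw [div_eq_div_iff hσl hτl] at hστ
    linear_combination hστ

/-! ### Degrees `d e - μ` -/

/-- Finitely many new non-singular points of distinct degrees with sum `μ` lie on curves as in
`Datum`, so that `d e - μ` is a degree of infinitely many fields for all large `e`. -/
theorem sub_sum_mem_DinfSet {m d : ℕ} (hm : 3 ≤ m) (hd : 1 ≤ d) (f : MvPolynomial (Fin m) ℚ)
    (hirr : Irreducible f) (hhom : f.IsHomogeneous d) {ι : Type} [Fintype ι] (n : ι → ℕ)
    (hn : Function.Injective n) (hD : ∀ i, n i ∈ DSet f) :
    ∃ N, ∀ e, N ≤ e → ∑ i, n i ≤ d * e ∧ d * e - ∑ i, n i ∈ DinfSet f := by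
  choose hn0 K hKfin hKn hKnew using hD
  choose a ha1 haf hns hgen using fun i => (hKnew i).exists_normalised hhom
  obtain ⟨v, l1, l2, b1, b2, hv, l1v, l2v, l1b1, l1b2, l2b1, l2b2, hi⟩ :=
    exists_projection hm hd f hirr hhom (fun i => K i) a ha1 haf hns hgen
  choose hl2 htr hmin using hi
  set α : ∀ i, K i := fun i => lin l1 (a i) / lin l2 (a i) with hα
  have hinteg : ∀ i, IsIntegral ℚ (α i) := fun i => IsIntegral.of_finite ℚ _
  set p : ι → Polynomial ℚ := fun i => minpoly ℚ (α i) with hp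
  have hpirr : ∀ i, Irreducible (p i) := fun i => minpoly.irreducible (hinteg i)
  have hpm : ∀ i, (p i).Monic := fun i => minpoly.monic (hinteg i)
  have hpdeg : ∀ i, (p i).natDegree = n i := fun i => (hmin i).trans (hKn i)
  have hpcop : Pairwise (Function.onFun IsCoprime p) := by
    intro i j hij
    rw [Function.onFun, (hpirr i).coprime_iff_not_dvd]
    intro hdvd
    have := Polynomial.eq_of_monic_of_associated (hpm i) (hpm j)
      ((hpirr i).associated_of_dvd (hpirr j) hdvd)
    exact hij (hn (by rw [← hpdeg, ← hpdeg, this]))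
  -- the coordinates of the points are polynomials in the primitive elements
  have hprim : ∀ i (y : K i), ∃ g : Polynomial ℚ, Polynomial.aeval (α i) g = y := by
    intro i y
    have h1 := (Field.primitive_element_iff_minpoly_natDegree_eq ℚ (α i)).2 (hmin i)
    have h2 : y ∈ IntermediateField.adjoin ℚ {α i} := h1 ▸ IntermediateField.mem_top
    have h3 : y ∈ (IntermediateField.adjoin ℚ {α i}).toSubalgebra := h2
    rw [IntermediateField.adjoin_simple_toSubalgebra_of_isAlgebraic (hinteg i).isAlgebraic,
      Algebra.adjoin_singleton_eq_range_aeval] at h3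
    exact h3
  choose g hg using fun i j => hprim i (a i j / lin l2 (a i))
  have hcrt : ∀ j, ∃ r : Polynomial ℚ, ∀ i, Polynomial.aeval (α i) r = a i j / lin l2 (a i) := by
    intro j
    have hI : Pairwise (Function.onFun IsCoprime fun i => Ideal.span {p i}) := by
      intro i k hik
      exact (Ideal.isCoprime_span_singleton_iff _ _).2 (hpcop hik)
    obtain ⟨r, hr⟩ := Ideal.exists_forall_sub_mem_ideal hI fun i => g i j
    refine ⟨r, fun i => ?_⟩
    obtain ⟨q, hq⟩ := Ideal.mem_span_singleton.1 (hr i)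
    have h1 := congrArg (Polynomial.aeval (α i)) hq
    rw [map_sub, map_mul, minpoly.aeval, zero_mul, sub_eq_zero, hg] at h1
    exact h1
  choose psi0 hpsi0 using hcrt
  set psi : Fin m → Polynomial ℚ := fun j => psi0 j +
    ((Polynomial.X - lin l1 psi0) * Polynomial.C (b1 j) +
      (1 - lin l2 psi0) * Polynomial.C (b2 j)) with hpsi
  have hlin : ∀ l, lin l psi = lin l psi0 +
      ((Polynomial.X - lin l1 psi0) * Polynomial.C (lin l b1) +
        (1 - lin l2 psi0) * Polynomial.C (lin l b2)) := by
    intro l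
    have hC : ∀ b : Fin m → ℚ, lin l (fun j => Polynomial.C (b j)) = Polynomial.C (lin l b) :=
      fun b => lin_algebraMap l b
    rw [hpsi, lin_add, lin_add, lin_mul_left, lin_mul_left, hC, hC]
  have l1psi : lin l1 psi = Polynomial.X := by
    rw [hlin, l1b1, l1b2]
    simp
  have l2psi : lin l2 psi = 1 := by
    rw [hlin, l2b1, l2b2]
    simp
  have hpsiα : ∀ i j, Polynomial.aeval (α i) (psi j) = (lin l2 (a i))⁻¹ * a i j := by
    intro i j
    have h0 : ∀ l, Polynomial.aeval (α i) (lin l psi0) = lin l (a i) / lin l2 (a i) := by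
      intro l
      rw [← lin_algHom]
      simp only [hpsi0, div_eq_mul_inv]
      rw [lin_mul_right]
    have h1 : Polynomial.aeval (α i) (Polynomial.X - lin l1 psi0) = 0 := by
      rw [map_sub, h0, Polynomial.aeval_X, sub_self]
    have h2 : Polynomial.aeval (α i) (1 - lin l2 psi0) = 0 := by
      rw [map_sub, h0, map_one, div_self (hl2 i), sub_self]
    simp only [hpsi, map_add, map_mul, h1, h2, zero_mul, add_zero, hpsi0]
    rw [div_eq_inv_mul]
  have haev : ∀ i (h : MvPolynomial (Fin m) ℚ), Polynomial.aeval (α i) (aeval psi h) =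
      aeval (fun j => (lin l2 (a i))⁻¹ * a i j) h := by
    intro i h
    have := comp_aeval_apply psi (Polynomial.aeval (α i) : Polynomial ℚ →ₐ[ℚ] K i) h
    simp only [hpsiα] at this
    exact this
  set M : Polynomial ℚ := ∏ i, p i with hMdef
  have hM : M.Monic := Polynomial.monic_prod_of_monic _ _ fun i _ => hpm i
  have hMdeg : M.natDegree = ∑ i, n i := by
    rw [hMdef, Polynomial.natDegree_prod_of_monic _ _ fun i _ => hpm i]
    exact Finset.sum_congr rfl fun i _ => hpdeg i
  have hdvd : M ∣ aeval psi f := by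
    refine Finset.prod_dvd_of_coprime (fun i _ j _ hij => hpcop hij) fun i _ => ?_
    apply minpoly.dvd
    rw [haev, aeval_homogeneous_mul hhom, haf, mul_zero]
  have hcop : IsCoprime M (∑ j, aeval psi (pderiv j f) * Polynomial.C (v j)) := by
    refine IsCoprime.prod_left fun i _ => ?_
    rw [(hpirr i).coprime_iff_not_dvd]
    rintro ⟨q, hq⟩
    have h1 := congrArg (Polynomial.aeval (α i)) hq
    rw [map_mul, minpoly.aeval, zero_mul, map_sum] at h1
    simp only [map_mul, haev, aeval_homogeneous_mul hhom.pderiv, Polynomial.aeval_C, mul_assoc] at h1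
    rw [← Finset.mul_sum, mul_eq_zero] at h1
    exact h1.elim (pow_ne_zero _ (inv_ne_zero (hl2 i))) (htr i)
  set B := ∑ j, (psi j).natDegree with hB
  refine ⟨M.natDegree + (M.natDegree + B + 2), fun e he => ?_⟩
  have hde : e ≤ d * e := Nat.le_mul_of_pos_left e hd
  have hbig : M.natDegree + M.natDegree < d * (e - M.natDegree + M.natDegree) := by
    rw [Nat.sub_add_cancel (by omega)]
    omega
  let D : Datum d f :=
    { v := v, l1 := l1, l2 := l2, b1 := b1, b2 := b2, M := M, psi := psi, a := e - M.natDegree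
      hirr := hirr, hhom := hhom, hv := hv, l1v := l1v, l2v := l2v, l1b1 := l1b1, l1b2 := l1b2
      l2b1 := l2b1, l2b2 := l2b2, hM := hM, l1psi := l1psi, l2psi := l2psi, hdvd := hdvd
      hcop := hcop
      ha := by omega
      hpsi := fun l => by
        have : (psi l).natDegree ≤ B :=
          Finset.single_le_sum (f := fun j => (psi j).natDegree) (fun _ _ => Nat.zero_le _)
            (Finset.mem_univ l)
        omega
      hbig := hbig }
  have hDdeg : D.deg = d * e - ∑ i, n i := by
    change d * (e - M.natDegree + M.natDegree) - M.natDegree = _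
    rw [Nat.sub_add_cancel (by omega), hMdeg]
  refine ⟨by omega, hDdeg ▸ D.deg_mem_DinfSet⟩

/-! ### The group of residues -/

lemma DinfSet_subset {m : ℕ} (f : MvPolynomial (Fin m) ℚ) : DinfSet f ⊆ DSet f := by
  rintro n ⟨h0, hinf⟩
  obtain ⟨K, hK⟩ := hinf.nonempty
  exact ⟨h0, K, hK⟩

/-- The integers `z` such that all large natural numbers congruent to `z` modulo `d` belong to
`S`. -/
def eventually (d : ℕ) (S : Set ℕ) : Set ℤ :=
  {z | ∃ N : ℕ, ∀ n : ℕ, N ≤ n → (d : ℤ) ∣ n - z → n ∈ S}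

lemma eventually_congr {d : ℕ} {S : Set ℕ} {z w : ℤ} (hz : z ∈ eventually d S)
    (h : (d : ℤ) ∣ z - w) : w ∈ eventually d S := by
  obtain ⟨N, hN⟩ := hz
  refine ⟨N, fun n hn hdvd => hN n hn ?_⟩
  have := dvd_sub hdvd h
  rwa [show (n : ℤ) - w - (z - w) = n - z by ring] at this

lemma exists_mem_of_eventually {d : ℕ} (hd : 1 ≤ d) {S : Set ℕ} {z : ℤ}
    (hz : z ∈ eventually d S) (B : ℕ) : ∃ n : ℕ, B ≤ n ∧ n ∈ S ∧ (d : ℤ) ∣ n - z := by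
  obtain ⟨N, hN⟩ := hz
  have h1 : (z.natAbs + N + B : ℤ) ≤ d * (z.natAbs + N + B : ℤ) :=
    le_mul_of_one_le_left (by positivity) (by exact_mod_cast hd)
  obtain ⟨n, hn⟩ : ∃ n : ℕ, (n : ℤ) = z + d * (z.natAbs + N + B : ℤ) :=
    ⟨(z + d * (z.natAbs + N + B : ℤ)).toNat, Int.toNat_of_nonneg (by omega)⟩
  have h2 : (d : ℤ) ∣ n - z := ⟨z.natAbs + N + B, by rw [hn]; ring⟩
  exact ⟨n, by omega, hN n (by omega) h2, h2⟩

/-- The residue class of `-(n₁ + … + nₖ)` consists of degrees of infinitely many fields, up to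
finitely many exceptions, if the `nᵢ` are distinct degrees of new points. -/
lemma neg_sum_mem_eventually {m d : ℕ} (hm : 3 ≤ m) (hd : 1 ≤ d) {f : MvPolynomial (Fin m) ℚ}
    (hirr : Irreducible f) (hhom : f.IsHomogeneous d) {ι : Type} [Fintype ι] (n : ι → ℕ)
    (hn : Function.Injective n) (hD : ∀ i, n i ∈ DSet f) :
    -((∑ i, n i : ℕ) : ℤ) ∈ eventually d (DinfSet f) := by
  obtain ⟨N, hN⟩ := sub_sum_mem_DinfSet hm hd f hirr hhom n hn hD
  refine ⟨d * N, fun k hk hdvd => ?_⟩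
  rw [sub_neg_eq_add] at hdvd
  obtain ⟨e, he⟩ : d ∣ k + ∑ i, n i := by exact_mod_cast hdvd
  have hNe : N ≤ e := by
    refine Nat.le_of_mul_le_mul_left (c := d) ?_ hd
    omega
  have h := (hN e hNe).2
  rwa [← he, Nat.add_sub_cancel] at h

lemma neg_mem_eventually {m d : ℕ} (hm : 3 ≤ m) (hd : 1 ≤ d) {f : MvPolynomial (Fin m) ℚ}
    (hirr : Irreducible f) (hhom : f.IsHomogeneous d) {n : ℕ} (hn : n ∈ DSet f) :
    -(n : ℤ) ∈ eventually d (DinfSet f) := by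
  simpa using neg_sum_mem_eventually hm hd hirr hhom (fun _ : Unit => n) (fun _ _ _ => rfl)
    fun _ => hn

/-- The integers whose residue class modulo `d` consists, up to finitely many exceptions, of degrees
of infinitely many fields form a group. -/
def residueGroup {m d : ℕ} (hm : 3 ≤ m) (hd : 1 ≤ d) (f : MvPolynomial (Fin m) ℚ)
    (hirr : Irreducible f) (hhom : f.IsHomogeneous d) : AddSubgroup ℤ :=
  have hneg : ∀ {z : ℤ}, z ∈ eventually d (DinfSet f) → -z ∈ eventually d (DinfSet f) := by
    intro z hz
    obtain ⟨n, -, hn, c, hc⟩ := exists_mem_of_eventually hd hz 0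
    exact eventually_congr (neg_mem_eventually hm hd hirr hhom (DinfSet_subset f hn))
      ⟨-c, by linarith⟩
  { carrier := eventually d (DinfSet f)
    zero_mem' := by
      have := neg_sum_mem_eventually hm hd hirr hhom (fun _ : Empty => 0) (fun x => x.elim)
        fun x => x.elim
      simpa using this
    neg_mem' := hneg
    add_mem' := by
      intro z w hz hw
      obtain ⟨n, -, hn, b, hb⟩ := exists_mem_of_eventually hd hz 0
      -- a larger representative of the second class keeps the two degrees distinct
      obtain ⟨k, hkn, hk, c, hc⟩ := exists_mem_of_eventually hd hw (n + 1)
      have := hneg (neg_sum_mem_eventually hm hd hirr hhom (fun b : Bool => if b then n else k) (by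
        rintro (_ | _) (_ | _) h <;> simp at h ⊢ <;> omega) (by
        rintro (_ | _)
        · simpa using DinfSet_subset f hk
        · simpa using DinfSet_subset f hn))
      rw [neg_neg] at this
      simp only [Fintype.sum_bool, if_true, Bool.false_eq_true, if_false, Nat.cast_add] at this
      exact eventually_congr this ⟨b + c, by linarith⟩ }

lemma mem_residueGroup {m d : ℕ} (hm : 3 ≤ m) (hd : 1 ≤ d) (f : MvPolynomial (Fin m) ℚ)
    (hirr : Irreducible f) (hhom : f.IsHomogeneous d) {n : ℕ} (hn : n ∈ DSet f) :
    (n : ℤ) ∈ residueGroup hm hd f hirr hhom := by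
  rw [← neg_mem_iff]
  exact neg_mem_eventually hm hd hirr hhom hn

/-- **Theorem 1.** There is a finite exceptional set `E` such that
`D(C)^inf = G(C)·ℤ_{≥1} \ E`. -/
theorem stmt0 {m d : ℕ} (hm : 3 ≤ m) (hd : 1 ≤ d)
    (f : MvPolynomial (Fin m) ℚ) (hirr : Irreducible f) (hhom : f.IsHomogeneous d)
    (G : ℕ) (hG : IsGcdOf G (DSet f)) :
    ∃ E : Finset ℕ, ∀ n : ℕ, 0 < n → (n ∈ DinfSet f ↔ (G ∣ n ∧ n ∉ E)) := by
  classical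
  set R := residueGroup hm hd f hirr hhom with hR
  have hGR : ∀ n : ℕ, G ∣ n → (n : ℤ) ∈ R := by
    intro n hn
    obtain ⟨k, hk⟩ := Int.subgroup_cyclic R
    rw [← AddSubgroup.zmultiples_eq_closure] at hk
    have h1 : k.natAbs ∣ G := hG.2 _ fun j hj => by
      have := mem_residueGroup hm hd f hirr hhom hj
      rw [← hR, hk, Int.mem_zmultiples_iff] at this
      exact Int.natAbs_dvd_natAbs.2 this
    rw [hk, Int.mem_zmultiples_iff, ← Int.natAbs_dvd]
    exact_mod_cast h1.trans hn
  have hR' : ∀ z ∈ R, ∃ N : ℕ, ∀ n : ℕ, N ≤ n → (d : ℤ) ∣ n - z → n ∈ DinfSet f := fun z hz => hz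
  choose! Nf hNf using hR'
  set N := ∑ r ∈ Finset.range d, Nf r with hN
  refine ⟨(Finset.range N).filter (· ∉ DinfSet f), fun n hn => ⟨fun h => ⟨?_, ?_⟩, ?_⟩⟩
  · exact hG.1 n (DinfSet_subset f h)
  · simp [h]
  · rintro ⟨hGn, hnE⟩
    by_contra hnD
    have hNn : N ≤ n := by
      by_contra! hlt
      exact hnE (Finset.mem_filter.2 ⟨Finset.mem_range.2 hlt, hnD⟩)
    have hdvd : (d : ℤ) ∣ n - (n % d : ℕ) := by
      refine ⟨(n / d : ℕ), ?_⟩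
      push_cast
      have : (n : ℤ) % d + d * (n / d) = n := Int.emod_add_mul_ediv _ _
      linarith
    have hr : ((n % d : ℕ) : ℤ) ∈ R := eventually_congr (hGR n hGn) hdvd
    refine hnD (hNf _ hr n (le_trans ?_ hNn) hdvd)
    exact Finset.single_le_sum (f := fun r : ℕ => Nf (r : ℤ)) (fun _ _ => Nat.zero_le _)
      (Finset.mem_range.2 (Nat.mod_lt n hd))
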